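/- arXiv:1803.07992 — 12 statements merged into one kernel-verified Lean document; each statement's English description precedes it below -/
import Mathlib

section
/- Fix an integer g ≥ 1. Then the set of g-good quadruples (w₀, w₁, w₂, d) ∈ ℤ⁴₍>0₎ is infinite. -/
/-- A quadruple `(w0, w1, w2, d)` of positive integers is *good* if the weights are
pairwise coprime, each weight is less than `d`, and the congruence conditions of
Fletcher's smoothness criterion hold. -/
def IsGoodQuadruple (w0 w1 w2 d : ℕ) : Prop :=
  0 < w0 ∧ 0 < w1 ∧ 0 < w2 ∧ 0 < d ∧
  Nat.Coprime w0 w1 ∧ Nat.Coprime w0 w2 ∧ Nat.Coprime w1 w2 ∧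
  w0 < d ∧ w1 < d ∧ w2 < d ∧
  (∃ k : ℕ, 0 < k ∧ (d = k * w0 + w0 ∨ d = k * w0 + w1 ∨ d = k * w0 + w2)) ∧
  (∃ k : ℕ, 0 < k ∧ (d = k * w1 + w0 ∨ d = k * w1 + w1 ∨ d = k * w1 + w2)) ∧
  (∃ k : ℕ, 0 < k ∧ (d = k * w2 + w0 ∨ d = k * w2 + w1 ∨ d = k * w2 + w2)) ∧
  (∃ a b : ℕ, d = a * w1 + b * w2) ∧
  (∃ a b : ℕ, d = a * w0 + b * w2) ∧
  (∃ a b : ℕ, d = a * w0 + b * w1)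

/-- The genus of a quadruple, given by the genus formula for smooth weighted plane curves. -/
def genusOf (w0 w1 w2 d : ℕ) : ℚ :=
  (1 / 2 : ℚ) * ((d * ((d : ℚ) - w0 - w1 - w2)) / (w0 * w1 * w2)
    + (Nat.gcd w0 d : ℚ) / w0 + (Nat.gcd w1 d : ℚ) / w1 + (Nat.gcd w2 d : ℚ) / w2 - 1)

/-- A quadruple is `g`-good if it is good and its genus equals `g`. -/
def IsGGoodQuadruple (g w0 w1 w2 d : ℕ) : Prop :=
  IsGoodQuadruple w0 w1 w2 d ∧ genusOf w0 w1 w2 d = g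

/-- For any fixed `g ≥ 1`, there are infinitely many `g`-good quadruples. -/
theorem infinite_gGoodQuadruples (g : ℕ) (hg : 1 ≤ g) :
    {q : ℕ × ℕ × ℕ × ℕ | IsGGoodQuadruple g q.1 q.2.1 q.2.2.1 q.2.2.2}.Infinite := by
  -- family: w = (2, 1 + 2 g t, t), d = t + 2 w₁, with t = 2 s + 1
  refine Set.infinite_of_injective_forall_mem
    (f := fun s : ℕ => ((2, 1 + 2 * g * (2 * s + 1), 2 * s + 1,
      (2 * s + 1) + 2 * (1 + 2 * g * (2 * s + 1))) : ℕ × ℕ × ℕ × ℕ)) ?_ ?_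
  · intro a b h
    simp only [Prod.mk.injEq] at h
    omega
  intro s
  simp only [Set.mem_setOf_eq]
  have ht2 : Nat.Coprime 2 (2 * s + 1) := by simp
  have hw2 : Nat.Coprime 2 (1 + 2 * g * (2 * s + 1)) := by
    rw [mul_assoc]; simp
  generalize ht : 2 * s + 1 = t at *
  have htp : 0 < t := by omega
  have hwt : Nat.Coprime (1 + 2 * g * t) t := by simp
  have hgt : 0 < g * t := Nat.mul_pos hg htp
  have e1 : 2 * g * t = 2 * (g * t) := by ring
  have g0 : Nat.gcd 2 (t + 2 * (1 + 2 * g * t)) = 1 := by simpa using ht2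
  have g1 : Nat.gcd (1 + 2 * g * t) (t + 2 * (1 + 2 * g * t)) = 1 := by
    rw [Nat.gcd_add_mul_right_right]; exact hwt
  have g2 : Nat.gcd t (t + 2 * (1 + 2 * g * t)) = 1 := by
    have : t + 2 * (1 + 2 * g * t) = 2 + (1 + 4 * g) * t := by ring
    rw [this, Nat.gcd_add_mul_right_right]; exact ht2.symm
  refine ⟨⟨by norm_num, by omega, htp, by omega, hw2, ht2, hwt, by omega, by omega, by omega,
    ⟨1 + 2 * g * t, by omega, Or.inr (Or.inr (by ring))⟩,
    ⟨2, by norm_num, Or.inr (Or.inr (by ring))⟩,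
    ⟨1 + 4 * g, by omega, Or.inl (by ring)⟩,
    ⟨2, 1, by ring⟩, ⟨1 + 2 * g * t, 1, by ring⟩, ⟨s + 1 + g * t, 1, by rw [e1]; omega⟩⟩, ?_⟩
  unfold genusOf
  rw [g0, g1, g2]
  have q1 : (t : ℚ) ≠ 0 := by positivity
  have q2 : (1 + 2 * g * t : ℚ) ≠ 0 := by positivity
  push_cast
  field_simp
  ring
end

section
/- Fix an integer g ≥ 1 and let d be a positive integer with (2g+2) ∣ (d+1). Then the quadruple (1, (d−1)/2, (d+1)/(2g+2), d) is a g-good quadruple; in particular the three weights 1, (d−1)/2, (d+1)/(2g+2) are pairwise coprime, each is strictly less than d, conditions (i) and (ii) in the definition of a good quadruple hold, and the genus of this quadruple equals g. -/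
/-- If `g ≥ 1` and `d` is a positive integer with `(2g+2) ∣ (d+1)`, then
`(1, (d-1)/2, (d+1)/(2g+2), d)` is a `g`-good quadruple. -/
theorem gGood_of_dvd (g d : ℕ) (hg : 1 ≤ g) (hd : 0 < d) (hdvd : (2 * g + 2) ∣ (d + 1)) :
    IsGGoodQuadruple g 1 ((d - 1) / 2) ((d + 1) / (2 * g + 2)) d := by
  obtain ⟨m, hm⟩ := hdvd
  have hm0 : 0 < m := by
    rcases Nat.eq_zero_or_pos m with h | h
    · subst h; omega
    · exact h
  have h2 : (d + 1) / (2 * g + 2) = m := by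
    rw [hm]; exact Nat.mul_div_cancel_left m (by omega)
  obtain ⟨n, hn⟩ : ∃ n, n + 1 = (g + 1) * m :=
    ⟨(g + 1) * m - 1, Nat.sub_add_cancel (Nat.mul_pos (by omega) hm0)⟩
  have hd2 : d = 2 * n + 1 := by
    have : d + 1 = 2 * (n + 1) := by rw [hn, hm]; ring
    omega
  have h1 : (d - 1) / 2 = n := by omega
  have hmn : 2 * m ≤ n + 1 := by rw [hn]; exact Nat.mul_le_mul_right m (by omega)
  have hn0 : 0 < n := by omega
  have c1 : Nat.Coprime n m := by
    have h : Nat.gcd n m ∣ n + 1 := by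
      rw [hn]; exact Dvd.dvd.mul_left (Nat.gcd_dvd_right n m) _
    exact Nat.dvd_one.mp ((Nat.dvd_add_right (Nat.gcd_dvd_left n m)).mp h)
  have c2 : Nat.gcd n d = 1 := by
    rw [hd2]; simp
  have c3 : Nat.gcd m d = 1 := by
    have h : Nat.gcd m d ∣ d + 1 := by
      rw [hm]; exact Dvd.dvd.mul_left (Nat.gcd_dvd_left m d) _
    exact Nat.dvd_one.mp ((Nat.dvd_add_right (Nat.gcd_dvd_right m d)).mp h)
  rw [h1, h2]
  refine ⟨⟨one_pos, hn0, hm0, hd, by simp, by simp, c1, by omega, by omega, by omega,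
    ⟨d - 1, by omega, Or.inl (by omega)⟩, ⟨2, by omega, Or.inl hd2⟩,
    ⟨g + 1, by omega, Or.inr (Or.inl (by omega))⟩,
    ⟨1, g + 1, by omega⟩, ⟨d, 0, by simp⟩, ⟨d, 0, by simp⟩⟩, ?_⟩
  have hnq : (n : ℚ) ≠ 0 := by positivity
  have hmq : (m : ℚ) ≠ 0 := by positivity
  have hq : (n : ℚ) + 1 = (g + 1) * m := by exact_mod_cast hn
  have hdq : (d : ℚ) = 2 * n + 1 := by exact_mod_cast hd2
  unfold genusOf
  rw [c2, c3, hdq]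
  simp only [Nat.gcd_one_left, Nat.cast_one]
  field_simp
  linear_combination (2 * (n : ℚ)) * hq
end

section
/- Let (w₀, w₁, w₂, d) be a good quadruple. Then for every i ∈ {0,1,2}, either wᵢ divides d or gcd(wᵢ, d) = 1. -/
/-- For a good quadruple `(w0, w1, w2, d)`, each weight either divides `d` or is coprime to `d`. -/
theorem dvd_or_coprime_of_good (w0 w1 w2 d : ℕ) (h : IsGoodQuadruple w0 w1 w2 d) :
    (w0 ∣ d ∨ Nat.Coprime w0 d) ∧ (w1 ∣ d ∨ Nat.Coprime w1 d) ∧ (w2 ∣ d ∨ Nat.Coprime w2 d) := by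
  obtain ⟨-, -, -, -, h01, h02, h12, -, -, -, ⟨k0, -, e0⟩, ⟨k1, -, e1⟩, ⟨k2, -, e2⟩, -⟩ := h
  have self : ∀ k w : ℕ, d = k * w + w → (w ∣ d ∨ Nat.Coprime w d) := by
    intro k w e
    exact Or.inl ⟨k + 1, by rw [e]; ring⟩
  have other : ∀ k w v : ℕ, Nat.Coprime w v → d = k * w + v → (w ∣ d ∨ Nat.Coprime w d) := by
    intro k w v c e
    right
    rw [e]
    simpa using c
  refine ⟨?_, ?_, ?_⟩
  · rcases e0 with e | e | e
    exacts [self _ _ e, other _ _ _ h01 e, other _ _ _ h02 e]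
  · rcases e1 with e | e | e
    exacts [other _ _ _ h01.symm e, self _ _ e, other _ _ _ h12 e]
  · rcases e2 with e | e | e
    exacts [other _ _ _ h02.symm e, other _ _ _ h12.symm e, self _ _ e]
end

section
/- Let g ≥ 1 be an integer and let (w₀, w₁, w₂, d) be a g-good quadruple, with associated polytope P. Then the number of points of ℤ³ lying in the intrinsic (relative) interior of P equals g. -/
/-- The coercion of an integer lattice point of `ℤ³` to `ℝ³`. -/
def toR3 (v : Fin 3 → ℤ) : Fin 3 → ℝ := fun i => (v i : ℝ)

/-- The lattice points in the first octant lying on the plane `x*w0 + y*w1 + z*w2 = d`. -/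
def latticePts (w0 w1 w2 d : ℕ) : Set (Fin 3 → ℤ) :=
  {v | (∀ i, 0 ≤ v i) ∧ v 0 * (w0 : ℤ) + v 1 * (w1 : ℤ) + v 2 * (w2 : ℤ) = (d : ℤ)}

/-- The polytope associated to a quadruple: the convex hull in `ℝ³` of the lattice points
in the first octant on the plane `x*w0 + y*w1 + z*w2 = d`. -/
def polytopeOf (w0 w1 w2 d : ℕ) : Set (Fin 3 → ℝ) :=
  convexHull ℝ (toR3 '' latticePts w0 w1 w2 d)


lemma dvd_cast {n a b : ℤ} (h : n ∣ a) (e : b = a) : n ∣ b := e ▸ h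

/-- representative of `v * m` modulo `n` in `[1, n]` -/
def repR (n v m : ℤ) : ℤ := (v * m - 1) % n + 1

lemma repR_pos {n : ℤ} (hn : 0 < n) (v m : ℤ) : 1 ≤ repR n v m := by
  have := Int.emod_nonneg (v * m - 1) hn.ne'
  unfold repR; omega

lemma repR_le {n : ℤ} (hn : 0 < n) (v m : ℤ) : repR n v m ≤ n := by
  have := Int.emod_lt_of_pos (v * m - 1) hn
  unfold repR; omega

lemma repR_dvd (n v m : ℤ) : n ∣ repR n v m - v * m := by
  have h := Int.emod_add_mul_ediv (v * m - 1) n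
  refine ⟨-((v * m - 1) / n), ?_⟩
  unfold repR
  linarith

lemma eq_of_range {n a b : ℤ} (ha : 1 ≤ a) (ha' : a ≤ n) (hb : 1 ≤ b) (hb' : b ≤ n)
    (h : n ∣ a - b) : a = b := by
  have := Int.eq_zero_of_abs_lt_dvd h (by rw [abs_lt]; constructor <;> omega)
  omega

lemma repR_unique {n : ℤ} (hn : 0 < n) {v m a : ℤ} (ha : 1 ≤ a) (ha' : a ≤ n)
    (h : n ∣ a - v * m) : repR n v m = a := by
  refine eq_of_range (repR_pos hn v m) (repR_le hn v m) ha ha' ?_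
  have := dvd_sub (repR_dvd n v m) h
  exact dvd_cast this (by ring)

lemma repR_congr {n : ℤ} (hn : 0 < n) {v m m' : ℤ} (h : n ∣ m - m') :
    repR n v m = repR n v m' := by
  refine repR_unique hn (repR_pos hn v m') (repR_le hn v m') ?_
  have h1 := dvd_sub (repR_dvd n v m') (h.mul_left v)
  exact dvd_cast h1 (by ring)

lemma repR_add {n : ℤ} (hn : 0 < n) {v m m' : ℤ} (h : n ∣ v * (m + m') - 1) :
    repR n v m + repR n v m' = n + 1 := by
  have h1 := repR_pos hn v m'
  have h2 := repR_le hn v m'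
  have : repR n v m = n + 1 - repR n v m' := by
    refine repR_unique hn (by omega) (by omega) ?_
    have h3 := dvd_sub (dvd_sub (dvd_refl n) (repR_dvd n v m')) h
    exact dvd_cast h3 (by ring)
  omega

lemma sum_shift (f : ℕ → ℤ) (K : ℕ) (hf : ∀ a, f (a + K) = f a) (s : ℕ) :
    ∑ a ∈ Finset.range K, f (a + s) = ∑ a ∈ Finset.range K, f a := by
  induction s with
  | zero => simp
  | succ s ih =>
    rw [← ih]
    have h1 := Finset.sum_range_succ (fun a => f (a + s)) K
    have h2 := Finset.sum_range_succ' (fun a => f (a + s)) K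
    have h3 : f (K + s) = f (0 + s) := by rw [add_comm K s, hf]; simp
    have h4 : ∀ a, f (a + (s + 1)) = f (a + 1 + s) := fun a => by congr 1; ring
    simp only [h4]
    linarith

lemma sum_pair (f : ℕ → ℤ) (K : ℕ) (n : ℤ) (s : ℕ)
    (hs : ∑ a ∈ Finset.range K, f (a + s) = ∑ a ∈ Finset.range K, f a)
    (h : ∀ a < K, f a + f (K - 1 - a + s) = n + 1) :
    2 * ∑ a ∈ Finset.range K, f a = K * (n + 1) := by
  have h1 := Finset.sum_range_reflect (fun a => f (a + s)) K
  have h2 : ∑ a ∈ Finset.range K, (f a + f (K - 1 - a + s)) = K * (n + 1) := by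
    rw [Finset.sum_congr rfl (fun a ha => h a (Finset.mem_range.1 ha))]
    simp
  rw [Finset.sum_add_distrib] at h2
  linarith

/-- symmetric sums -/
lemma sum_symm {n u v x d : ℤ} (hn : 0 < n) (huv : n ∣ v * u - 1) (K : ℕ)
    (h : n ∣ 2 * d - (K + 1) * x - u) :
    2 * ∑ i ∈ Finset.range K, repR n v (d - (i + 1) * x) = K * (n + 1) := by
  refine sum_pair _ K n 0 (by simp) ?_
  intro a ha
  refine repR_add hn ?_
  have : ((K - 1 - a + 0 : ℕ) : ℤ) = K - 1 - a := by omega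
  rw [this]
  have h1 := dvd_add (h.mul_left v) huv
  exact dvd_cast h1 (by ring)

/-- complete sums -/
lemma sum_complete {n u v x d : ℤ} (hn : 0 < n) (huv : n ∣ v * u - 1) (hx : IsCoprime n x) (K : ℕ)
    (h : n ∣ K) :
    2 * ∑ i ∈ Finset.range K, repR n v (d - (i + 1) * x) = K * (n + 1) := by
  obtain ⟨r, t, hrt⟩ := hx
  -- need `2 d - (K+1+s) x ≡ u`
  set s0 : ℤ := (t * (2 * d - u) - (K + 1)) with hs0
  have hs1 : 0 ≤ s0 % n := Int.emod_nonneg _ hn.ne'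
  obtain ⟨s, hs⟩ := Int.eq_ofNat_of_zero_le hs1
  have hsd : n ∣ s0 - s := by rw [← hs]; exact Int.dvd_self_sub_emod
  refine sum_pair (fun i : ℕ => repR n v (d - (i + 1) * x)) K n s ?_ ?_
  · refine sum_shift (fun i : ℕ => repR n v (d - (i + 1) * x)) K ?_ s
    intro a
    refine repR_congr hn ?_
    have := h.mul_right (-x)
    exact dvd_cast this (by push_cast; ring)
  · intro a ha
    refine repR_add hn ?_
    have h0 : ((K - 1 - a + s : ℕ) : ℤ) = K - 1 - a + s := by omega
    rw [h0]
    have h1 : n ∣ (2 * d - u) - (K + 1 + s) * x := by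
      have e1 := hsd.mul_right x
      have e2 : n ∣ (2 * d - u) * (r * n) := ⟨(2 * d - u) * r, by ring⟩
      have e3 := dvd_add e1 e2
      refine dvd_cast e3 ?_
      rw [hs0]
      linear_combination (-1 : ℤ) * (2 * d - u) * hrt
    have h2 := dvd_add (h1.mul_left v) huv
    exact dvd_cast h2 (by ring)

lemma fiber_formula {y z p q m : ℤ} (hy : 0 < y) (hz : 0 < z) (hyz : IsCoprime y z)
    (hp : z ∣ p * y - 1) (hq : y ∣ q * z - 1) (hm : 1 ≤ m) :
    ∃ Q : ℕ, m - repR z p m * y - repR y q m * z = ((Q : ℤ) - 1) * (y * z) := by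
  have h1 : z ∣ m - repR z p m * y - repR y q m * z := by
    have e1 := (repR_dvd z p m).mul_right y
    have e2 := hp.mul_left m
    have e3 := dvd_sub (dvd_neg.2 (dvd_add e1 e2)) (Dvd.intro_left (repR y q m) rfl)
    exact dvd_cast e3 (by ring)
  have h2 : y ∣ m - repR z p m * y - repR y q m * z := by
    have e1 := (repR_dvd y q m).mul_right z
    have e2 := hq.mul_left m
    have e3 := dvd_sub (dvd_neg.2 (dvd_add e1 e2)) (Dvd.intro_left (repR z p m) rfl)
    exact dvd_cast e3 (by ring)
  obtain ⟨k, hk⟩ := hyz.mul_dvd h2 h1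
  have hB := repR_le hz p m
  have hC := repR_le hy q m
  have hk1 : -2 < k := by
    by_contra hcon
    have : k ≤ -2 := by omega
    nlinarith [mul_pos hy hz]
  refine ⟨(k + 1).toNat, ?_⟩
  rw [Int.toNat_of_nonneg (by omega), hk]; ring

def posPts (x y z d : ℤ) : Set (Fin 3 → ℤ) :=
  {v | (∀ i, 0 < v i) ∧ v 0 * x + v 1 * y + v 2 * z = d}

lemma card_posPts {x y z p q d : ℤ} (hx : 0 < x) (hy : 0 < y) (hz : 0 < z) (hyz : IsCoprime y z)
    (hp : z ∣ p * y - 1) (hq : y ∣ q * z - 1) (K : ℕ) (hK : K * x < d)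
    (hK' : ∀ v ∈ posPts x y z d, v 0 ≤ K) :
    y * z * ((posPts x y z d).ncard : ℤ) =
      ∑ i ∈ Finset.range K, (d - (i + 1) * x)
      - y * ∑ i ∈ Finset.range K, repR z p (d - (i + 1) * x)
      - z * ∑ i ∈ Finset.range K, repR y q (d - (i + 1) * x) + K * (y * z) := by
  have hex : ∀ i : ℕ, ∃ Q : ℕ, i < K → (d - (i + 1) * x) - repR z p (d - (i + 1) * x) * y
      - repR y q (d - (i + 1) * x) * z = ((Q : ℤ) - 1) * (y * z) := by
    intro i
    by_cases hi : i < K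
    · have : 1 ≤ d - (i + 1) * x := by
        have : ((i : ℤ) + 1) ≤ K := by omega
        nlinarith
      obtain ⟨Q, hQ⟩ := fiber_formula hy hz hyz hp hq this
      exact ⟨Q, fun _ => hQ⟩
    · exact ⟨0, fun h => absurd h hi⟩
  choose Q hQ using hex
  set F : (Σ _ : ℕ, ℕ) → (Fin 3 → ℤ) := fun s =>
    ![(s.1 : ℤ) + 1, repR z p (d - (s.1 + 1) * x) + s.2 * z,
      repR y q (d - (s.1 + 1) * x) + ((Q s.1 : ℤ) - 1 - s.2) * y] with hF
  have himg : posPts x y z d = F '' ((Finset.range K).sigma fun i => Finset.range (Q i) : Finset _) := by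
    ext v
    constructor
    · intro hv
      have h0 := hK' v hv
      obtain ⟨hv1, hv2⟩ := hv
      have hv0 := hv1 0
      have hv11 := hv1 1
      have hv12 := hv1 2
      obtain ⟨i, hi⟩ := Int.eq_ofNat_of_zero_le (show 0 ≤ v 0 - 1 by omega)
      have hi' : v 0 = i + 1 := by linarith
      have hiK : i < K := by omega
      have hq1 := hQ i hiK
      rw [hi'] at hv2
      set m := d - ((i : ℤ) + 1) * x with hm
      have hm2 : v 1 * y + v 2 * z = m := by rw [hm]; linarith
      have hB1 := repR_pos hz p m
      have hB2 := repR_le hz p m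
      have hC1 := repR_pos hy q m
      have hC2 := repR_le hy q m
      -- v 1 ≡ B mod z
      have hd1 : z ∣ v 1 - repR z p m := by
        have e1 := dvd_neg.2 (repR_dvd z p m)
        have e2 := hp.mul_left (v 1)
        have e3 : z ∣ p * v 2 * z := Dvd.intro_left _ rfl
        refine dvd_cast (dvd_sub e1 (dvd_add e2 e3)) ?_
        linear_combination p * hm2
      obtain ⟨j, hj⟩ := hd1
      have hj0 : 0 ≤ j := by
        by_contra hc
        have : j ≤ -1 := by omega
        nlinarith
      have h2 : v 2 = repR y q m + ((Q i : ℤ) - 1 - j) * y := by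
        have : v 1 = repR z p m + z * j := by linarith
        rw [this] at hm2
        have : z * v 2 = z * (repR y q m + ((Q i : ℤ) - 1 - j) * y) := by linarith
        exact mul_left_cancel₀ hz.ne' this
      have hjQ : j < Q i := by
        by_contra hc
        have : (Q i : ℤ) - 1 - j ≤ -1 := by omega
        nlinarith
      obtain ⟨j', hj'⟩ := Int.eq_ofNat_of_zero_le hj0
      refine ⟨⟨i, j'⟩, ?_, ?_⟩
      · simp; omega
      · rw [hF]
        subst hj'
        ext t
        fin_cases t
        · simp [hi']
        · simp [← hm]; linarith
        · simp [← hm]; linarith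
    · rintro ⟨⟨i, j⟩, hij, rfl⟩
      simp at hij
      have hq1 := hQ i hij.1
      set m := d - ((i : ℤ) + 1) * x with hm
      have hB1 := repR_pos hz p m
      have hC1 := repR_pos hy q m
      have hjQ : 0 ≤ (Q i : ℤ) - 1 - j := by omega
      refine ⟨?_, ?_⟩
      · intro t
        fin_cases t
        · simp [hF]
        · simp [hF, ← hm]; positivity
        · simp [hF, ← hm]; positivity
      · simp [hF, ← hm]
        linear_combination -hq1 + hm
  have hinj : Set.InjOn F ((Finset.range K).sigma fun i => Finset.range (Q i) : Finset _) := by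
    rintro ⟨i, j⟩ _ ⟨i', j'⟩ _ h
    have h0 := congrFun h 0
    have h1 := congrFun h 1
    simp [hF] at h0
    subst h0
    simp [hF] at h1
    rcases h1 with h1 | h1
    · subst h1; rfl
    · omega
  rw [himg, hinj.ncard_image, Set.ncard_coe_finset, Finset.card_sigma]
  push_cast
  simp only [Finset.card_range]
  rw [Finset.mul_sum, Finset.mul_sum, Finset.mul_sum, ← Finset.sum_sub_distrib,
    ← Finset.sum_sub_distrib]
  have : (K : ℤ) * (y * z) = ∑ i ∈ Finset.range K, y * z := by simp
  rw [this, ← Finset.sum_add_distrib]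
  refine Finset.sum_congr rfl fun i hi => ?_
  have := hQ i (Finset.mem_range.1 hi)
  linarith

lemma sum_m (x d : ℤ) (K : ℕ) :
    2 * ∑ i ∈ Finset.range K, (d - ((i : ℤ) + 1) * x) = 2 * K * d - K * (K + 1) * x := by
  induction K with
  | zero => simp
  | succ K ih => rw [Finset.sum_range_succ, mul_add, ih]; push_cast; ring

lemma sumA {n u v x d g : ℤ} (hn : 0 < n) (huv : n ∣ v * u - 1) (hx : IsCoprime n x) (K : ℕ)
    (hd : d = (K + 1) * x) (h : n ∣ d ∨ n ∣ d - x ∨ n ∣ d - u) (hg : n ∣ d → g = n)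
    (hg' : ¬ n ∣ d → g = 1) :
    2 * ∑ i ∈ Finset.range K, repR n v (d - (i + 1) * x) = K * (n + 1) + 1 - g := by
  by_cases hnd : n ∣ d
  · rw [hg hnd]
    have hK : n ∣ ((K + 1 : ℕ) : ℤ) := by
      rw [hd] at hnd
      push_cast
      exact hx.dvd_of_dvd_mul_right hnd
    have h1 := sum_complete (d := d) hn huv hx (K + 1) hK
    rw [Finset.sum_range_succ] at h1
    have h2 : repR n v (d - (K + 1) * x) = n :=
      repR_unique hn (by omega) le_rfl (by rw [hd]; simp)
    rw [h2] at h1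
    push_cast at h1
    linarith
  · rw [hg' hnd]
    rcases h with h | h | h
    · exact absurd h hnd
    · have hK : n ∣ (K : ℤ) := by
        refine hx.dvd_of_dvd_mul_right (dvd_cast h ?_)
        rw [hd]; ring
      rw [sum_complete hn huv hx K hK]; ring
    · rw [sum_symm hn huv K (dvd_cast h (by rw [hd]; ring))]; ring

structure Dat (x y z d g0 g1 g2 : ℤ) : Prop where
  px : 0 < x
  py : 0 < y
  pz : 0 < z
  pd : 0 < d
  xy : IsCoprime x y
  xz : IsCoprime x z
  yz : IsCoprime y z
  c0 : x ∣ d ∨ ∃ k : ℕ, 0 < k ∧ (d = k * x + y ∨ d = k * x + z)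
  c1 : y ∣ d ∨ ∃ k : ℕ, 0 < k ∧ (d = k * y + x ∨ d = k * y + z)
  c2 : z ∣ d ∨ ∃ k : ℕ, 0 < k ∧ (d = k * z + x ∨ d = k * z + y)
  g0d : x ∣ d → g0 = x
  g0n : ¬ x ∣ d → g0 = 1
  g1d : y ∣ d → g1 = y
  g1n : ¬ y ∣ d → g1 = 1
  g2d : z ∣ d → g2 = z
  g2n : ¬ z ∣ d → g2 = 1

lemma Dat.swap01 {x y z d g0 g1 g2 : ℤ} (h : Dat x y z d g0 g1 g2) : Dat y x z d g1 g0 g2 where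
  px := h.py
  py := h.px
  pz := h.pz
  pd := h.pd
  xy := h.xy.symm
  xz := h.yz
  yz := h.xz
  c0 := h.c1
  c1 := h.c0
  c2 := h.c2.imp id fun ⟨k, hk, h⟩ => ⟨k, hk, h.symm⟩
  g0d := h.g1d
  g0n := h.g1n
  g1d := h.g0d
  g1n := h.g0n
  g2d := h.g2d
  g2n := h.g2n

lemma Dat.swap12 {x y z d g0 g1 g2 : ℤ} (h : Dat x y z d g0 g1 g2) : Dat x z y d g0 g2 g1 where
  px := h.px
  py := h.pz
  pz := h.py
  pd := h.pd
  xy := h.xz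
  xz := h.xy
  yz := h.yz.symm
  c0 := h.c0.imp id fun ⟨k, hk, h⟩ => ⟨k, hk, h.symm⟩
  c1 := h.c2
  c2 := h.c1
  g0d := h.g0d
  g0n := h.g0n
  g1d := h.g2d
  g1n := h.g2n
  g2d := h.g1d
  g2n := h.g1n

lemma posPts_swap01 (x y z d : ℤ) : (posPts y x z d).ncard = (posPts x y z d).ncard := by
  have : posPts y x z d = (fun v : Fin 3 → ℤ => ![v 1, v 0, v 2]) '' posPts x y z d := by
    ext v
    constructor
    · rintro ⟨h, e⟩
      refine ⟨![v 1, v 0, v 2], ⟨?_, ?_⟩, ?_⟩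
      · intro i; fin_cases i <;> simp [h]
      · simp; linarith
      · ext i; fin_cases i <;> simp
    · rintro ⟨v, ⟨h, e⟩, rfl⟩
      refine ⟨?_, ?_⟩
      · intro i; fin_cases i <;> simp [h]
      · simp; linarith
  rw [this]
  refine Set.ncard_image_of_injective _ fun v v' h => ?_
  have h0 := congrFun h 0
  have h1 := congrFun h 1
  have h2 := congrFun h 2
  simp at h0 h1 h2
  ext i; fin_cases i <;> simp [h0, h1, h2]

lemma posPts_swap12 (x y z d : ℤ) : (posPts x z y d).ncard = (posPts x y z d).ncard := by
  have : posPts x z y d = (fun v : Fin 3 → ℤ => ![v 0, v 2, v 1]) '' posPts x y z d := by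
    ext v
    constructor
    · rintro ⟨h, e⟩
      refine ⟨![v 0, v 2, v 1], ⟨?_, ?_⟩, ?_⟩
      · intro i; fin_cases i <;> simp [h]
      · simp; linarith
      · ext i; fin_cases i <;> simp
    · rintro ⟨v, ⟨h, e⟩, rfl⟩
      refine ⟨?_, ?_⟩
      · intro i; fin_cases i <;> simp [h]
      · simp; linarith
  rw [this]
  refine Set.ncard_image_of_injective _ fun v v' h => ?_
  have h0 := congrFun h 0
  have h1 := congrFun h 1
  have h2 := congrFun h 2
  simp at h0 h1 h2
  ext i; fin_cases i <;> simp [h0, h1, h2]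

def Conc (x y z d g0 g1 g2 : ℤ) : Prop :=
  2 * (x * y * z) * ((posPts x y z d).ncard : ℤ) =
    d * (d - x - y - z) + g0 * (y * z) + g1 * (x * z) + g2 * (x * y) - x * y * z

lemma Conc.swap01 {x y z d g0 g1 g2 : ℤ} (h : Conc y x z d g1 g0 g2) : Conc x y z d g0 g1 g2 := by
  unfold Conc at *
  rw [posPts_swap01] at h
  linarith

lemma Conc.swap12 {x y z d g0 g1 g2 : ℤ} (h : Conc x z y d g0 g2 g1) : Conc x y z d g0 g1 g2 := by
  unfold Conc at *
  rw [posPts_swap12] at h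
  linarith

lemma caseA {x y z d g0 g1 g2 : ℤ} (h : Dat x y z d g0 g1 g2) (hx : x ∣ d) :
    Conc x y z d g0 g1 g2 := by
  obtain ⟨px, py, pz, pd, xy, xz, yz, c0, c1, c2, g0d, g0n, g1d, g1n, g2d, g2n⟩ := h
  obtain ⟨k, hk⟩ := hx
  have hk0 : 0 < k := by
    by_contra hc
    have : k ≤ 0 := by omega
    nlinarith
  obtain ⟨K, hK⟩ := Int.eq_ofNat_of_zero_le (show 0 ≤ k - 1 by omega)
  have hkK : k = K + 1 := by linarith
  have hd : d = (K + 1) * x := by rw [hk, hkK]; ring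
  obtain ⟨p, q, hpq⟩ := id yz
  have hp : z ∣ p * y - 1 := ⟨-q, by linarith⟩
  have hq : y ∣ q * z - 1 := ⟨-p, by linarith⟩
  have hcard := card_posPts (d := d) px py pz yz hp hq K (by rw [hd]; linarith) (by
    rintro v ⟨h1, h2⟩
    by_contra hc
    have h3 : (K : ℤ) + 1 ≤ v 0 := by omega
    have := mul_pos (h1 1) py
    have := mul_pos (h1 2) pz
    nlinarith)
  have hs := sum_m x d K
  have hB := sumA (g := g2) pz hp xz.symm K hd (by
    rcases c2 with c | ⟨k, _, c | c⟩
    · exact Or.inl c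
    · exact Or.inr (Or.inl ⟨k, by rw [c]; ring⟩)
    · exact Or.inr (Or.inr ⟨k, by rw [c]; ring⟩)) g2d g2n
  have hC := sumA (g := g1) py hq xy.symm K hd (by
    rcases c1 with c | ⟨k, _, c | c⟩
    · exact Or.inl c
    · exact Or.inr (Or.inl ⟨k, by rw [c]; ring⟩)
    · exact Or.inr (Or.inr ⟨k, by rw [c]; ring⟩)) g1d g1n
  have hg0 := g0d ⟨k, hk⟩
  unfold Conc
  rw [hg0]
  have e : 2 * (x * y * z) * ((posPts x y z d).ncard : ℤ)
    = x * (2 * K * d - K * (K + 1) * x) - x * y * (K * (z + 1) + 1 - g2)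
      - x * z * (K * (y + 1) + 1 - g1) + 2 * x * K * (y * z) := by
    linear_combination 2 * x * hcard + x * hs - x * y * hB - x * z * hC
  rw [e, hd]
  ring

lemma caseB {x y z d g0 g1 g2 : ℤ} (h : Dat x y z d g0 g1 g2) (hx : ¬ x ∣ d) (hy : ¬ y ∣ d)
    (hz : ¬ z ∣ d) (hk : ∃ k : ℕ, 0 < k ∧ d = k * x + y) :
    Conc x y z d g0 g1 g2 := by
  obtain ⟨px, py, pz, pd, xy, xz, yz, c0, c1, c2, g0d, g0n, g1d, g1n, g2d, g2n⟩ := h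
  obtain ⟨k, hk0, hk⟩ := hk
  obtain ⟨K, rfl⟩ : ∃ K, k = K + 1 := ⟨k - 1, by omega⟩
  have hd : d = (K + 1) * x + y := by rw [hk]; push_cast; ring
  obtain ⟨p, q, hpq⟩ := id yz
  have hp : z ∣ p * y - 1 := ⟨-q, by linarith⟩
  have hq : y ∣ q * z - 1 := ⟨-p, by linarith⟩
  have hcard := card_posPts (d := d) px py pz yz hp hq K (by rw [hd]; linarith) (by
    rintro v ⟨h1, h2⟩
    by_contra hc
    have h3 : (K : ℤ) + 1 ≤ v 0 := by omega
    have h4 : y ≤ v 1 * y := by nlinarith [h1 1]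
    have := mul_pos (h1 2) pz
    nlinarith)
  have hs := sum_m x d K
  have hC : 2 * ∑ i ∈ Finset.range K, repR y q (d - (i + 1) * x) = K * (y + 1) := by
    rcases c1 with c | ⟨k, _, c | c⟩
    · exact absurd c hy
    · refine sum_complete py hq xy.symm K (xy.symm.dvd_of_dvd_mul_right ⟨k - 1, ?_⟩)
      linear_combination c - hd
    · refine sum_symm py hq K ⟨k + 1, ?_⟩
      linear_combination hd + c
  have hB : 2 * ∑ i ∈ Finset.range (K + 1), repR z p (d - (i + 1) * x)
      = ((K + 1 : ℕ) : ℤ) * (z + 1) := by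
    rcases c2 with c | ⟨k, _, c | c⟩
    · exact absurd c hz
    · refine sum_symm pz hp (K + 1) ⟨k, ?_⟩
      push_cast
      linear_combination hd + c
    · refine sum_complete pz hp xz.symm (K + 1) (xz.symm.dvd_of_dvd_mul_right ⟨k, ?_⟩)
      push_cast
      linear_combination c - hd
  rw [Finset.sum_range_succ] at hB
  have h2 : repR z p (d - (K + 1) * x) = 1 :=
    repR_unique pz le_rfl (by omega) (by
      rw [hd]; exact dvd_cast (dvd_neg.2 hp) (by ring))
  rw [h2] at hB
  push_cast at hB
  unfold Conc
  rw [g0n hx, g1n hy, g2n hz]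
  have e : 2 * (x * y * z) * ((posPts x y z d).ncard : ℤ)
    = x * (2 * K * d - K * (K + 1) * x) - x * y * ((K + 1) * (z + 1) - 2)
      - x * z * (K * (y + 1)) + 2 * x * K * (y * z) := by
    linear_combination 2 * x * hcard + x * hs - x * y * hB - x * z * hC
  rw [e, hd]
  ring

lemma conc_of_dat {x y z d g0 g1 g2 : ℤ} (h : Dat x y z d g0 g1 g2) : Conc x y z d g0 g1 g2 := by
  by_cases hx : x ∣ d
  · exact caseA h hx
  by_cases hy : y ∣ d
  · exact (caseA h.swap01 hy).swap01
  by_cases hz : z ∣ d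
  · exact ((caseA h.swap12.swap01 hz).swap01).swap12
  rcases h.c0 with c | ⟨k, hk, c | c⟩
  · exact absurd c hx
  · exact caseB h hx hy hz ⟨k, hk, c⟩
  · exact (caseB h.swap12 hx hz hy ⟨k, hk, c⟩).swap12

lemma exists_support {C : Set (Fin 3 → ℝ)} (hC : Convex ℝ C) {v : Fin 3 → ℝ} (hv : v ∈ C)
    (hvi : v ∉ interior C) :
    ∃ f : (Fin 3 → ℝ) →ₗ[ℝ] ℝ, f ≠ 0 ∧ ∀ y ∈ C, f y ≤ f v := by
  by_cases hne : (interior C).Nonempty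
  · obtain ⟨f, hf⟩ := geometric_hahn_banach_open_point hC.interior isOpen_interior hvi
    refine ⟨f.toLinearMap, ?_, ?_⟩
    · intro h0
      obtain ⟨y, hy⟩ := hne
      have h1 := hf y hy
      have h2 : ∀ w, f w = 0 := fun w => by
        have := LinearMap.congr_fun h0 w
        simpa using this
      rw [h2, h2] at h1
      exact lt_irrefl _ h1
    · intro y hy
      have hy' : y ∈ closure (interior C) := by
        rw [hC.closure_interior_eq_closure_of_nonempty_interior hne]
        exact subset_closure hy
      have hcl : IsClosed {y | f y ≤ f v} := isClosed_le f.continuous continuous_const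
      exact closure_minimal (fun z hz => (hf z hz).le) hcl hy'
  · rw [hC.interior_nonempty_iff_affineSpan_eq_top] at hne
    have hlt : (affineSpan ℝ C).direction < ⊤ := by
      rw [lt_top_iff_ne_top]
      intro h
      apply hne
      exact (AffineSubspace.direction_eq_top_iff_of_nonempty
        ⟨v, subset_affineSpan ℝ C hv⟩).1 h
    obtain ⟨f, hf, hle⟩ := Submodule.exists_le_ker_of_lt_top _ hlt
    refine ⟨f, hf, fun y hy => ?_⟩
    have h1 : y -ᵥ v ∈ (affineSpan ℝ C).direction :=
      AffineSubspace.vsub_mem_direction (subset_affineSpan ℝ C hy) (subset_affineSpan ℝ C hv)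
    have h2 := hle h1
    simp [sub_eq_zero] at h2
    exact h2.le

/-- the linear form given by the weights -/
noncomputable def wform (w0 w1 w2 : ℕ) : (Fin 3 → ℝ) →ₗ[ℝ] ℝ :=
  (w0 : ℝ) • LinearMap.proj 0 + (w1 : ℝ) • LinearMap.proj 1 + (w2 : ℝ) • LinearMap.proj 2

lemma wform_apply (w0 w1 w2 : ℕ) (x : Fin 3 → ℝ) :
    wform w0 w1 w2 x = w0 * x 0 + w1 * x 1 + w2 * x 2 := by
  simp [wform]

lemma polytope_subset (w0 w1 w2 d : ℕ) {x : Fin 3 → ℝ} (hx : x ∈ polytopeOf w0 w1 w2 d) :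
    (∀ i, 0 ≤ x i) ∧ wform w0 w1 w2 x = d := by
  have hconv : Convex ℝ {x : Fin 3 → ℝ | (∀ i, 0 ≤ x i) ∧ wform w0 w1 w2 x = d} := by
    rintro x ⟨hx, hx'⟩ y ⟨hy, hy'⟩ a b ha hb hab
    refine ⟨fun i => ?_, ?_⟩
    · have := hx i
      have := hy i
      simp
      positivity
    · rw [map_add, map_smul, map_smul, hx', hy', ← add_smul, hab, one_smul]
  refine convexHull_min ?_ hconv hx
  rintro _ ⟨v, ⟨h1, h2⟩, rfl⟩
  refine ⟨fun i => ?_, ?_⟩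
  · simpa [toR3] using h1 i
  · rw [wform_apply]
    simp only [toR3]
    have : (v 0 * (w0 : ℤ) + v 1 * (w1 : ℤ) + v 2 * (w2 : ℤ) : ℝ) = (d : ℤ) := by exact_mod_cast h2
    push_cast at this
    linarith

lemma affineSpan_polytope (w0 w1 w2 d : ℕ) {x : Fin 3 → ℝ}
    (hx : x ∈ affineSpan ℝ (polytopeOf w0 w1 w2 d)) : wform w0 w1 w2 x = d := by
  refine affineSpan_induction (p := fun x => wform w0 w1 w2 x = d) hx
    (fun y hy => (polytope_subset _ _ _ _ hy).2) ?_
  intro c u v w hu hv hw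
  simp [hu, hv, hw]

lemma mem_intrinsic_of_functional {w0 w1 w2 d : ℕ} (hd : 0 < d) {v : Fin 3 → ℝ}
    (hv : v ∈ polytopeOf w0 w1 w2 d)
    (H : ∀ f : (Fin 3 → ℝ) →ₗ[ℝ] ℝ, f v = 0 → (∀ p ∈ toR3 '' latticePts w0 w1 w2 d, f p ≤ 0) →
      f = 0) :
    v ∈ intrinsicInterior ℝ (polytopeOf w0 w1 w2 d) := by
  have hd' : (d : ℝ) ≠ 0 := by positivity
  have hwv := (polytope_subset _ _ _ _ hv).2
  set φ := wform w0 w1 w2 with hφ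
  set L : (Fin 3 → ℝ) →ₗ[ℝ] (Fin 3 → ℝ) :=
    LinearMap.id - ((d : ℝ)⁻¹ • φ).smulRight v with hL
  set C : Set (Fin 3 → ℝ) := (fun x => L x + v) ⁻¹' polytopeOf w0 w1 w2 d with hCdef
  have hLx : ∀ x, L x = x - ((d : ℝ)⁻¹ * φ x) • v := fun x => by simp [hL]
  have hfix : ∀ x, φ x = d → L x + v = x := by
    intro x hx
    rw [hLx, hx, inv_mul_cancel₀ hd', one_smul]; simp
  have hLv : L v = 0 := by rw [hLx, hwv, inv_mul_cancel₀ hd', one_smul, sub_self]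
  have hPconv : Convex ℝ (polytopeOf w0 w1 w2 d) := convex_convexHull _ _
  have hC : Convex ℝ C := by
    have := (hPconv.translate_preimage_left v).linear_preimage L
    exact this
  have hPC : polytopeOf w0 w1 w2 d ⊆ C := by
    intro x hx
    change L x + v ∈ polytopeOf w0 w1 w2 d
    rw [hfix x (polytope_subset _ _ _ _ hx).2]
    exact hx
  have hvint : v ∈ interior C := by
    by_contra hcon
    obtain ⟨f, hf0, hf⟩ := exists_support hC (hPC hv) hcon
    have key : ∀ t : ℝ, f (t • v) ≤ f v := by
      intro t
      apply hf
      change L (t • v) + v ∈ polytopeOf w0 w1 w2 d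
      rw [map_smul, hLv, smul_zero, zero_add]
      exact hv
    have hfv : f v = 0 := by
      have h2 := key 2
      have h0 := key 0
      simp at h2 h0
      linarith
    apply hf0
    refine H f hfv ?_
    intro p hp
    rw [← hfv]
    exact hf p (hPC (subset_convexHull _ _ hp))
  rw [mem_intrinsicInterior]
  refine ⟨⟨v, subset_affineSpan ℝ _ hv⟩, ?_, rfl⟩
  rw [mem_interior]
  refine ⟨Subtype.val ⁻¹' interior C, ?_, isOpen_interior.preimage continuous_subtype_val, hvint⟩
  rintro ⟨x, hx⟩ hxC
  have h1 : L x + v ∈ polytopeOf w0 w1 w2 d := interior_subset (s := C) hxC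
  rw [hfix x (affineSpan_polytope _ _ _ _ hx)] at h1
  exact h1

lemma pos_of_mem_intrinsic {w0 w1 w2 d : ℕ} {u v : Fin 3 → ℝ}
    (hu : u ∈ polytopeOf w0 w1 w2 d) (hupos : ∀ i, 0 < u i)
    (hv : v ∈ intrinsicInterior ℝ (polytopeOf w0 w1 w2 d)) (i : Fin 3) : 0 < v i := by
  rw [mem_intrinsicInterior] at hv
  obtain ⟨⟨v', hv'⟩, hint, rfl⟩ := hv
  have hmem0 : v' ∈ polytopeOf w0 w1 w2 d := interior_subset (s := (Subtype.val ⁻¹' polytopeOf w0 w1 w2 d :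
      Set (affineSpan ℝ (polytopeOf w0 w1 w2 d)))) hint
  have hge := (polytope_subset _ _ _ _ hmem0).1 i
  simp only at hge ⊢
  by_contra hcon
  have h0 : v' i = 0 := le_antisymm (not_lt.1 hcon) hge
  have hu' := subset_affineSpan ℝ _ hu
  let γ : ℝ → affineSpan ℝ (polytopeOf w0 w1 w2 d) := fun t =>
    ⟨AffineMap.lineMap v' u t, AffineMap.lineMap_mem t hv' hu'⟩
  have hγ : Continuous γ := by
    apply Continuous.subtype_mk
    exact AffineMap.lineMap_continuous
  have hγ0 : γ 0 = ⟨v', hv'⟩ := by simp [γ]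
  have hnhds : γ ⁻¹' (interior ((↑) ⁻¹' polytopeOf w0 w1 w2 d)) ∈ nhds (0 : ℝ) := by
    apply (isOpen_interior.preimage hγ).mem_nhds
    rw [Set.mem_preimage, hγ0]; exact hint
  obtain ⟨ε, hε, hball⟩ := Metric.mem_nhds_iff.1 hnhds
  have hmem : (-(ε / 2)) ∈ Metric.ball (0 : ℝ) ε := by
    rw [Metric.mem_ball, Real.dist_eq, sub_zero, abs_neg, abs_of_pos (by positivity)]; linarith
  have h1 : AffineMap.lineMap v' u (-(ε / 2)) ∈ polytopeOf w0 w1 w2 d :=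
    interior_subset (s := (Subtype.val ⁻¹' polytopeOf w0 w1 w2 d :
      Set (affineSpan ℝ (polytopeOf w0 w1 w2 d)))) (hball hmem)
  have h2 := (polytope_subset _ _ _ _ h1).1 i
  simp [γ, AffineMap.lineMap_apply, h0] at h2
  have := hupos i
  nlinarith

lemma core1 {x y z d k : ℕ} (hx : 0 < x) (hy : 0 < y) (hz : 0 < z) (hd : 0 < d) {F0 F1 F2 : ℝ}
    {v0 v1 v2 : ℤ}
    (hv0 : 0 < v0) (hv1 : 0 < v1) (hv2 : 0 < v2) (hv : v0 * x + v1 * y + v2 * z = d)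
    (hF : v0 * F0 + v1 * F1 + v2 * F2 = 0)
    (hH : ∀ a b c : ℕ, a * x + b * y + c * z = d → a * F0 + b * F1 + c * F2 ≤ 0)
    (hk : 0 < k) (hdk : d = k * x + y) (he : ∃ a b : ℕ, d = a * x + b * z) : F0 ≤ 0 := by
  by_contra hcon
  have hF0 : 0 < F0 := not_le.1 hcon
  have h1 := hH k 1 0 (by rw [hdk]; ring)
  simp at h1
  have hlt : v0 < k := by
    by_contra hc
    have hc' : (k : ℤ) ≤ v0 := not_lt.1 hc
    have hdz : (d : ℤ) = k * x + y := by exact_mod_cast hdk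
    have e1 : (k : ℤ) * x ≤ v0 * x := mul_le_mul_of_nonneg_right hc' (by positivity)
    have e2 : 1 * (y : ℤ) ≤ v1 * y := mul_le_mul_of_nonneg_right (by omega) (by positivity)
    have e3 : 0 < v2 * (z : ℤ) := by positivity
    linarith
  have hltR : (v0 : ℝ) < k := by exact_mod_cast hlt
  have hv1R : (1 : ℝ) ≤ v1 := by exact_mod_cast hv1
  have hv2R : (0 : ℝ) < v2 := by exact_mod_cast hv2
  have hkR : (0 : ℝ) < k := by exact_mod_cast hk
  have e1 : v1 * (k * F0 + F1) ≤ 0 := mul_nonpos_of_nonneg_of_nonpos (by linarith) h1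
  have e2 : k * F0 ≤ v1 * (k * F0) := by nlinarith [mul_pos hkR hF0]
  have e3 : v0 * F0 < k * F0 := mul_lt_mul_of_pos_right hltR hF0
  have e4 : 0 < v2 * F2 := by nlinarith
  have hF2 : 0 < F2 := (mul_pos_iff_of_pos_left hv2R).1 e4
  obtain ⟨a, b, hab⟩ := he
  have h2 := hH a 0 b (by rw [hab]; ring)
  simp at h2
  have e5 : 0 ≤ (a : ℝ) * F0 := by positivity
  have e6 : 0 ≤ (b : ℝ) * F2 := by positivity
  have e7 : (a : ℝ) * F0 = 0 := by linarith
  have e8 : (b : ℝ) * F2 = 0 := by linarith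
  have a0 : a = 0 := by simpa [hF0.ne'] using e7
  have b0 : b = 0 := by simpa [hF2.ne'] using e8
  subst a0 b0
  simp at hab
  omega

lemma core {x y z d : ℕ} (hx : 0 < x) (hy : 0 < y) (hz : 0 < z) (hd : 0 < d) {F0 F1 F2 : ℝ}
    {v0 v1 v2 : ℤ}
    (hv0 : 0 < v0) (hv1 : 0 < v1) (hv2 : 0 < v2) (hv : v0 * x + v1 * y + v2 * z = d)
    (hF : v0 * F0 + v1 * F1 + v2 * F2 = 0)
    (hH : ∀ a b c : ℕ, a * x + b * y + c * z = d → a * F0 + b * F1 + c * F2 ≤ 0)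
    (hk : ∃ k : ℕ, 0 < k ∧ (d = k * x + x ∨ d = k * x + y ∨ d = k * x + z))
    (he : ∃ a b : ℕ, d = a * x + b * z) (he' : ∃ a b : ℕ, d = a * x + b * y) : F0 ≤ 0 := by
  obtain ⟨k, hk, h | h | h⟩ := hk
  · have h1 := hH (k + 1) 0 0 (by rw [h]; ring)
    push_cast at h1
    by_contra hcon
    have hF0 : 0 < F0 := not_le.1 hcon
    have : (0 : ℝ) < (k + 1) * F0 := by positivity
    linarith
  · exact core1 hx hy hz hd hv0 hv1 hv2 hv hF hH hk h he
  · refine core1 (F1 := F2) (F2 := F1) hx hz hy hd hv0 hv2 hv1 (by linarith) (by linarith) ?_ hk h he'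
    intro a b c habc
    have := hH a c b (by linarith)
    linarith

lemma mem_intrinsic_of_pos {w0 w1 w2 d : ℕ} (h : IsGoodQuadruple w0 w1 w2 d) {v : Fin 3 → ℤ}
    (hv : v ∈ posPts w0 w1 w2 d) : toR3 v ∈ intrinsicInterior ℝ (polytopeOf w0 w1 w2 d) := by
  obtain ⟨p0, p1, p2, pd, -, -, -, -, -, -, c0, c1, c2, e12, e02, e01⟩ := h
  obtain ⟨hv1, hv2⟩ := hv
  have hmem : toR3 v ∈ polytopeOf w0 w1 w2 d :=
    subset_convexHull _ _ ⟨v, ⟨fun i => (hv1 i).le, hv2⟩, rfl⟩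
  refine mem_intrinsic_of_functional pd hmem ?_
  intro f hfv hfp
  set F0 := f (Pi.single 0 1)
  set F1 := f (Pi.single 1 1)
  set F2 := f (Pi.single 2 1)
  have hfx : ∀ x : Fin 3 → ℝ, f x = x 0 * F0 + x 1 * F1 + x 2 * F2 := by
    intro x
    have : x = x 0 • Pi.single 0 1 + x 1 • Pi.single 1 1 + x 2 • Pi.single 2 (1 : ℝ) := by
      ext i; fin_cases i <;> simp
    conv_lhs => rw [this]
    simp only [map_add, map_smul, smul_eq_mul]
    rfl
  have hF : (v 0 : ℝ) * F0 + v 1 * F1 + v 2 * F2 = 0 := by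
    rw [← hfv, hfx]; rfl
  have hH : ∀ a b c : ℕ, a * w0 + b * w1 + c * w2 = d → a * F0 + b * F1 + c * F2 ≤ 0 := by
    intro a b c habc
    have := hfp (toR3 ![a, b, c]) ⟨_, ⟨?_, ?_⟩, rfl⟩
    · rw [hfx] at this
      simpa [toR3] using this
    · intro i; fin_cases i <;> simp
    · simp; exact_mod_cast habc
  have q0 := hv1 0
  have q1 := hv1 1
  have q2 := hv1 2
  have n0 : F0 ≤ 0 := core p0 p1 p2 pd q0 q1 q2 hv2 hF hH c0 e02 e01
  have n1 : F1 ≤ 0 := by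
    refine core (F1 := F0) (F2 := F2) p1 p0 p2 pd q1 q0 q2 (by linarith) (by linarith) ?_ ?_ e12 ?_
    · intro a b c habc
      have := hH b a c (by linarith)
      linarith
    · obtain ⟨k, hk, h⟩ := c1; exact ⟨k, hk, by tauto⟩
    · obtain ⟨a, b, h⟩ := e01; exact ⟨b, a, by linarith⟩
  have n2 : F2 ≤ 0 := by
    refine core (F1 := F0) (F2 := F1) p2 p0 p1 pd q2 q0 q1 (by linarith) (by linarith) ?_ ?_ ?_ ?_
    · intro a b c habc
      have := hH b c a (by linarith)
      linarith
    · obtain ⟨k, hk, h⟩ := c2; exact ⟨k, hk, by tauto⟩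
    · obtain ⟨a, b, h⟩ := e12; exact ⟨b, a, by linarith⟩
    · obtain ⟨a, b, h⟩ := e02; exact ⟨b, a, by linarith⟩
  have q0R : (0 : ℝ) < v 0 := by exact_mod_cast q0
  have q1R : (0 : ℝ) < v 1 := by exact_mod_cast q1
  have q2R : (0 : ℝ) < v 2 := by exact_mod_cast q2
  have s0 := mul_nonpos_of_nonneg_of_nonpos q0R.le n0
  have s1 := mul_nonpos_of_nonneg_of_nonpos q1R.le n1
  have s2 := mul_nonpos_of_nonneg_of_nonpos q2R.le n2
  have z0 : F0 = 0 := (mul_eq_zero.1 (show (v 0 : ℝ) * F0 = 0 by linarith)).resolve_left q0R.ne'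
  have z1 : F1 = 0 := (mul_eq_zero.1 (show (v 1 : ℝ) * F1 = 0 by linarith)).resolve_left q1R.ne'
  have z2 : F2 = 0 := (mul_eq_zero.1 (show (v 2 : ℝ) * F2 = 0 by linarith)).resolve_left q2R.ne'
  ext i
  fin_cases i
  · simpa using z0
  · simpa using z1
  · simpa using z2

lemma gcd_cond {x y d k : ℕ} (hxy : Nat.Coprime x y) (h : d = k * x + y) : Nat.gcd x d = 1 := by
  rw [h]
  simpa [Nat.coprime_iff_gcd_eq_one] using hxy

lemma gcd_of_cond {x y z d : ℕ} (hxy : Nat.Coprime x y) (hxz : Nat.Coprime x z)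
    (hk : ∃ k : ℕ, 0 < k ∧ (d = k * x + x ∨ d = k * x + y ∨ d = k * x + z))
    (hd : ¬ (x : ℤ) ∣ d) : ((Nat.gcd x d : ℕ) : ℤ) = 1 := by
  obtain ⟨k, hk, h | h | h⟩ := hk
  · exact absurd ⟨(k : ℤ) + 1, by rw [h]; push_cast; ring⟩ hd
  · exact_mod_cast gcd_cond hxy h
  · exact_mod_cast gcd_cond hxz h

lemma cond_int {x y z d : ℕ}
    (hk : ∃ k : ℕ, 0 < k ∧ (d = k * x + x ∨ d = k * x + y ∨ d = k * x + z)) :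
    (x : ℤ) ∣ d ∨ ∃ k : ℕ, 0 < k ∧ ((d : ℤ) = k * x + y ∨ (d : ℤ) = k * x + z) := by
  obtain ⟨k, hk, h | h | h⟩ := hk
  · exact Or.inl ⟨(k : ℤ) + 1, by rw [h]; push_cast; ring⟩
  · exact Or.inr ⟨k, hk, Or.inl (by exact_mod_cast h)⟩
  · exact Or.inr ⟨k, hk, Or.inr (by exact_mod_cast h)⟩

lemma card_posPts_eq_genus {w0 w1 w2 d : ℕ} (h : IsGoodQuadruple w0 w1 w2 d) :
    ((posPts w0 w1 w2 d).ncard : ℚ) = genusOf w0 w1 w2 d := by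
  obtain ⟨p0, p1, p2, pd, k01, k02, k12, -, -, -, c0, c1, c2, -, -, -⟩ := h
  have c1' : ∃ k : ℕ, 0 < k ∧ (d = k * w1 + w1 ∨ d = k * w1 + w0 ∨ d = k * w1 + w2) := by
    obtain ⟨k, hk, h⟩ := c1; exact ⟨k, hk, by tauto⟩
  have c2' : ∃ k : ℕ, 0 < k ∧ (d = k * w2 + w2 ∨ d = k * w2 + w0 ∨ d = k * w2 + w1) := by
    obtain ⟨k, hk, h⟩ := c2; exact ⟨k, hk, by tauto⟩
  have hg : ∀ x : ℕ, (x : ℤ) ∣ d → ((Nat.gcd x d : ℕ) : ℤ) = x := by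
    intro x hx
    rw [Nat.gcd_eq_left (by exact_mod_cast hx)]
  have D : Dat w0 w1 w2 d (Nat.gcd w0 d : ℕ) (Nat.gcd w1 d : ℕ) (Nat.gcd w2 d : ℕ) :=
    { px := by exact_mod_cast p0
      py := by exact_mod_cast p1
      pz := by exact_mod_cast p2
      pd := by exact_mod_cast pd
      xy := Nat.isCoprime_iff_coprime.2 k01
      xz := Nat.isCoprime_iff_coprime.2 k02
      yz := Nat.isCoprime_iff_coprime.2 k12
      c0 := cond_int c0
      c1 := cond_int c1'
      c2 := cond_int c2'
      g0d := hg _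
      g0n := gcd_of_cond k01 k02 c0
      g1d := hg _
      g1n := gcd_of_cond k01.symm k12 c1'
      g2d := hg _
      g2n := gcd_of_cond k02.symm k12.symm c2' }
  have C := conc_of_dat D
  unfold Conc at C
  have CQ : (2 * ((w0 : ℚ) * w1 * w2) * ((posPts w0 w1 w2 d).ncard : ℚ) =
    d * (d - w0 - w1 - w2) + (Nat.gcd w0 d : ℕ) * (w1 * w2) + (Nat.gcd w1 d : ℕ) * (w0 * w2)
      + (Nat.gcd w2 d : ℕ) * (w0 * w1) - w0 * w1 * w2) := by exact_mod_cast C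
  have h0 : (w0 : ℚ) ≠ 0 := by positivity
  have h1 : (w1 : ℚ) ≠ 0 := by positivity
  have h2 : (w2 : ℚ) ≠ 0 := by positivity
  unfold genusOf
  field_simp
  linear_combination CQ

/-- For a `g`-good quadruple, the number of lattice points in the relative (intrinsic)
interior of the associated polytope equals `g`. -/
theorem card_intrinsicInterior_latticePts (g w0 w1 w2 d : ℕ) (hg : 1 ≤ g)
    (h : IsGGoodQuadruple g w0 w1 w2 d) :
    {v : Fin 3 → ℤ | toR3 v ∈ intrinsicInterior ℝ (polytopeOf w0 w1 w2 d)}.ncard = g := by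
  obtain ⟨hgood, hgen⟩ := h
  have hcard := card_posPts_eq_genus hgood
  rw [hgen] at hcard
  have hN : (posPts w0 w1 w2 d).ncard = g := by exact_mod_cast hcard
  rw [← hN]
  congr 1
  obtain ⟨u, hu⟩ : (posPts w0 w1 w2 d).Nonempty := by
    apply Set.nonempty_of_ncard_ne_zero
    omega
  have humem : toR3 u ∈ polytopeOf w0 w1 w2 d :=
    subset_convexHull _ _ ⟨u, ⟨fun i => (hu.1 i).le, hu.2⟩, rfl⟩
  ext v
  constructor
  · intro hv
    have hpos := pos_of_mem_intrinsic humem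
      (fun i => by simpa [toR3] using hu.1 i) hv
    refine ⟨fun i => by simpa [toR3] using hpos i, ?_⟩
    have h2 := (polytope_subset _ _ _ _ (intrinsicInterior_subset hv)).2
    rw [wform_apply] at h2
    simp only [toR3] at h2
    have h3 : (w0 : ℤ) * v 0 + w1 * v 1 + w2 * v 2 = d := by exact_mod_cast h2
    linarith
  · intro hv
    exact mem_intrinsic_of_pos hgood hv
end

section
/- Let g ≥ 1 be an integer and let (w₀, w₁, w₂, d) be a g-good quadruple. Then the number of triples (a,b,c) ∈ ℤ³₍≥0₎ with a·w₀ + b·w₁ + c·w₂ = d − w₀ − w₁ − w₂ equals g. -/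
namespace WPC

/-- normalized sawtooth -/
def psi (w : ℕ) (a : ZMod w) : ℚ := (a.val : ℚ) / w - ((w : ℚ) - 1) / (2 * w)

/-- periodic part -/
noncomputable def alpha (w : ℕ) [NeZero w] (u v : ZMod w) (n : ZMod w) : ℚ :=
  ∑ a : ZMod w, psi w a * psi w ((n - a * u) * v⁻¹)

lemma psi_diff (w : ℕ) [NeZero w] (a : ZMod w) :
    psi w a - psi w (a - 1) = 1 / w - if a = 0 then 1 else 0 := by
  have hw : (w : ℚ) ≠ 0 := by exact_mod_cast NeZero.ne w
  obtain ⟨m, rfl⟩ : ∃ m, w = m + 1 := Nat.exists_eq_succ_of_ne_zero (NeZero.ne w)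
  have h : (((a - 1 : ZMod (m+1)).val : ℕ) : ℚ) = if a = 0 then (m : ℚ) else (a.val : ℚ) - 1 := by
    by_cases h0 : a = 0
    · subst h0
      rw [if_pos rfl, zero_sub, ZMod.val_neg_one]
    · have h1 : a.val ≠ 0 := by rwa [Ne, ZMod.val_eq_zero]
      have h2 : 1 ≤ a.val := Nat.one_le_iff_ne_zero.mpr h1
      have h3 : a - 1 = ((a.val - 1 : ℕ) : ZMod (m+1)) := by
        rw [Nat.cast_sub h2, ZMod.natCast_zmod_val, Nat.cast_one]
      have h4 := ZMod.val_lt a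
      rw [if_neg h0, h3, ZMod.val_natCast_of_lt (by omega)]
      push_cast [h2]; rfl
  unfold psi
  rw [h]
  split_ifs with h0
  · subst h0
    rw [ZMod.val_zero]
    push_cast at hw ⊢
    field_simp
    ring
  · push_cast at hw ⊢
    field_simp
    ring

lemma psi_sum (w : ℕ) [NeZero w] : ∑ a : ZMod w, psi w a = 0 := by
  have hw : (w : ℚ) ≠ 0 := by exact_mod_cast NeZero.ne w
  obtain ⟨m, rfl⟩ : ∃ m, w = m + 1 := Nat.exists_eq_succ_of_ne_zero (NeZero.ne w)
  have h : ∑ a : ZMod (m+1), (a.val : ℚ) = (m + 1) * m / 2 := by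
    change ∑ a : Fin (m+1), ((a : ℕ) : ℚ) = _
    rw [Fin.sum_univ_eq_sum_range (fun i => (i : ℚ))]
    clear hw
    induction m with
    | zero => simp
    | succ k ih => rw [Finset.sum_range_succ, ih]; push_cast; ring
  unfold psi
  rw [Finset.sum_sub_distrib, ← Finset.sum_div, h]
  simp only [Finset.sum_const, Finset.card_univ, ZMod.card, nsmul_eq_mul]
  push_cast at hw ⊢
  field_simp
  ring

lemma psi_sum_affine (w : ℕ) [NeZero w] (n u v : ZMod w) (hu : IsUnit u) (hv : IsUnit v) :
    ∑ a : ZMod w, psi w ((n - a * u) * v) = 0 := by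
  rw [← psi_sum w]
  apply Function.Bijective.sum_comp (e := fun a => (n - a * u) * v) _ (psi w)
  apply (Finite.injective_iff_bijective).1
  intro a b h
  have h1 := hv.mul_right_cancel h
  exact hu.mul_right_cancel (sub_right_injective h1)

lemma isUnit_inv {w : ℕ} {v : ZMod w} (hv : IsUnit v) : IsUnit v⁻¹ :=
  IsUnit.of_mul_eq_one v (ZMod.inv_mul_of_unit v hv)

lemma alpha_diff (w : ℕ) [NeZero w] (u v n : ZMod w) (hu : IsUnit u) (hv : IsUnit v) :
    alpha w u v n - alpha w u v (n - u) = - psi w (n * v⁻¹) := by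
  have h : alpha w u v (n - u) = ∑ a : ZMod w, psi w (a - 1) * psi w ((n - a * u) * v⁻¹) := by
    unfold alpha
    rw [← Equiv.sum_comp (Equiv.subRight (1 : ZMod w))]
    apply Finset.sum_congr rfl
    intro a _
    simp only [Equiv.subRight_apply]
    congr 2
    ring
  rw [h, alpha, ← Finset.sum_sub_distrib]
  simp_rw [← sub_mul, psi_diff]
  simp_rw [sub_mul (1 / (w : ℚ))]
  rw [Finset.sum_sub_distrib, ← Finset.mul_sum, psi_sum_affine w n u _ hu (isUnit_inv hv)]
  simp

lemma alpha_symm (w : ℕ) [NeZero w] (u v n : ZMod w) (hu : IsUnit u) (hv : IsUnit v) :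
    alpha w u v n = alpha w v u n := by
  unfold alpha
  have hb : Function.Bijective (fun a : ZMod w => (n - a * u) * v⁻¹) := by
    apply (Finite.injective_iff_bijective).1
    intro a b h
    have h1 := (isUnit_inv hv).mul_right_cancel h
    exact hu.mul_right_cancel (sub_right_injective h1)
  rw [← Function.Bijective.sum_comp hb (fun b => psi w b * psi w ((n - b * v) * u⁻¹))]
  apply Finset.sum_congr rfl
  intro a _
  have e : (n - (n - a * u) * v⁻¹ * v) * u⁻¹ = a := by
    rw [mul_assoc _ v⁻¹ v, ZMod.inv_mul_of_unit v hv, mul_one, sub_sub_cancel, mul_assoc,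
      ZMod.mul_inv_of_unit u hu, mul_one]
  rw [e, mul_comm]

lemma alpha_diff' (w : ℕ) [NeZero w] (u v n : ZMod w) (hu : IsUnit u) (hv : IsUnit v) :
    alpha w u v n - alpha w u v (n - v) = - psi w (n * u⁻¹) := by
  rw [alpha_symm w u v n hu hv, alpha_symm w u v _ hu hv, alpha_diff w v u n hv hu]

lemma psi_zero (w : ℕ) : psi w 0 = - (((w : ℚ) - 1) / (2 * w)) := by
  simp [psi]

lemma alpha_neg (w : ℕ) [NeZero w] (u v : ZMod w) (hu : IsUnit u) (hv : IsUnit v) :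
    alpha w u v (-u) - alpha w u v 0 = - (((w : ℚ) - 1) / (2 * w)) := by
  have := alpha_diff w u v 0 hu hv
  rw [zero_mul, psi_zero, zero_sub] at this
  linarith

lemma alpha_neg' (w : ℕ) [NeZero w] (u v : ZMod w) (hu : IsUnit u) (hv : IsUnit v) :
    alpha w u v (-v) - alpha w u v 0 = - (((w : ℚ) - 1) / (2 * w)) := by
  rw [alpha_symm w u v _ hu hv, alpha_symm w u v _ hu hv]
  exact alpha_neg w v u hv hu

lemma alpha_neg2 (w : ℕ) [NeZero w] (u v : ZMod w) (hu : IsUnit u) (hv : IsUnit v) :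
    alpha w u v (-u - v) - alpha w u v 0 = 0 := by
  have hw : (w : ℚ) ≠ 0 := by exact_mod_cast NeZero.ne w
  have h1 := alpha_neg w u v hu hv
  have h2 := alpha_diff' w u v (-u) hu hv
  have h3 : -u * u⁻¹ = (-1 : ZMod w) := by
    rw [neg_mul, ZMod.mul_inv_of_unit u hu]
  have h4 := psi_diff w 0
  rw [h3] at h2
  rw [psi_zero, zero_sub, if_pos rfl] at h4
  have : 2 * (((w : ℚ) - 1) / (2 * w)) = 1 - 1 / w := by field_simp
  linarith

lemma periods_mul (M : ℤ → ℚ) (B : ℤ) (u : ℕ)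
    (h1 : ∀ n, B < n → M (n + u) = M n) (k : ℕ) : ∀ n, B < n → M (n + k * u) = M n := by
  induction k with
  | zero => intro n _; simp
  | succ k ih =>
    intro n hn
    have : (0 : ℤ) ≤ k * u := by positivity
    rw [← ih n hn, ← h1 (n + k * u) (by linarith)]
    congr 1; push_cast; ring

/-- constancy -/
lemma const_of_periods (M : ℤ → ℚ) (B : ℤ) (u v : ℕ) (hu : 0 < u) (hv : 0 < v)
    (huv : Nat.Coprime u v)
    (h1 : ∀ n, B < n → M (n + u) = M n) (h2 : ∀ n, B < n → M (n + v) = M n) :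
    ∀ m n, B < m → B < n → M m = M n := by
  have hbez : ∃ X Y : ℕ, (1 : ℤ) + Y * v = X * u := by
    have hb := Nat.gcd_eq_gcd_ab u v
    rw [huv.gcd_eq_one] at hb
    set x := Nat.gcdA u v
    set y := Nat.gcdB u v
    have hx : 0 ≤ x + v * (|x| + |y|) := by
      have : (1 : ℤ) ≤ v := by exact_mod_cast hv
      nlinarith [neg_abs_le x, abs_nonneg x, abs_nonneg y]
    have hy : 0 ≤ -y + u * (|x| + |y|) := by
      have : (1 : ℤ) ≤ u := by exact_mod_cast hu
      nlinarith [le_abs_self y, abs_nonneg x, abs_nonneg y]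
    obtain ⟨X, hX⟩ := Int.eq_ofNat_of_zero_le hx
    obtain ⟨Y, hY⟩ := Int.eq_ofNat_of_zero_le hy
    refine ⟨X, Y, ?_⟩
    rw [← hX, ← hY]
    push_cast at hb
    linear_combination hb
  obtain ⟨X, Y, hXY⟩ := hbez
  have hs : ∀ n, B < n → M (n + (1 : ℕ)) = M n := by
    intro n hn
    rw [← periods_mul M B v h2 Y (n + (1 : ℕ)) (by push_cast; linarith),
      ← periods_mul M B u h1 X n hn, ← hXY]
    congr 1; push_cast; ring
  have key : ∀ n, B < n → M n = M (B + 1) := by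
    intro n hn
    obtain ⟨k, hk⟩ := Int.eq_ofNat_of_zero_le (show 0 ≤ n - (B + 1) by linarith)
    have := periods_mul M B 1 hs k (B + 1) (by linarith)
    rw [← this]
    congr 1
    push_cast
    linarith
  intro m n hm hn
  rw [key m hm, key n hn]

/-- solutions in two variables -/
def S2 (u v : ℕ) (n : ℤ) : Set (ℤ × ℤ) :=
  {x | 0 ≤ x.1 ∧ 0 ≤ x.2 ∧ x.1 * (u : ℤ) + x.2 * (v : ℤ) = n}

/-- solutions in three variables -/
def S3 (u v w : ℕ) (n : ℤ) : Set (ℤ × ℤ × ℤ) :=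
  {x | 0 ≤ x.1 ∧ 0 ≤ x.2.1 ∧ 0 ≤ x.2.2 ∧
    x.1 * (u : ℤ) + x.2.1 * (v : ℤ) + x.2.2 * (w : ℤ) = n}

lemma le_of_sol {a b : ℤ} {u : ℕ} {n : ℤ} (hu : 0 < u) (ha : 0 ≤ a) (hb : 0 ≤ b)
    (h : a * u + b = n) : a ≤ n := by
  have : (1 : ℤ) ≤ u := by exact_mod_cast hu
  nlinarith

lemma S3_finite (u v w : ℕ) (hu : 0 < u) (hv : 0 < v) (hw : 0 < w) (n : ℤ) :
    (S3 u v w n).Finite := by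
  apply ((Set.finite_Icc (0 : ℤ) n).prod ((Set.finite_Icc (0 : ℤ) n).prod
    (Set.finite_Icc (0 : ℤ) n))).subset
  rintro ⟨a, b, c⟩ ⟨ha, hb, hc, h⟩
  simp only at ha hb hc h
  refine ⟨⟨ha, ?_⟩, ⟨hb, ?_⟩, ⟨hc, ?_⟩⟩
  · exact le_of_sol (b := b * v + c * w) hu ha (by positivity) (by linarith)
  · exact le_of_sol (b := a * u + c * w) hv hb (by positivity) (by linarith)
  · exact le_of_sol (b := a * u + b * v) hw hc (by positivity) (by linarith)

lemma S2_finite (u v : ℕ) (hu : 0 < u) (hv : 0 < v) (n : ℤ) :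
    (S2 u v n).Finite := by
  apply ((Set.finite_Icc (0 : ℤ) n).prod (Set.finite_Icc (0 : ℤ) n)).subset
  rintro ⟨a, b⟩ ⟨ha, hb, h⟩
  simp only at ha hb h
  refine ⟨⟨ha, ?_⟩, ⟨hb, ?_⟩⟩
  · exact le_of_sol (b := b * v) hu ha (by positivity) (by linarith)
  · exact le_of_sol (b := a * u) hv hb (by positivity) (by linarith)

lemma S3_step (u v w : ℕ) (hu : 0 < u) (hv : 0 < v) (hw : 0 < w) (n : ℤ) :
    (S3 u v w n).ncard = (S3 u v w (n - u)).ncard + (S2 v w n).ncard := by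
  have h : S3 u v w n = Set.image (fun x : ℤ × ℤ × ℤ => (x.1 + 1, x.2)) (S3 u v w (n - u)) ∪
      Set.image (fun x : ℤ × ℤ => ((0 : ℤ), x)) (S2 v w n) := by
    ext ⟨a, b, c⟩
    constructor
    · rintro ⟨ha, hb, hc, h⟩
      simp only at ha hb hc h
      rcases ha.eq_or_lt with h0 | h0
      · right
        refine ⟨(b, c), ⟨hb, hc, ?_⟩, ?_⟩
        · subst h0; simpa using h
        · simp [h0]
      · left
        refine ⟨(a - 1, b, c), ⟨?_, hb, hc, ?_⟩, by simp⟩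
        · simp only; linarith
        · simp only; linarith
    · rintro (⟨⟨a', b', c'⟩, ⟨ha, hb, hc, h⟩, e⟩ | ⟨⟨b', c'⟩, ⟨hb, hc, h⟩, e⟩)
      · simp only [Prod.mk.injEq] at ha hb hc h e
        obtain ⟨rfl, rfl, rfl⟩ := e
        refine ⟨?_, hb, hc, ?_⟩
        · simp only; linarith
        · simp only; linarith
      · simp only [Prod.mk.injEq] at hb hc h e
        obtain ⟨rfl, rfl, rfl⟩ := e
        refine ⟨le_refl _, hb, hc, ?_⟩
        · simp only; linarith
  rw [h, Set.ncard_union_eq ?_ ?_ ?_, Set.ncard_image_of_injective, Set.ncard_image_of_injective]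
  · intro x y hxy; simpa using hxy
  · rintro ⟨x, x'⟩ ⟨y, y'⟩ hxy; simpa using hxy
  · rw [Set.disjoint_left]
    rintro x ⟨y, hy, rfl⟩ ⟨z, hz, e⟩
    simp only [Prod.mk.injEq] at e
    have := hy.1
    linarith [e.1]
  · exact (S3_finite u v w hu hv hw _).image _
  · exact (S2_finite v w hv hw _).image _

lemma S2_step (u v : ℕ) (hu : 0 < u) (hv : 0 < v) (n : ℤ) (hn : -(v : ℤ) < n) :
    ((S2 u v n).ncard : ℚ) = (S2 u v (n - u)).ncard + (if (v : ℤ) ∣ n then 1 else 0) := by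
  have hv' : (0 : ℤ) < v := by exact_mod_cast hv
  have h : S2 u v n = Set.image (fun x : ℤ × ℤ => (x.1 + 1, x.2)) (S2 u v (n - u)) ∪
      (if (v : ℤ) ∣ n then {((0 : ℤ), n / v)} else ∅) := by
    ext ⟨a, b⟩
    constructor
    · rintro ⟨ha, hb, h⟩
      simp only at ha hb h
      rcases ha.eq_or_lt with h0 | h0
      · right
        subst h0
        have h' : n = b * v := by linarith
        rw [if_pos ⟨b, by linarith⟩, h', Int.mul_ediv_cancel _ hv'.ne']
        rfl
      · left
        refine ⟨(a - 1, b), ⟨?_, hb, ?_⟩, by simp⟩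
        · simp only; linarith
        · simp only; linarith
    · rintro (⟨⟨a', b'⟩, ⟨ha, hb, h⟩, e⟩ | hm)
      · simp only [Prod.mk.injEq] at ha hb h e
        obtain ⟨rfl, rfl⟩ := e
        refine ⟨?_, hb, ?_⟩
        · simp only; linarith
        · simp only; linarith
      · split_ifs at hm with hd
        · obtain ⟨k, rfl⟩ := hd
          rw [Int.mul_ediv_cancel_left _ hv'.ne'] at hm
          simp only [Set.mem_singleton_iff, Prod.mk.injEq] at hm
          obtain ⟨rfl, rfl⟩ := hm
          refine ⟨le_refl _, ?_, ?_⟩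
          · simp only; nlinarith
          · simp only; linarith
        · exact hm.elim
  rw [h, Set.ncard_union_eq ?_ ?_ ?_, Set.ncard_image_of_injective]
  · split_ifs <;> simp
  · rintro ⟨x, x'⟩ ⟨y, y'⟩ hxy; simpa using hxy
  · rw [Set.disjoint_left]
    rintro x ⟨y, hy, rfl⟩ hm
    split_ifs at hm with hd
    · simp only [Set.mem_singleton_iff, Prod.mk.injEq] at hm
      have := hy.1
      linarith [hm.1]
    · exact hm
  · exact (S2_finite u v hu hv _).image _
  · split_ifs <;> simp

lemma S2_comm (u v : ℕ) (n : ℤ) : (S2 u v n).ncard = (S2 v u n).ncard := by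
  rw [← Set.ncard_image_of_injective (S2 v u n) (Prod.swap_injective)]
  congr 1
  ext ⟨a, b⟩
  simp only [S2, Set.mem_ofPred_eq, Set.mem_image, Prod.exists, Prod.swap_prod_mk, Prod.mk.injEq]
  constructor
  · rintro ⟨h1, h2, h3⟩
    exact ⟨b, a, ⟨h2, h1, by linarith⟩, rfl, rfl⟩
  · rintro ⟨b', a', ⟨h1, h2, h3⟩, rfl, rfl⟩
    exact ⟨h2, h1, by linarith⟩

lemma S3_comm (u v w : ℕ) (n : ℤ) : (S3 u v w n).ncard = (S3 v u w n).ncard := by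
  have hi : Function.Injective (fun x : ℤ × ℤ × ℤ => (x.2.1, x.1, x.2.2)) := by
    rintro ⟨a, b, c⟩ ⟨a', b', c'⟩ h
    simp only [Prod.mk.injEq] at h ⊢
    tauto
  rw [← Set.ncard_image_of_injective (S3 v u w n) hi]
  congr 1
  ext ⟨a, b, c⟩
  simp only [S3, Set.mem_ofPred_eq, Set.mem_image, Prod.exists, Prod.mk.injEq]
  constructor
  · rintro ⟨h1, h2, h3, h4⟩
    exact ⟨b, a, c, ⟨h2, h1, h3, by linarith⟩, rfl, rfl, rfl⟩
  · rintro ⟨b', a', c', ⟨h1, h2, h3, h4⟩, rfl, rfl, rfl⟩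
    exact ⟨h2, h1, h3, by linarith⟩

lemma isUnit_cast {u w : ℕ} (h : Nat.Coprime u w) : IsUnit (u : ZMod w) :=
  (ZMod.isUnit_iff_coprime u w).2 h

/-- error term in two variables -/
noncomputable def M2 (u v : ℕ) (n : ℤ) : ℚ :=
  (S2 u v n).ncard - (n / (u * v) - psi u ((n : ZMod u) * (v : ZMod u)⁻¹)
    - psi v ((n : ZMod v) * (u : ZMod v)⁻¹))

lemma M2_comm (u v : ℕ) (n : ℤ) : M2 u v n = M2 v u n := by
  unfold M2
  rw [S2_comm, mul_comm (u : ℚ)]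
  ring

lemma M2_step (u v : ℕ) (hu : 0 < u) (hv : 0 < v) (huv : Nat.Coprime u v) (n : ℤ)
    (hn : -(u : ℤ) - v < n) : M2 u v (n + u) = M2 u v n := by
  haveI : NeZero u := ⟨hu.ne'⟩
  haveI : NeZero v := ⟨hv.ne'⟩
  have huq : (u : ℚ) ≠ 0 := by exact_mod_cast hu.ne'
  have hvq : (v : ℚ) ≠ 0 := by exact_mod_cast hv.ne'
  have hs := S2_step u v hu hv (n + u) (by linarith)
  rw [add_sub_cancel_right] at hs
  have hU := isUnit_cast huv
  have hp := psi_diff v (((n + u : ℤ) : ZMod v) * (u : ZMod v)⁻¹)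
  have e1 : ((n + u : ℤ) : ZMod v) * (u : ZMod v)⁻¹ - 1 = (n : ZMod v) * (u : ZMod v)⁻¹ := by
    push_cast
    rw [add_mul, ZMod.mul_inv_of_unit _ hU]
    ring
  have e2 : (((n + u : ℤ) : ZMod v) * (u : ZMod v)⁻¹ = 0) ↔ (v : ℤ) ∣ n + u := by
    rw [(isUnit_inv hU).mul_left_eq_zero, ZMod.intCast_zmod_eq_zero_iff_dvd]
  have e3 : ((n + u : ℤ) : ZMod u) = (n : ZMod u) := by push_cast; simp
  rw [e1] at hp
  simp only [e2] at hp
  unfold M2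
  rw [hs, e3]
  have e4 : (((n + u : ℤ) : ℚ)) / (u * v) = n / (u * v) + 1 / v := by
    push_cast; field_simp
  rw [e4]
  linarith

lemma S2_zero (u v : ℕ) (hu : 0 < u) (hv : 0 < v) : (S2 u v 0).ncard = 1 := by
  have : S2 u v 0 = {(0, 0)} := by
    ext ⟨a, b⟩
    simp only [S2, Set.mem_ofPred_eq, Set.mem_singleton_iff, Prod.mk.injEq]
    have hu' : (0 : ℤ) < u := by exact_mod_cast hu
    have hv' : (0 : ℤ) < v := by exact_mod_cast hv
    constructor
    · rintro ⟨h1, h2, h3⟩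
      constructor <;> nlinarith [mul_nonneg h1 hu'.le, mul_nonneg h2 hv'.le]
    · rintro ⟨rfl, rfl⟩; simp
  rw [this, Set.ncard_singleton]

lemma S3_zero (u v w : ℕ) (hu : 0 < u) (hv : 0 < v) (hw : 0 < w) : (S3 u v w 0).ncard = 1 := by
  have : S3 u v w 0 = {(0, 0, 0)} := by
    ext ⟨a, b, c⟩
    simp only [S3, Set.mem_ofPred_eq, Set.mem_singleton_iff, Prod.mk.injEq]
    have hu' : (0 : ℤ) < u := by exact_mod_cast hu
    have hv' : (0 : ℤ) < v := by exact_mod_cast hv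
    have hw' : (0 : ℤ) < w := by exact_mod_cast hw
    constructor
    · rintro ⟨h1, h2, h3, h4⟩
      refine ⟨?_, ?_, ?_⟩ <;>
      nlinarith [mul_nonneg h1 hu'.le, mul_nonneg h2 hv'.le, mul_nonneg h3 hw'.le]
    · rintro ⟨rfl, rfl, rfl⟩; simp
  rw [this, Set.ncard_singleton]

lemma S2_formula (u v : ℕ) (hu : 0 < u) (hv : 0 < v) (huv : Nat.Coprime u v) (n : ℤ)
    (hn : -(u : ℤ) - v < n) : ((S2 u v n).ncard : ℚ) = n / (u * v)
      - psi u ((n : ZMod u) * (v : ZMod u)⁻¹) - psi v ((n : ZMod v) * (u : ZMod v)⁻¹)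
      + ((u : ℚ) + v) / (2 * u * v) := by
  have huq : (u : ℚ) ≠ 0 := by exact_mod_cast hu.ne'
  have hvq : (v : ℚ) ≠ 0 := by exact_mod_cast hv.ne'
  have hc := const_of_periods (M2 u v) (-(u : ℤ) - v) u v hu hv huv
    (fun n hn => M2_step u v hu hv huv n hn)
    (fun n hn => by
      rw [M2_comm, M2_comm u v]; exact M2_step v u hv hu huv.symm n (by linarith))
    n 0 hn (by
      have : (0 : ℤ) < u := by exact_mod_cast hu
      have : (0 : ℤ) < v := by exact_mod_cast hv
      linarith)
  have h0 : M2 u v 0 = ((u : ℚ) + v) / (2 * u * v) := by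
    unfold M2
    rw [S2_zero u v hu hv]
    push_cast
    rw [zero_mul, zero_mul, psi_zero, psi_zero]
    field_simp
    ring
  rw [h0] at hc
  unfold M2 at hc
  linarith

/-- error term in three variables -/
noncomputable def M3 (u v w : ℕ) [NeZero u] [NeZero v] [NeZero w] (n : ℤ) : ℚ :=
  (S3 u v w n).ncard - (n * (n + u + v + w) / (2 * u * v * w)
    + alpha u v w n + alpha v u w n + alpha w u v n)

lemma M3_comm (u v w : ℕ) [NeZero u] [NeZero v] [NeZero w] (h : Nat.Coprime u w)
    (h' : Nat.Coprime v w) (n : ℤ) : M3 u v w n = M3 v u w n := by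
  unfold M3
  rw [S3_comm, alpha_symm w u v _ (isUnit_cast h) (isUnit_cast h')]
  ring

lemma M3_step (u v w : ℕ) [NeZero u] [NeZero v] [NeZero w] (huv : Nat.Coprime u v)
    (huw : Nat.Coprime u w) (hvw : Nat.Coprime v w) (n : ℤ)
    (hn : -(u : ℤ) - v - w < n) : M3 u v w (n + u) = M3 u v w n := by
  have hu : 0 < u := Nat.pos_of_ne_zero (NeZero.ne u)
  have hv : 0 < v := Nat.pos_of_ne_zero (NeZero.ne v)
  have hw : 0 < w := Nat.pos_of_ne_zero (NeZero.ne w)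
  have huq : (u : ℚ) ≠ 0 := by exact_mod_cast hu.ne'
  have hvq : (v : ℚ) ≠ 0 := by exact_mod_cast hv.ne'
  have hwq : (w : ℚ) ≠ 0 := by exact_mod_cast hw.ne'
  have hs := S3_step u v w hu hv hw (n + u)
  rw [add_sub_cancel_right] at hs
  have hf := S2_formula v w hv hw hvw (n + u) (by linarith)
  have a1 := alpha_diff v u w ((n + u : ℤ) : ZMod v) (isUnit_cast huv) (isUnit_cast hvw.symm)
  have a2 := alpha_diff w u v ((n + u : ℤ) : ZMod w) (isUnit_cast huw) (isUnit_cast hvw)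
  have e1 : ((n + u : ℤ) : ZMod v) - u = n := by push_cast; ring
  have e2 : ((n + u : ℤ) : ZMod w) - u = n := by push_cast; ring
  have e3 : ((n + u : ℤ) : ZMod u) = (n : ZMod u) := by push_cast; simp
  rw [e1] at a1
  rw [e2] at a2
  unfold M3
  rw [hs, e3]
  have e4 : (((n + u : ℤ) : ℚ)) * (((n + u : ℤ) : ℚ) + u + v + w) / (2 * u * v * w)
      = n * (n + u + v + w) / (2 * u * v * w) + ((n + u : ℤ) : ℚ) / (v * w)
        + ((v : ℚ) + w) / (2 * v * w) := by
    push_cast; field_simp; ring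
  rw [e4]
  push_cast at hf a1 a2 ⊢
  linarith

lemma S3_formula (u v w : ℕ) [NeZero u] [NeZero v] [NeZero w] (huv : Nat.Coprime u v)
    (huw : Nat.Coprime u w) (hvw : Nat.Coprime v w) (n : ℤ)
    (hn : -(u : ℤ) - v - w < n) : ((S3 u v w n).ncard : ℚ) =
      1 + n * (n + u + v + w) / (2 * u * v * w)
      + (alpha u v w n - alpha u v w 0) + (alpha v u w n - alpha v u w 0)
      + (alpha w u v n - alpha w u v 0) := by
  have hu : 0 < u := Nat.pos_of_ne_zero (NeZero.ne u)
  have hv : 0 < v := Nat.pos_of_ne_zero (NeZero.ne v)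
  have hw : 0 < w := Nat.pos_of_ne_zero (NeZero.ne w)
  have hc := const_of_periods (M3 u v w) (-(u : ℤ) - v - w) u v hu hv huv
    (fun n hn => M3_step u v w huv huw hvw n hn)
    (fun n hn => by
      rw [M3_comm u v w huw hvw, M3_comm u v w huw hvw]
      exact M3_step v u w huv.symm hvw huw n (by linarith))
    n 0 hn (by omega)
  unfold M3 at hc
  rw [S3_zero u v w hu hv hw] at hc
  push_cast at hc
  simp only [zero_mul, zero_div] at hc
  linarith

/-- value of the periodic part at the special residues -/
lemma alpha_special (w u v d : ℕ) [NeZero w] (hu : Nat.Coprime u w) (hv : Nat.Coprime v w)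
    (h : ∃ k : ℕ, d = k * w + w ∨ d = k * w + u ∨ d = k * w + v) (n : ℤ)
    (hn : n = (d : ℤ) - u - v - w) :
    alpha w u v n - alpha w u v 0 = ((Nat.gcd w d : ℚ) / w - 1) / 2 := by
  have hw : (w : ℚ) ≠ 0 := by exact_mod_cast NeZero.ne w
  have hU := isUnit_cast hu
  have hV := isUnit_cast hv
  obtain ⟨k, hd | hd | hd⟩ := h
  · have e : (n : ZMod w) = -u - v := by rw [hn, hd]; push_cast; simp
    have hg : Nat.gcd w d = w := Nat.gcd_eq_left ⟨k + 1, by rw [hd]; ring⟩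
    rw [e, alpha_neg2 w u v hU hV, hg, div_self hw]
    simp
  · have e : (n : ZMod w) = -v := by rw [hn, hd]; push_cast; simp
    have hg : Nat.gcd w d = 1 := by
      rw [hd, Nat.gcd_mul_right_add_right]; exact hu.symm
    rw [e, alpha_neg' w u v hU hV, hg]
    push_cast; field_simp; ring
  · have e : (n : ZMod w) = -u := by rw [hn, hd]; push_cast; simp
    have hg : Nat.gcd w d = 1 := by
      rw [hd, Nat.gcd_mul_right_add_right]; exact hv.symm
    rw [e, alpha_neg w u v hU hV, hg]
    push_cast; field_simp; ring

end WPC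

/-- For a `g`-good quadruple `(w0, w1, w2, d)`, the number of nonnegative integer triples
`(a, b, c)` with `a*w0 + b*w1 + c*w2 = d - w0 - w1 - w2` equals `g`. -/
theorem card_solutions_eq_genus (g w0 w1 w2 d : ℕ) (hg : 1 ≤ g)
    (h : IsGGoodQuadruple g w0 w1 w2 d) :
    {v : ℤ × ℤ × ℤ | 0 ≤ v.1 ∧ 0 ≤ v.2.1 ∧ 0 ≤ v.2.2 ∧
      v.1 * (w0 : ℤ) + v.2.1 * (w1 : ℤ) + v.2.2 * (w2 : ℤ)
        = (d : ℤ) - (w0 : ℤ) - (w1 : ℤ) - (w2 : ℤ)}.ncard = g := by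
  obtain ⟨⟨p0, p1, p2, pd, c01, c02, c12, -, -, -, ⟨k0, -, h0⟩, ⟨k1, -, h1⟩, ⟨k2, -, h2⟩, -⟩, hG⟩ := h
  haveI : NeZero w0 := ⟨p0.ne'⟩
  haveI : NeZero w1 := ⟨p1.ne'⟩
  haveI : NeZero w2 := ⟨p2.ne'⟩
  have q0 : (w0 : ℚ) ≠ 0 := by exact_mod_cast p0.ne'
  have q1 : (w1 : ℚ) ≠ 0 := by exact_mod_cast p1.ne'
  have q2 : (w2 : ℚ) ≠ 0 := by exact_mod_cast p2.ne'
  change (WPC.S3 w0 w1 w2 ((d : ℤ) - w0 - w1 - w2)).ncard = g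
  have hf := WPC.S3_formula w0 w1 w2 c01 c02 c12 ((d : ℤ) - w0 - w1 - w2) (by omega)
  rw [WPC.alpha_special w0 w1 w2 d c01.symm c02.symm ⟨k0, by tauto⟩ _ (by ring),
    WPC.alpha_special w1 w0 w2 d c01 c12.symm ⟨k1, by tauto⟩ _ (by ring),
    WPC.alpha_special w2 w0 w1 d c02 c12 ⟨k2, by tauto⟩ _ (by ring)] at hf
  have : ((WPC.S3 w0 w1 w2 ((d : ℤ) - w0 - w1 - w2)).ncard : ℚ) = g := by
    rw [hf, ← hG]
    unfold genusOf
    push_cast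
    field_simp
    ring
  exact_mod_cast this
end

section
/- Let g ≥ 1 be an integer, let (w₀, w₁, w₂, d) be a g-good quadruple, and let P be its associated polytope. Then a lattice point v = (a,b,c) ∈ ℤ³ lying in P belongs to the intrinsic (relative) interior of P if and only if a ≥ 1, b ≥ 1 and c ≥ 1. -/
/-- Corner estimate at the vertex `0`: a functional which is largest at this vertex takes, at some
lattice point, at least its value at any `x` with coordinates `> d/(d+1)`. -/
lemma corner_estimate (w0 w1 w2 d : ℕ) (hw1 : 0 < w1) (hw2 : 0 < w2)
    (hk : ∃ k : ℕ, d = k * w0 + w0 ∨ d = k * w0 + w1 ∨ d = k * w0 + w2)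
    (h2 : ∃ a b : ℕ, d = a * w0 + b * w2) (h1 : ∃ a b : ℕ, d = a * w0 + b * w1)
    (g0 g1 g2 : ℝ) (h10 : g1 ≤ g0) (h20 : g2 ≤ g0) (x0 x1 x2 : ℝ)
    (hx : x0 * w0 + x1 * w1 + x2 * w2 = d)
    (hx1 : (d : ℝ) < (d + 1) * x1) (hx2 : (d : ℝ) < (d + 1) * x2) :
    ∃ a b c : ℕ, a * w0 + b * w1 + c * w2 = d ∧
      x0 * w0 * g0 + x1 * w1 * g1 + x2 * w2 * g2 ≤
        (a : ℝ) * w0 * g0 + (b : ℝ) * w1 * g1 + (c : ℝ) * w2 * g2 := by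
  have hd : (0 : ℝ) ≤ d := Nat.cast_nonneg d
  have hx1p : 0 < x1 := by
    by_contra hcon
    nlinarith
  have hx2p : 0 < x2 := by
    by_contra hcon
    nlinarith
  have key : ∀ (β γ y z : ℝ) (c : ℕ), 0 ≤ β → 0 ≤ γ → (d : ℝ) < (d + 1) * y →
      (d : ℝ) < (d + 1) * z → 0 < y → 0 < z → (c : ℝ) ≤ d →
      β ≤ β * y + γ * z ∨ γ * c ≤ β * y + γ * z := by
    intro β γ y z c hβ hγ hy hz hy0 hz0 hc
    by_contra hcon
    push Not at hcon
    obtain ⟨e1, e2⟩ := hcon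
    have hS : 0 ≤ β * y + γ * z := by positivity
    have hc0 : (0 : ℝ) ≤ c := Nat.cast_nonneg c
    set S := β * y + γ * z with hSdef
    -- multiply the first by `c * y`, the second by `z`
    have a1 : S * (c * y) ≤ β * (c * y) := by
      apply mul_le_mul_of_nonneg_right e1.le; positivity
    have a2 : S * z < γ * c * z := mul_lt_mul_of_pos_right e2 hz0
    have a3 : S * (c * y + z) < S * c := by
      have : S * c = β * (c * y) + γ * c * z := by rw [hSdef]; ring
      linarith
    have a4 : (c : ℝ) ≤ c * y + z := by
      have : (d + 1 : ℝ) * c ≤ (d + 1) * (c * y + z) := by nlinarith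
      exact le_of_mul_le_mul_left this (by positivity)
    nlinarith
  have ub : x0 * w0 * g0 + x1 * w1 * g1 + x2 * w2 * g2 =
      d * g0 - ((w1 * (g0 - g1)) * x1 + (w2 * (g0 - g2)) * x2) := by
    rw [← hx]; ring
  have hβ : 0 ≤ (w1 : ℝ) * (g0 - g1) := mul_nonneg (Nat.cast_nonneg _) (by linarith)
  have hγ : 0 ≤ (w2 : ℝ) * (g0 - g2) := mul_nonneg (Nat.cast_nonneg _) (by linarith)
  obtain ⟨k, hk | hk | hk⟩ := hk
  · refine ⟨k + 1, 0, 0, by rw [hk]; ring, ?_⟩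
    rw [ub]
    have : (d : ℝ) = k * w0 + w0 := by exact_mod_cast hk
    have h3 : 0 ≤ (w1 * (g0 - g1)) * x1 + (w2 * (g0 - g2)) * x2 := by positivity
    push_cast
    rw [this] at *
    linarith
  · obtain ⟨a, c, hac⟩ := h2
    have hcd : (c : ℝ) ≤ d := by
      have : c ≤ d := by nlinarith [Nat.zero_le (a * w0)]
      exact_mod_cast this
    have e1 : (d : ℝ) = k * w0 + w1 := by exact_mod_cast hk
    have e2 : (d : ℝ) = a * w0 + c * w2 := by exact_mod_cast hac
    rcases key _ _ x1 x2 c hβ hγ hx1 hx2 hx1p hx2p hcd with hh | hh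
    · refine ⟨k, 1, 0, by rw [hk]; ring, ?_⟩
      rw [ub]; push_cast
      have : (d : ℝ) * g0 = (k * w0 + w1) * g0 := by rw [e1]
      linarith
    · refine ⟨a, 0, c, by rw [hac]; ring, ?_⟩
      rw [ub]; push_cast
      have : (d : ℝ) * g0 = (a * w0 + c * w2) * g0 := by rw [e2]
      linarith
  · obtain ⟨a, c, hac⟩ := h1
    have hcd : (c : ℝ) ≤ d := by
      have : c ≤ d := by nlinarith [Nat.zero_le (a * w0)]
      exact_mod_cast this
    have e1 : (d : ℝ) = k * w0 + w2 := by exact_mod_cast hk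
    have e2 : (d : ℝ) = a * w0 + c * w1 := by exact_mod_cast hac
    rcases key _ _ x2 x1 c hγ hβ hx2 hx1 hx2p hx1p hcd with hh | hh
    · refine ⟨k, 0, 1, by rw [hk]; ring, ?_⟩
      rw [ub]; push_cast
      have : (d : ℝ) * g0 = (k * w0 + w2) * g0 := by rw [e1]
      linarith
    · refine ⟨a, c, 0, by rw [hac]; ring, ?_⟩
      rw [ub]; push_cast
      have : (d : ℝ) * g0 = (a * w0 + c * w1) * g0 := by rw [e2]
      linarith

lemma latticePts_finite (w0 w1 w2 d : ℕ) (h0 : 0 < w0) (h1 : 0 < w1) (h2 : 0 < w2) :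
    (latticePts w0 w1 w2 d).Finite := by
  apply (Set.finite_Icc (0 : Fin 3 → ℤ) (fun _ => (d : ℤ))).subset
  rintro v ⟨hv, he⟩
  have a0 : (1 : ℤ) ≤ w0 := by exact_mod_cast h0
  have a1 : (1 : ℤ) ≤ w1 := by exact_mod_cast h1
  have a2 : (1 : ℤ) ≤ w2 := by exact_mod_cast h2
  have b0 := le_mul_of_one_le_right (hv 0) a0
  have b1 := le_mul_of_one_le_right (hv 1) a1
  have b2 := le_mul_of_one_le_right (hv 2) a2
  have c0 := hv 0
  have c1 := hv 1
  have c2 := hv 2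
  refine ⟨fun i => hv i, fun i => ?_⟩
  fin_cases i
  · show v 0 ≤ d
    linarith
  · show v 1 ≤ d
    linarith
  · show v 2 ≤ d
    linarith

lemma nat_point_mem (w0 w1 w2 d a b c : ℕ) (h : a * w0 + b * w1 + c * w2 = d) :
    ![(a : ℝ), b, c] ∈ polytopeOf w0 w1 w2 d := by
  apply subset_convexHull
  refine ⟨![(a : ℤ), b, c], ⟨?_, ?_⟩, ?_⟩
  · intro i
    fin_cases i <;> simp
  · simp only [Matrix.cons_val]
    exact_mod_cast h
  · funext i
    fin_cases i <;> simp [toR3]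

lemma mem_polytope_of (w0 w1 w2 d : ℕ) (h : IsGoodQuadruple w0 w1 w2 d) (x : Fin 3 → ℝ)
    (hx : x 0 * w0 + x 1 * w1 + x 2 * w2 = d) (hxi : ∀ i, (d : ℝ) < (d + 1) * x i) :
    x ∈ polytopeOf w0 w1 w2 d := by
  obtain ⟨h0, h1, h2, -, -, -, -, -, -, -, ⟨k0, -, hk0⟩, ⟨k1, -, hk1⟩, ⟨k2, -, hk2⟩,
    ⟨a12, b12, e12⟩, ⟨a02, b02, e02⟩, ⟨a01, b01, e01⟩⟩ := h
  by_contra hcon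
  have hfin : (toR3 '' latticePts w0 w1 w2 d).Finite :=
    (latticePts_finite w0 w1 w2 d h0 h1 h2).image _
  obtain ⟨f, u, hf, hu⟩ := geometric_hahn_banach_closed_point (convex_convexHull ℝ _)
    (hfin.isClosed_convexHull (𝕜 := ℝ)) hcon
  have hfe : ∀ y : Fin 3 → ℝ, f y = y 0 * f (Pi.single 0 1) + y 1 * f (Pi.single 1 1)
      + y 2 * f (Pi.single 2 1) := by
    intro y
    conv_lhs => rw [pi_eq_sum_univ' y]
    simp only [Fin.sum_univ_three]
    rw [map_add, map_add, map_smul, map_smul, map_smul]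
    rfl
  have r0 : (0 : ℝ) < w0 := by exact_mod_cast h0
  have r1 : (0 : ℝ) < w1 := by exact_mod_cast h1
  have r2 : (0 : ℝ) < w2 := by exact_mod_cast h2
  obtain ⟨g0, hg0⟩ : ∃ g0 : ℝ, f (Pi.single 0 1) = w0 * g0 :=
    ⟨f (Pi.single 0 1) / w0, by field_simp⟩
  obtain ⟨g1, hg1⟩ : ∃ g1 : ℝ, f (Pi.single 1 1) = w1 * g1 :=
    ⟨f (Pi.single 1 1) / w1, by field_simp⟩
  obtain ⟨g2, hg2⟩ : ∃ g2 : ℝ, f (Pi.single 2 1) = w2 * g2 :=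
    ⟨f (Pi.single 2 1) / w2, by field_simp⟩
  rw [hg0, hg1, hg2] at hfe
  have fin : ∀ a b c : ℕ, a * w0 + b * w1 + c * w2 = d →
      (a : ℝ) * w0 * g0 + (b : ℝ) * w1 * g1 + (c : ℝ) * w2 * g2 <
      x 0 * w0 * g0 + x 1 * w1 * g1 + x 2 * w2 * g2 := by
    intro a b c habc
    have q := (hf _ (nat_point_mem w0 w1 w2 d a b c habc)).trans hu
    rw [hfe, hfe x] at q
    simp only [Matrix.cons_val] at q
    linarith
  have cases3 : (g1 ≤ g0 ∧ g2 ≤ g0) ∨ (g0 ≤ g1 ∧ g2 ≤ g1) ∨ (g0 ≤ g2 ∧ g1 ≤ g2) := by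
    rcases le_total g0 g1 with p | p
    · rcases le_total g1 g2 with q | q
      · exact Or.inr (Or.inr ⟨p.trans q, q⟩)
      · exact Or.inr (Or.inl ⟨p, q⟩)
    · rcases le_total g0 g2 with q | q
      · exact Or.inr (Or.inr ⟨q, p.trans q⟩)
      · exact Or.inl ⟨p, q⟩
  rcases cases3 with ⟨p, q⟩ | ⟨p, q⟩ | ⟨p, q⟩
  · obtain ⟨a, b, c, e, l⟩ := corner_estimate w0 w1 w2 d h1 h2 ⟨k0, hk0⟩ ⟨a02, b02, e02⟩
      ⟨a01, b01, e01⟩ g0 g1 g2 p q (x 0) (x 1) (x 2) hx (hxi 1) (hxi 2)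
    linarith [fin a b c e]
  · obtain ⟨a, b, c, e, l⟩ := corner_estimate w1 w0 w2 d h0 h2 ⟨k1, or_left_comm.1 hk1⟩ ⟨a12, b12, e12⟩
      ⟨b01, a01, by rw [e01]; ring⟩ g1 g0 g2 p q (x 1) (x 0) (x 2) (by linarith) (hxi 0) (hxi 2)
    linarith [fin b a c (by linarith)]
  · obtain ⟨a, b, c, e, l⟩ := corner_estimate w2 w0 w1 d h0 h1 ⟨k2, by rcases hk2 with e | e | e <;> simp [← e]⟩
      ⟨b12, a12, by rw [e12]; ring⟩
      ⟨b02, a02, by rw [e02]; ring⟩ g2 g0 g1 p q (x 2) (x 0) (x 1) (by linarith) (hxi 0) (hxi 1)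
    linarith [fin b c a (by linarith)]

lemma polytope_nonneg (w0 w1 w2 d : ℕ) (i : Fin 3) (x : Fin 3 → ℝ)
    (hx : x ∈ polytopeOf w0 w1 w2 d) : 0 ≤ x i := by
  have hc : Convex ℝ {y : Fin 3 → ℝ | 0 ≤ y i} :=
    convex_halfSpace_ge (LinearMap.proj (R := ℝ) (φ := fun _ : Fin 3 => ℝ) i).isLinear 0
  refine convexHull_min ?_ hc hx
  rintro _ ⟨v, hv, rfl⟩
  show (0 : ℝ) ≤ (v i : ℝ)
  exact_mod_cast hv.1 i

lemma affineSpan_plane (w0 w1 w2 d : ℕ) (x : Fin 3 → ℝ)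
    (hx : x ∈ affineSpan ℝ (polytopeOf w0 w1 w2 d)) :
    x 0 * w0 + x 1 * w1 + x 2 * w2 = d := by
  rw [polytopeOf, affineSpan_convexHull] at hx
  refine affineSpan_induction (p := fun y : Fin 3 → ℝ => y 0 * w0 + y 1 * w1 + y 2 * w2 = d)
    hx ?_ ?_
  · rintro _ ⟨v, hv, rfl⟩
    show (v 0 : ℝ) * w0 + (v 1 : ℝ) * w1 + (v 2 : ℝ) * w2 = d
    exact_mod_cast hv.2
  · intro c u v w hu hv hw
    simp only [vsub_eq_sub, vadd_eq_add, Pi.add_apply, Pi.smul_apply, Pi.sub_apply, smul_eq_mul]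
    linear_combination c * hu - c * hv + hw

lemma exists_pos_coord (w0 w1 w2 d : ℕ) (h : IsGoodQuadruple w0 w1 w2 d) (i : Fin 3) :
    ∃ A ∈ polytopeOf w0 w1 w2 d, 0 < A i := by
  obtain ⟨h0, h1, h2, -, -, -, -, -, -, -, ⟨k0, p0, hk0⟩, ⟨k1, p1, hk1⟩, ⟨k2, p2, hk2⟩, -⟩ := h
  have r0 : (0 : ℝ) < k0 := by exact_mod_cast p0
  have r1 : (0 : ℝ) < k1 := by exact_mod_cast p1
  have r2 : (0 : ℝ) < k2 := by exact_mod_cast p2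
  fin_cases i
  · rcases hk0 with e | e | e
    · exact ⟨_, nat_point_mem w0 w1 w2 d (k0 + 1) 0 0 (by rw [e]; ring), by simp; positivity⟩
    · exact ⟨_, nat_point_mem w0 w1 w2 d k0 1 0 (by rw [e]; ring), by simpa using p0⟩
    · exact ⟨_, nat_point_mem w0 w1 w2 d k0 0 1 (by rw [e]; ring), by simpa using p0⟩
  · rcases hk1 with e | e | e
    · exact ⟨_, nat_point_mem w0 w1 w2 d 1 k1 0 (by rw [e]; ring), by simpa using p1⟩
    · exact ⟨_, nat_point_mem w0 w1 w2 d 0 (k1 + 1) 0 (by rw [e]; ring), by simp; positivity⟩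
    · exact ⟨_, nat_point_mem w0 w1 w2 d 0 k1 1 (by rw [e]; ring), by simpa using p1⟩
  · rcases hk2 with e | e | e
    · exact ⟨_, nat_point_mem w0 w1 w2 d 1 0 k2 (by rw [e]; ring), by simpa using p2⟩
    · exact ⟨_, nat_point_mem w0 w1 w2 d 0 1 k2 (by rw [e]; ring), by simpa using p2⟩
    · exact ⟨_, nat_point_mem w0 w1 w2 d 0 0 (k2 + 1) (by rw [e]; ring), by simp; positivity⟩

lemma pos_of_mem_interior (w0 w1 w2 d : ℕ) (h : IsGoodQuadruple w0 w1 w2 d) (x : Fin 3 → ℝ)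
    (hx : x ∈ intrinsicInterior ℝ (polytopeOf w0 w1 w2 d)) (i : Fin 3) : 0 < x i := by
  obtain ⟨A, hA, hAi⟩ := exists_pos_coord w0 w1 w2 d h i
  obtain ⟨y, hy, rfl⟩ := mem_intrinsicInterior.1 hx
  by_contra hneg
  push Not at hneg
  let L : ℝ → affineSpan ℝ (polytopeOf w0 w1 w2 d) := fun t =>
    ⟨AffineMap.lineMap (y : Fin 3 → ℝ) A t,
      AffineMap.lineMap_mem t y.2 (subset_affineSpan ℝ _ hA)⟩
  have hL : Continuous L := by
    apply Continuous.subtype_mk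
    exact AffineMap.lineMap_continuous
  have hL0 : L 0 = y := by
    apply Subtype.ext
    simp [L]
  have hn : L ⁻¹' interior ((↑) ⁻¹' polytopeOf w0 w1 w2 d) ∈ nhds (0 : ℝ) := by
    apply (isOpen_interior.preimage hL).mem_nhds
    rw [Set.mem_preimage, hL0]
    exact hy
  obtain ⟨ε, hε, hb⟩ := Metric.mem_nhds_iff.1 hn
  have hm : (-(min ε 1) / 2) ∈ Metric.ball (0 : ℝ) ε := by
    have : 0 < min ε 1 := lt_min hε one_pos
    have h' : min ε 1 ≤ ε := min_le_left _ _
    rw [Metric.mem_ball, dist_zero_right, Real.norm_eq_abs, abs_lt]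
    constructor <;> linarith
  have hp : 0 < min ε 1 := lt_min hε one_pos
  have hmem := interior_subset (Set.mem_preimage.1 (hb hm))
  have hq := polytope_nonneg w0 w1 w2 d i _ (Set.mem_preimage.1 hmem)
  simp only [L, AffineMap.lineMap_apply, vsub_eq_sub, vadd_eq_add, Pi.add_apply, Pi.smul_apply,
    Pi.sub_apply, smul_eq_mul] at hq
  nlinarith

/-- For a `g`-good quadruple with associated polytope `P`, a lattice point of `P` lies in the
relative (intrinsic) interior of `P` if and only if all of its coordinates are at least `1`. -/
theorem mem_intrinsicInterior_iff (g w0 w1 w2 d : ℕ) (hg : 1 ≤ g)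
    (h : IsGGoodQuadruple g w0 w1 w2 d) (v : Fin 3 → ℤ)
    (hv : toR3 v ∈ polytopeOf w0 w1 w2 d) :
    toR3 v ∈ intrinsicInterior ℝ (polytopeOf w0 w1 w2 d) ↔ (1 ≤ v 0 ∧ 1 ≤ v 1 ∧ 1 ≤ v 2) := by
  constructor
  · intro hi
    have key : ∀ i, 1 ≤ v i := by
      intro i
      have : (0 : ℝ) < (v i : ℝ) := pos_of_mem_interior w0 w1 w2 d h.1 _ hi i
      have : 0 < v i := by exact_mod_cast this
      omega
    exact ⟨key 0, key 1, key 2⟩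
  · rintro ⟨a0, a1, a2⟩
    rw [mem_intrinsicInterior]
    refine ⟨⟨toR3 v, subset_affineSpan ℝ _ hv⟩, ?_, rfl⟩
    rw [mem_interior]
    refine ⟨{y | ∀ i, (d : ℝ) < (d + 1) * (y : Fin 3 → ℝ) i}, ?_, ?_, ?_⟩
    · intro y hy
      exact mem_polytope_of w0 w1 w2 d h.1 y (affineSpan_plane w0 w1 w2 d y y.2) hy
    · rw [Set.ofPred_forall]
      apply isOpen_iInter_of_finite
      intro i
      apply isOpen_lt continuous_const
      exact continuous_const.mul ((continuous_apply i).comp continuous_subtype_val)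
    · intro i
      have hd : (0 : ℝ) ≤ d := Nat.cast_nonneg d
      have hvi : 1 ≤ v i := by
        fin_cases i
        · exact a0
        · exact a1
        · exact a2
      have hr : (1 : ℝ) ≤ (v i : ℝ) := by exact_mod_cast hvi
      show (d : ℝ) < (d + 1) * (v i : ℝ)
      nlinarith
end

section
/- Let w₀, w₁, w₂, d be positive integers with w₀, w₁, w₂ pairwise coprime. Let v₁, v₂, v₃ ∈ ℤ³ be lattice points each satisfying w₀·x + w₁·y + w₂·z = d (where (x,y,z) denotes the coordinates of vᵢ). Then d divides the determinant of the 3×3 integer matrix whose rows are v₁, v₂, v₃. -/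
/-- If `w0, w1, w2` are pairwise coprime positive integers and `v1, v2, v3 ∈ ℤ³` all lie on the
plane `w0*x + w1*y + w2*z = d`, then `d` divides the determinant of the matrix with rows
`v1, v2, v3`. -/
theorem d_dvd_det (w0 w1 w2 d : ℕ) (hw0 : 0 < w0) (hw1 : 0 < w1) (hw2 : 0 < w2) (hd : 0 < d)
    (h01 : Nat.Coprime w0 w1) (h02 : Nat.Coprime w0 w2) (h12 : Nat.Coprime w1 w2)
    (v1 v2 v3 : Fin 3 → ℤ)
    (hv1 : (w0 : ℤ) * v1 0 + (w1 : ℤ) * v1 1 + (w2 : ℤ) * v1 2 = (d : ℤ))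
    (hv2 : (w0 : ℤ) * v2 0 + (w1 : ℤ) * v2 1 + (w2 : ℤ) * v2 2 = (d : ℤ))
    (hv3 : (w0 : ℤ) * v3 0 + (w1 : ℤ) * v3 1 + (w2 : ℤ) * v3 2 = (d : ℤ)) :
    (d : ℤ) ∣ (Matrix.of ![v1, v2, v3]).det := by
  obtain ⟨a, b, hab⟩ := Nat.isCoprime_iff_coprime.mpr h01
  rw [Matrix.det_fin_three]
  simp only [Matrix.of_apply, Matrix.cons_val]
  generalize v1 0 = x1 at *
  generalize v1 1 = y1 at *
  generalize v1 2 = z1 at *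
  generalize v2 0 = x2 at *
  generalize v2 1 = y2 at *
  generalize v2 2 = z2 at *
  generalize v3 0 = x3 at *
  generalize v3 1 = y3 at *
  generalize v3 2 = z3 at *
  refine ⟨a * ((y2*z3 - z2*y3) - (y1*z3 - z1*y3) + (y1*z2 - z1*y2))
    + b * (-(x2*z3 - z2*x3) + (x1*z3 - z1*x3) - (x1*z2 - z1*x2)), ?_⟩
  linear_combination
    (-(x1*(y2*z3 - z2*y3) - x2*(y1*z3 - z1*y3) + x3*(y1*z2 - z1*y2))) * hab
    + (a * (y2*z3 - z2*y3) - b * (x2*z3 - z2*x3)) * hv1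
    + (-a * (y1*z3 - z1*y3) + b * (x1*z3 - z1*x3)) * hv2
    + (a * (y1*z2 - z1*y2) - b * (x1*z2 - z1*x2)) * hv3
end

section
/- Let w₀, w₁, w₂, d be positive integers with w₀, w₁, w₂ pairwise coprime. Let v₁, v₂, v₃ ∈ ℤ³ be lattice points each satisfying w₀·x + w₁·y + w₂·z = d, and suppose v₁, v₂, v₃ are affinely independent (i.e., the triangle they span is nondegenerate). Then |det(v₁, v₂, v₃)| is a positive integer multiple of d; in particular |det(v₁, v₂, v₃)| ≥ d. -/
/-- If `w0, w1, w2` are pairwise coprime positive integers and `v1, v2, v3 ∈ ℤ³` are affinely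
independent points on the plane `w0*x + w1*y + w2*z = d`, then `|det(v1, v2, v3)|` is a positive
integer multiple of `d`; in particular `|det(v1, v2, v3)| ≥ d`. -/
theorem abs_det_multiple_of_d (w0 w1 w2 d : ℕ) (hw0 : 0 < w0) (hw1 : 0 < w1) (hw2 : 0 < w2)
    (hd : 0 < d)
    (h01 : Nat.Coprime w0 w1) (h02 : Nat.Coprime w0 w2) (h12 : Nat.Coprime w1 w2)
    (v1 v2 v3 : Fin 3 → ℤ)
    (hv1 : (w0 : ℤ) * v1 0 + (w1 : ℤ) * v1 1 + (w2 : ℤ) * v1 2 = (d : ℤ))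
    (hv2 : (w0 : ℤ) * v2 0 + (w1 : ℤ) * v2 1 + (w2 : ℤ) * v2 2 = (d : ℤ))
    (hv3 : (w0 : ℤ) * v3 0 + (w1 : ℤ) * v3 1 + (w2 : ℤ) * v3 2 = (d : ℤ))
    (haff : AffineIndependent ℝ ![toR3 v1, toR3 v2, toR3 v3]) :
    (∃ m : ℤ, 0 < m ∧ |(Matrix.of ![v1, v2, v3]).det| = m * (d : ℤ)) ∧
      (d : ℤ) ≤ |(Matrix.of ![v1, v2, v3]).det| := by
  have hdet : (Matrix.of ![v1, v2, v3]).det ≠ 0 := by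
    intro h0
    obtain ⟨c, hc, hcv⟩ := Matrix.exists_vecMul_eq_zero_iff.mpr h0
    have e : ∀ j, c 0 * v1 j + c 1 * v2 j + c 2 * v3 j = 0 := by
      intro j
      have := congrFun hcv j
      simpa [Matrix.vecMul, dotProduct, Fin.sum_univ_three] using this
    have hs : c 0 + c 1 + c 2 = 0 := by
      have h : (d : ℤ) * (c 0 + c 1 + c 2) = 0 := by
        linear_combination (w0 : ℤ) * e 0 + (w1 : ℤ) * e 1 + (w2 : ℤ) * e 2
          - c 0 * hv1 - c 1 * hv2 - c 2 * hv3
      rcases mul_eq_zero.mp h with h | h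
      · omega
      · exact h
    rw [affineIndependent_iff] at haff
    have key := haff Finset.univ (fun i => (c i : ℝ))
      (by rw [Fin.sum_univ_three]; exact_mod_cast hs)
      (by
        ext j
        have := e j
        simp [Fin.sum_univ_three, toR3]
        exact_mod_cast this)
    apply hc
    ext i
    have := key i (Finset.mem_univ i)
    exact_mod_cast this
  have hdvd : (d : ℤ) ∣ (Matrix.of ![v1, v2, v3]).det := by
    obtain ⟨a, b, hab⟩ := Nat.isCoprime_iff_coprime.mpr h01
    rw [Matrix.det_fin_three]
    simp only [Matrix.of_apply, Matrix.cons_val]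
    have h0 : (w0 : ℤ) * (v1 0 * v2 1 * v3 2 - v1 0 * v2 2 * v3 1 - v1 1 * v2 0 * v3 2
        + v1 1 * v2 2 * v3 0 + v1 2 * v2 0 * v3 1 - v1 2 * v2 1 * v3 0) =
        d * ((v2 1 * v3 2 - v2 2 * v3 1) - (v1 1 * v3 2 - v1 2 * v3 1)
          + (v1 1 * v2 2 - v1 2 * v2 1)) := by
      linear_combination (v2 1 * v3 2 - v2 2 * v3 1) * hv1 - (v1 1 * v3 2 - v1 2 * v3 1) * hv2
          + (v1 1 * v2 2 - v1 2 * v2 1) * hv3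
    have h1 : (w1 : ℤ) * (v1 0 * v2 1 * v3 2 - v1 0 * v2 2 * v3 1 - v1 1 * v2 0 * v3 2
        + v1 1 * v2 2 * v3 0 + v1 2 * v2 0 * v3 1 - v1 2 * v2 1 * v3 0) =
        d * (-(v2 0 * v3 2 - v2 2 * v3 0) + (v1 0 * v3 2 - v1 2 * v3 0)
          - (v1 0 * v2 2 - v1 2 * v2 0)) := by
      linear_combination -(v2 0 * v3 2 - v2 2 * v3 0) * hv1 + (v1 0 * v3 2 - v1 2 * v3 0) * hv2
          - (v1 0 * v2 2 - v1 2 * v2 0) * hv3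
    have hg := dvd_add (Dvd.dvd.mul_left (Dvd.intro _ h0.symm) a)
      (Dvd.dvd.mul_left (Dvd.intro _ h1.symm) b)
    rwa [← mul_assoc, ← mul_assoc, ← add_mul, hab, one_mul] at hg
  have hpos : 0 < |(Matrix.of ![v1, v2, v3]).det| := abs_pos.mpr hdet
  have hdvd' := (dvd_abs _ _).mpr hdvd
  refine ⟨?_, Int.le_of_dvd hpos hdvd'⟩
  obtain ⟨m, hm⟩ := hdvd'
  refine ⟨m, ?_, by rw [hm, mul_comm]⟩
  rw [hm] at hpos
  exact pos_of_mul_pos_right hpos (by positivity)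
end

section
/- Let g ≥ 1 be an integer and let Q = (w₀, w₁, w₂, d) be a g-good quadruple with associated polytope P. For each i ∈ {0,1,2}, let uᵢ ∈ ℤ³₍≥0₎ be a lattice point of P such that the sum of the two coordinates of uᵢ other than the i-th coordinate is at most 1, and assume u₀, u₁, u₂ are pairwise distinct; let Δ be the convex hull in ℝ³ of {u₀, u₁, u₂} (the distinguished triangle). If p₁, p₂, p₃ ∈ ℤ³ ∩ Δ are affinely independent and the convex hull of {p₁, p₂, p₃} contains no lattice point of ℤ³ other than p₁, p₂, p₃, then |det(p₁, p₂, p₃)| = d. -/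
/-- The plane `w·x = d` is convex, and contains the hull of any subset. -/
lemma hull_subset_plane (w0 w1 w2 d : ℝ) (S : Set (Fin 3 → ℝ))
    (hS : ∀ x ∈ S, x 0 * w0 + x 1 * w1 + x 2 * w2 = d) :
    ∀ x ∈ convexHull ℝ S, x 0 * w0 + x 1 * w1 + x 2 * w2 = d := by
  have hc : Convex ℝ {x : Fin 3 → ℝ | x 0 * w0 + x 1 * w1 + x 2 * w2 = d} := by
    intro x hx y hy s t hs ht hst
    simp only [Set.mem_ofPred_eq, Pi.add_apply, Pi.smul_apply, smul_eq_mul] at *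
    linear_combination s * hx + t * hy + d * hst
  intro x hx
  exact convexHull_min (s := S) (t := {x : Fin 3 → ℝ | x 0 * w0 + x 1 * w1 + x 2 * w2 = d})
    hS hc hx

/-- The cross product of two vectors orthogonal to `w` is an integer multiple of `w`. -/
lemma cross_parallel (w0 w1 w2 : ℤ) (h0 : w0 ≠ 0) (h01 : IsCoprime w0 w1)
    (a b : Fin 3 → ℤ)
    (ha : a 0 * w0 + a 1 * w1 + a 2 * w2 = 0) (hb : b 0 * w0 + b 1 * w1 + b 2 * w2 = 0) :
    ∃ m : ℤ, a 1 * b 2 - a 2 * b 1 = m * w0 ∧ a 2 * b 0 - a 0 * b 2 = m * w1 ∧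
      a 0 * b 1 - a 1 * b 0 = m * w2 := by
  have e1 : (a 1 * b 2 - a 2 * b 1) * w1 = w0 * (a 2 * b 0 - a 0 * b 2) := by
    linear_combination b 2 * ha - a 2 * hb
  have e2 : (a 1 * b 2 - a 2 * b 1) * w2 = w0 * (a 0 * b 1 - a 1 * b 0) := by
    linear_combination - b 1 * ha + a 1 * hb
  have hd : w0 ∣ a 1 * b 2 - a 2 * b 1 := h01.dvd_of_dvd_mul_right ⟨_, e1⟩
  obtain ⟨m, hm⟩ := hd
  rw [hm] at e1 e2
  refine ⟨m, by linarith, ?_, ?_⟩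
  · apply mul_left_cancel₀ h0; linarith
  · apply mul_left_cancel₀ h0; linarith

/-- Membership in a triangle from barycentric coordinates with common denominator. -/
lemma mem_triangle (p1 p2 p3 q : Fin 3 → ℤ) (M r s : ℤ) (hM : 0 < M) (hr : 0 ≤ r) (hs : 0 ≤ s)
    (hrs : r + s ≤ M) (hq : ∀ k, M * (q k - p1 k) = r * (p2 k - p1 k) + s * (p3 k - p1 k)) :
    toR3 q ∈ convexHull ℝ {toR3 p1, toR3 p2, toR3 p3} := by
  have hM' : (0 : ℝ) < M := by exact_mod_cast hM
  have hr' : (0 : ℝ) ≤ r := by exact_mod_cast hr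
  have hs' : (0 : ℝ) ≤ s := by exact_mod_cast hs
  have hrs' : (r : ℝ) + s ≤ M := by exact_mod_cast hrs
  have hc := convex_convexHull ℝ ({toR3 p1, toR3 p2, toR3 p3} : Set (Fin 3 → ℝ))
  have m1 : toR3 p1 ∈ convexHull ℝ ({toR3 p1, toR3 p2, toR3 p3} : Set (Fin 3 → ℝ)) :=
    subset_convexHull ℝ _ (by simp)
  have m2 : toR3 p2 ∈ convexHull ℝ ({toR3 p1, toR3 p2, toR3 p3} : Set (Fin 3 → ℝ)) :=
    subset_convexHull ℝ _ (by simp)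
  have m3 : toR3 p3 ∈ convexHull ℝ ({toR3 p1, toR3 p2, toR3 p3} : Set (Fin 3 → ℝ)) :=
    subset_convexHull ℝ _ (by simp)
  have key := hc.sum_mem (t := Finset.univ) (w := ![((M : ℝ) - r - s) / M, (r : ℝ) / M, (s : ℝ) / M])
    (z := ![toR3 p1, toR3 p2, toR3 p3])
    (by
      intro i _
      fin_cases i
      · exact div_nonneg (by linarith) hM'.le
      · exact div_nonneg hr' hM'.le
      · exact div_nonneg hs' hM'.le)
    (by simp [Fin.sum_univ_three]; field_simp; ring)
    (by intro i _; fin_cases i <;> assumption)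
  convert key using 1
  funext k
  have hk : (M : ℝ) * (q k - p1 k) = r * (p2 k - p1 k) + s * (p3 k - p1 k) := by
    exact_mod_cast hq k
  simp [Fin.sum_univ_three, toR3]
  field_simp
  linear_combination hk

lemma indep_of_cross (w0 m : ℤ) (hw : w0 ≠ 0) (hm : m ≠ 0) (a b : Fin 3 → ℤ)
    (hc : a 1 * b 2 - a 2 * b 1 = m * w0) (r s : ℤ) (h : ∀ k, r * a k + s * b k = 0) :
    r = 0 ∧ s = 0 := by
  have hne : m * w0 ≠ 0 := mul_ne_zero hm hw
  constructor
  · apply (mul_eq_zero.mp (?_ : r * (m * w0) = 0)).resolve_right hne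
    linear_combination - r * hc + b 2 * h 1 - b 1 * h 2
  · apply (mul_eq_zero.mp (?_ : s * (m * w0) = 0)).resolve_right hne
    linear_combination - s * hc - a 2 * h 1 + a 1 * h 2

/-- Affinely independent lattice points give a nonzero cross product. -/
lemma cross_ne_zero (p1 p2 p3 : Fin 3 → ℤ)
    (haff : AffineIndependent ℝ ![toR3 p1, toR3 p2, toR3 p3]) (r s : ℤ)
    (h : ∀ k, r * (p2 k - p1 k) + s * (p3 k - p1 k) = 0) : r = 0 ∧ s = 0 := by
  rw [affineIndependent_iff] at haff
  have := haff Finset.univ ![-(r : ℝ) - s, r, s] (by simp [Fin.sum_univ_three]; ring) (by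
    funext k
    have hk : (r : ℝ) * (p2 k - p1 k) + s * (p3 k - p1 k) = 0 := by exact_mod_cast h k
    simp [Fin.sum_univ_three, toR3]
    linear_combination hk)
  have h1 := this 1 (by simp)
  have h2 := this 2 (by simp)
  simp at h1 h2
  exact ⟨h1, h2⟩

/-- Let `Q = (w0, w1, w2, d)` be a `g`-good quadruple with associated polytope `P`, and let
`u 0, u 1, u 2` be pairwise distinct nonnegative lattice points of `P` such that for each `i`,
the sum of the two coordinates of `u i` other than the `i`-th is at most `1` (the vertices of
the distinguished triangle `Δ`). If `p1, p2, p3` are affinely independent lattice points of `Δ`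
whose convex hull contains no lattice points other than `p1, p2, p3`, then the determinant of the
matrix with rows `p1, p2, p3` has absolute value `d`. -/
theorem abs_det_eq_d_of_empty_triangle (g w0 w1 w2 d : ℕ) (hg : 1 ≤ g)
    (h : IsGGoodQuadruple g w0 w1 w2 d)
    (u : Fin 3 → Fin 3 → ℤ)
    (hu_nonneg : ∀ i j, 0 ≤ u i j)
    (hu_mem : ∀ i, toR3 (u i) ∈ polytopeOf w0 w1 w2 d)
    (hu0 : u 0 1 + u 0 2 ≤ 1) (hu1 : u 1 0 + u 1 2 ≤ 1) (hu2 : u 2 0 + u 2 1 ≤ 1)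
    (hu_ne : u 0 ≠ u 1 ∧ u 0 ≠ u 2 ∧ u 1 ≠ u 2)
    (p1 p2 p3 : Fin 3 → ℤ)
    (hp1 : toR3 p1 ∈ convexHull ℝ {toR3 (u 0), toR3 (u 1), toR3 (u 2)})
    (hp2 : toR3 p2 ∈ convexHull ℝ {toR3 (u 0), toR3 (u 1), toR3 (u 2)})
    (hp3 : toR3 p3 ∈ convexHull ℝ {toR3 (u 0), toR3 (u 1), toR3 (u 2)})
    (haff : AffineIndependent ℝ ![toR3 p1, toR3 p2, toR3 p3])
    (hempty : ∀ q : Fin 3 → ℤ, toR3 q ∈ convexHull ℝ {toR3 p1, toR3 p2, toR3 p3} →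
      q = p1 ∨ q = p2 ∨ q = p3) :
    |(Matrix.of ![p1, p2, p3]).det| = (d : ℤ) := by
  obtain ⟨⟨hw0, hw1, hw2, hd, c01, c02, c12, -⟩, -⟩ := h
  have z0 : (w0 : ℤ) ≠ 0 := by positivity
  have z1 : (w1 : ℤ) ≠ 0 := by positivity
  have z2 : (w2 : ℤ) ≠ 0 := by positivity
  have i01 : IsCoprime (w0 : ℤ) w1 := Nat.isCoprime_iff_coprime.mpr c01
  have hu : ∀ i, toR3 (u i) 0 * w0 + toR3 (u i) 1 * w1 + toR3 (u i) 2 * w2 = (d : ℝ) := by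
    intro i
    refine hull_subset_plane _ _ _ _ _ ?_ _ (hu_mem i)
    rintro _ ⟨v, ⟨-, hv⟩, rfl⟩
    simp only [toR3]
    exact_mod_cast hv
  have hpl : ∀ p : Fin 3 → ℤ, toR3 p ∈ convexHull ℝ {toR3 (u 0), toR3 (u 1), toR3 (u 2)} →
      p 0 * (w0 : ℤ) + p 1 * w1 + p 2 * w2 = d := by
    intro p hp
    have := hull_subset_plane w0 w1 w2 d _ (by
      rintro x (rfl | rfl | rfl)
      · exact hu 0
      · exact hu 1
      · exact hu 2) _ hp
    simp only [toR3] at this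
    exact_mod_cast this
  have e1 := hpl p1 hp1
  have e2 := hpl p2 hp2
  have e3 := hpl p3 hp3
  clear hpl hu hp1 hp2 hp3 hu_mem hu0 hu1 hu2 hu_ne hu_nonneg
  obtain ⟨a, ha⟩ : ∃ a : Fin 3 → ℤ, ∀ k, a k = p2 k - p1 k := ⟨_, fun _ => rfl⟩
  obtain ⟨b, hb⟩ : ∃ b : Fin 3 → ℤ, ∀ k, b k = p3 k - p1 k := ⟨_, fun _ => rfl⟩
  have wa : a 0 * (w0 : ℤ) + a 1 * w1 + a 2 * w2 = 0 := by
    rw [ha, ha, ha]; linear_combination e2 - e1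
  have wb : b 0 * (w0 : ℤ) + b 1 * w1 + b 2 * w2 = 0 := by
    rw [hb, hb, hb]; linear_combination e3 - e1
  obtain ⟨m, n0, n1, n2⟩ := cross_parallel w0 w1 w2 z0 i01 a b wa wb
  have haff' := cross_ne_zero p1 p2 p3 haff
  simp only [← ha, ← hb] at haff'
  have hm : m ≠ 0 := by
    rintro rfl
    have hk : ∀ j, a j = 0 := by
      intro j
      have := (haff' (b j) (-a j) (by
        intro k
        fin_cases j <;> fin_cases k <;> simp <;> linarith)).2
      linarith
    have := (haff' 1 0 (by intro k; simp [hk k])).1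
    exact one_ne_zero this
  have hdet : (Matrix.of ![p1, p2, p3]).det = m * d := by
    rw [Matrix.det_fin_three]
    simp only [ha, hb] at n0 n1 n2
    simp
    linear_combination p1 0 * n0 + p1 1 * n1 + p1 2 * n2 + m * e1
  -- reduced points vanish
  have key : ∀ (c : Fin 3 → ℤ) (r s : ℤ), 0 ≤ r → 0 ≤ s → r < |m| → s < |m| → r + s ≤ |m| →
      (∀ k, |m| * c k = r * a k + s * b k) → r = 0 ∧ s = 0 := by
    intro c r s hr hs hrm hsm hrs hc
    have hM : 0 < |m| := abs_pos.mpr hm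
    have hq := hempty (fun k => p1 k + c k) (mem_triangle p1 p2 p3 _ |m| r s hM hr hs hrs (by
      intro k
      rw [← ha, ← hb, ← hc]; ring))
    rcases hq with hq | hq | hq
    · exact haff' r s (fun k => by
        have := congrFun hq k
        rw [← hc, show c k = 0 by linarith]; ring)
    · have := (haff' (r - |m|) s (fun k => by
        have := congrFun hq k
        have h1 := hc k
        rw [show c k = a k by rw [ha]; linarith] at h1
        linarith)).1
      linarith
    · have := (haff' r (s - |m|) (fun k => by
        have := congrFun hq k
        have h1 := hc k
        rw [show c k = b k by rw [hb]; linarith] at h1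
        linarith)).2
      linarith
  -- `a, b` span the lattice orthogonal to `w`
  have span : ∀ c : Fin 3 → ℤ, c 0 * (w0 : ℤ) + c 1 * w1 + c 2 * w2 = 0 →
      ∃ x y : ℤ, ∀ k, c k = x * a k + y * b k := by
    intro c wc
    obtain ⟨s, s0, s1, s2⟩ := cross_parallel w0 w1 w2 z0 i01 c b wc wb
    obtain ⟨t, t0, t1, t2⟩ := cross_parallel w0 w1 w2 z0 i01 a c wa wc
    have hmc : ∀ k, m * c k = s * a k + t * b k := by
      intro k
      fin_cases k
      · apply mul_left_cancel₀ z1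
        simp only [Fin.zero_eta, Fin.isValue]
        linear_combination - c 0 * n1 + a 0 * s1 + b 0 * t1
      · apply mul_left_cancel₀ z0
        simp only [Fin.mk_one, Fin.isValue]
        linear_combination - c 1 * n0 + a 1 * s0 + b 1 * t0
      · apply mul_left_cancel₀ z0
        simp only [Fin.reduceFinMk, Fin.isValue]
        linear_combination - c 2 * n0 + a 2 * s0 + b 2 * t0
    obtain ⟨s', t', hM⟩ : ∃ s' t' : ℤ, ∀ k, |m| * c k = s' * a k + t' * b k := by
      rcases abs_choice m with h | h
      · exact ⟨s, t, fun k => by rw [h]; exact hmc k⟩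
      · exact ⟨-s, -t, fun k => by rw [h]; linear_combination - hmc k⟩
    have hMpos : 0 < |m| := abs_pos.mpr hm
    have r0 := Int.emod_nonneg s' hMpos.ne'
    have r1 := Int.emod_lt_of_pos s' hMpos
    have q0 := Int.emod_nonneg t' hMpos.ne'
    have q1 := Int.emod_lt_of_pos t' hMpos
    have es := Int.emod_add_mul_ediv s' |m|
    have et := Int.emod_add_mul_ediv t' |m|
    generalize s' % |m| = r at *
    generalize t' % |m| = q at *
    generalize s' / |m| = x at *
    generalize t' / |m| = y at *
    have hred : ∀ k, |m| * (c k - x * a k - y * b k) = r * a k + q * b k := by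
      intro k
      linear_combination hM k - a k * es - b k * et
    have hz : r = 0 ∧ q = 0 := by
      by_cases hle : r + q ≤ |m|
      · exact key (fun k => c k - x * a k - y * b k) r q r0 q0 r1 q1 hle hred
      · have := key (fun k => a k + b k - (c k - x * a k - y * b k)) (|m| - r) (|m| - q)
          (by linarith) (by linarith) (by linarith) (by linarith) (by linarith)
          (fun k => by linear_combination - hred k)
        exfalso
        linarith [this.1]
    refine ⟨x, y, fun k => ?_⟩
    have := hred k
    rw [hz.1, hz.2] at this
    have h2 : c k - x * a k - y * b k = 0 := by
      apply mul_left_cancel₀ hMpos.ne'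
      linarith
    linarith
  -- `m` divides both `w0` and `w1`
  obtain ⟨x1, y1, k1⟩ := span ![w1, -w0, 0] (by simp; ring)
  obtain ⟨x2, y2, k2⟩ := span ![w2, 0, -w0] (by simp; ring)
  obtain ⟨x3, y3, k3⟩ := span ![0, w2, -w1] (by simp; ring)
  have k10 := k1 0
  have k11 := k1 1
  have k12 := k1 2
  have k20 := k2 0
  have k21 := k2 1
  have k22 := k2 2
  have k30 := k3 0
  have k31 := k3 1
  have k32 := k3 2
  simp at k10 k11 k12 k20 k21 k22 k30 k31 k32
  have d0 : m ∣ w0 := by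
    refine ⟨x1 * y2 - x2 * y1, ?_⟩
    apply mul_left_cancel₀ z0
    have : (w0 : ℤ) * w0 = (x1 * y2 - x2 * y1) * (a 1 * b 2 - a 2 * b 1) := by
      have : (w0 : ℤ) * w0 = (x1 * a 1 + y1 * b 1) * (x2 * a 2 + y2 * b 2)
          - (x1 * a 2 + y1 * b 2) * (x2 * a 1 + y2 * b 1) := by
        rw [← k11, ← k12, ← k22, ← k21]; ring
      rw [this]; ring
    rw [this, n0]; ring
  have d1 : m ∣ w1 := by
    refine ⟨x1 * y3 - x3 * y1, ?_⟩
    apply mul_left_cancel₀ z0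
    have : (w0 : ℤ) * w1 = (x1 * y3 - x3 * y1) * (a 1 * b 2 - a 2 * b 1) := by
      have : (w0 : ℤ) * w1 = (x1 * a 1 + y1 * b 1) * (x3 * a 2 + y3 * b 2)
          - (x1 * a 2 + y1 * b 2) * (x3 * a 1 + y3 * b 1) := by
        rw [← k11, ← k12, ← k32, ← k31]; ring
      rw [this]; ring
    rw [this, n0]; ring
  have hunit : |m| = 1 := Int.isUnit_iff_abs_eq.mp (i01.isUnit_of_dvd' d0 d1)
  rw [hdet, abs_mul, hunit, one_mul]
  simp
end

section
/- Let T ⊂ ℝ² be a nondegenerate triangle whose three vertices lie in ℤ², containing m lattice points in its interior and n lattice points on its boundary (including the three vertices), where n ≥ 3. Then there exist 2m + n − 2 triangles T₁, …, T₍2m+n−2₎, each with its three vertices among the m + n lattice points of T, with pairwise disjoint interiors, whose union equals T, and such that each Tᵢ contains no lattice point of ℤ² other than its three vertices. -/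
/-- The coercion of an integer lattice point of `ℤ²` to `ℝ²`. -/
def toR2 (v : Fin 2 → ℤ) : Fin 2 → ℝ := fun i => (v i : ℝ)


def dt {R : Type*} [CommRing R] (A B C : Fin 2 → R) : R :=
  (B 0 - A 0) * (C 1 - A 1) - (B 1 - A 1) * (C 0 - A 0)

lemma dt_cast (A B C : Fin 2 → ℤ) : dt (toR2 A) (toR2 B) (toR2 C) = ((dt A B C : ℤ) : ℝ) := by
  simp [dt, toR2]

lemma dt_rot {R : Type*} [CommRing R] (A B C : Fin 2 → R) : dt B C A = dt A B C := by
  simp only [dt]; ring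

lemma dt_sum {R : Type*} [CommRing R] (A B C Q : Fin 2 → R) :
    dt Q B C + dt A Q C + dt A B Q = dt A B C := by
  simp only [dt]; ring

lemma dt_vec {R : Type*} [CommRing R] (A B C Q : Fin 2 → R) (i : Fin 2) :
    dt A B C * Q i = dt Q B C * A i + dt A Q C * B i + dt A B Q * C i := by
  fin_cases i <;> simp only [dt] <;> simp <;> ring

/-- vertex recognition -/
lemma eq_of_dt {A B C Q : Fin 2 → ℤ} (h : 0 < dt A B C) (h1 : dt Q B C = 0)
    (h2 : dt A Q C = 0) : Q = C := by
  have h3 := dt_sum A B C Q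
  funext i
  have := dt_vec A B C Q i
  rw [h1, h2] at this h3
  have h4 : dt A B Q = dt A B C := by linarith
  rw [h4] at this
  have : dt A B C * Q i = dt A B C * C i := by linarith
  exact mul_left_cancel₀ h.ne' this

def Hu (A B C : Fin 2 → ℤ) : Set (Fin 2 → ℝ) := convexHull ℝ {toR2 A, toR2 B, toR2 C}

lemma Hu_rot (A B C : Fin 2 → ℤ) : Hu B C A = Hu A B C := by
  unfold Hu; congr 1; ext x; simp; tauto

lemma dt_comb (a b c : ℝ) (h : a + b + c = 1) (X Y Z B C : Fin 2 → ℝ) :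
    dt (a • X + b • Y + c • Z) B C = a * dt X B C + b * dt Y B C + c * dt Z B C := by
  obtain rfl : a = 1 - b - c := by linarith
  simp [dt]; ring

lemma dt_self1 {R : Type*} [CommRing R] (A B : Fin 2 → R) : dt A A B = 0 := by
  simp only [dt]; ring
lemma dt_self2 {R : Type*} [CommRing R] (A B : Fin 2 → R) : dt A B B = 0 := by
  simp only [dt]; ring
lemma dt_self3 {R : Type*} [CommRing R] (A B : Fin 2 → R) : dt A B A = 0 := by
  simp only [dt]; ring

lemma convexHull_triple (A B C x : Fin 2 → ℝ) :
    x ∈ convexHull ℝ {A, B, C} ↔ ∃ a b c : ℝ, 0 ≤ a ∧ 0 ≤ b ∧ 0 ≤ c ∧ a + b + c = 1 ∧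
      x = a • A + b • B + c • C := by
  rw [convexHull_insert (by simp), convexHull_pair]
  simp only [mem_convexJoin, Set.mem_singleton_iff, exists_eq_left]
  constructor
  · rintro ⟨y, ⟨p, q, hp, hq, hpq, rfl⟩, r, s, hr, hs, hrs, rfl⟩
    refine ⟨r, s * p, s * q, hr, by positivity, by positivity, ?_, ?_⟩
    · rw [add_assoc, ← mul_add, hpq, mul_one, hrs]
    · ext i; simp; ring
  · rintro ⟨a, b, c, ha, hb, hc, h, rfl⟩
    by_cases h0 : b + c = 0
    · have hb0 : b = 0 := by linarith
      have hc0 : c = 0 := by linarith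
      refine ⟨B, left_mem_segment _ _ _, 1, 0, by simp, by simp, by simp, ?_⟩
      subst hb0 hc0
      have : a = 1 := by linarith
      subst this; simp
    · have h0' : 0 < b + c := lt_of_le_of_ne (by linarith) (Ne.symm h0)
      refine ⟨(b / (b + c)) • B + (c / (b + c)) • C,
        ⟨b / (b + c), c / (b + c), by positivity, by positivity, by field_simp, rfl⟩,
        a, b + c, ha, h0'.le, by linarith, ?_⟩
      ext i; simp; field_simp; ring

lemma mem_Hu {A B C : Fin 2 → ℤ} (h : 0 < dt A B C) (x : Fin 2 → ℝ) :
    x ∈ Hu A B C ↔ 0 ≤ dt x (toR2 B) (toR2 C) ∧ 0 ≤ dt (toR2 A) x (toR2 C) ∧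
      0 ≤ dt (toR2 A) (toR2 B) x := by
  have hD : 0 < dt (toR2 A) (toR2 B) (toR2 C) := by rw [dt_cast]; exact_mod_cast h
  unfold Hu
  rw [convexHull_triple]
  constructor
  · rintro ⟨a, b, c, ha, hb, hc, h, rfl⟩
    refine ⟨?_, ?_, ?_⟩
    · rw [dt_comb _ _ _ h, dt_self1, dt_self3]; nlinarith
    · rw [← dt_rot, dt_comb _ _ _ h, dt_self3, dt_self1, dt_rot]; nlinarith
    · rw [← dt_rot, ← dt_rot, dt_comb _ _ _ h, dt_self1, dt_self3, dt_rot, dt_rot]; nlinarith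
  · rintro ⟨h1, h2, h3⟩
    refine ⟨_, _, _, div_nonneg h1 hD.le, div_nonneg h2 hD.le, div_nonneg h3 hD.le, ?_, ?_⟩
    · rw [← add_div, ← add_div, dt_sum, div_self hD.ne']
    · ext i
      have := dt_vec (toR2 A) (toR2 B) (toR2 C) x i
      simp only [Pi.add_apply, Pi.smul_apply, smul_eq_mul]
      field_simp
      linarith

lemma mem_Hu_int {A B C : Fin 2 → ℤ} (h : 0 < dt A B C) (q : Fin 2 → ℤ) :
    toR2 q ∈ Hu A B C ↔ 0 ≤ dt q B C ∧ 0 ≤ dt A q C ∧ 0 ≤ dt A B q := by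
  rw [mem_Hu h, dt_cast, dt_cast, dt_cast]; norm_cast

lemma int_aux {s : Set (Fin 2 → ℝ)} {A B C x : Fin 2 → ℝ} (hD : 0 < dt A B C)
    (hs : ∀ y ∈ s, 0 ≤ dt y B C) (hx : x ∈ interior s) : 0 < dt x B C := by
  have hc : Continuous fun e : ℝ => (1 + e) • x + (-e) • A + (0 : ℝ) • A := by fun_prop
  have h0 : (fun e : ℝ => (1 + e) • x + (-e) • A + (0 : ℝ) • A) 0 ∈ interior s := by simpa using hx
  have h1 := hc.continuousAt.preimage_mem_nhds (isOpen_interior.mem_nhds h0)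
  obtain ⟨e, he, h2⟩ := Metric.mem_nhds_iff.1 h1
  have h3 : e / 2 ∈ Metric.ball (0 : ℝ) e := by
    simp [abs_of_pos he]; exact he
  have h4 := hs _ (interior_subset (h2 h3))
  rw [dt_comb _ _ _ (by ring)] at h4
  by_contra hn
  push Not at hn
  nlinarith

lemma mem_int {A B C : Fin 2 → ℤ} (h : 0 < dt A B C) (x : Fin 2 → ℝ) :
    x ∈ interior (Hu A B C) ↔ 0 < dt x (toR2 B) (toR2 C) ∧ 0 < dt (toR2 A) x (toR2 C) ∧
      0 < dt (toR2 A) (toR2 B) x := by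
  have hD : 0 < dt (toR2 A) (toR2 B) (toR2 C) := by rw [dt_cast]; exact_mod_cast h
  constructor
  · intro hx
    refine ⟨int_aux hD (fun y hy => ((mem_Hu h y).1 hy).1) hx, ?_, ?_⟩
    · rw [← dt_rot]
      exact int_aux (by rwa [dt_rot]) (fun y hy => by rw [dt_rot]; exact ((mem_Hu h y).1 hy).2.1) hx
    · rw [← dt_rot, ← dt_rot]
      exact int_aux (by rwa [dt_rot, dt_rot])
        (fun y hy => by rw [dt_rot, dt_rot]; exact ((mem_Hu h y).1 hy).2.2) hx
  · intro hx
    refine mem_interior.2 ⟨{y | 0 < dt y (toR2 B) (toR2 C) ∧ 0 < dt (toR2 A) y (toR2 C) ∧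
      0 < dt (toR2 A) (toR2 B) y}, fun y hy => (mem_Hu h y).2 ⟨hy.1.le, hy.2.1.le, hy.2.2.le⟩, ?_, hx⟩
    have c1 : Continuous fun y : Fin 2 → ℝ => dt y (toR2 B) (toR2 C) := by unfold dt; fun_prop
    have c2 : Continuous fun y : Fin 2 → ℝ => dt (toR2 A) y (toR2 C) := by unfold dt; fun_prop
    have c3 : Continuous fun y : Fin 2 → ℝ => dt (toR2 A) (toR2 B) y := by unfold dt; fun_prop
    exact (isOpen_lt continuous_const c1).inter
      ((isOpen_lt continuous_const c2).inter (isOpen_lt continuous_const c3))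

lemma mem_int_int {A B C : Fin 2 → ℤ} (h : 0 < dt A B C) (q : Fin 2 → ℤ) :
    toR2 q ∈ interior (Hu A B C) ↔ 0 < dt q B C ∧ 0 < dt A q C ∧ 0 < dt A B q := by
  rw [mem_int h, dt_cast, dt_cast, dt_cast]; norm_cast

lemma affInd_iff (A B C : Fin 2 → ℝ) : AffineIndependent ℝ ![A, B, C] ↔ dt A B C ≠ 0 := by
  rw [affineIndependent_iff_of_fintype]
  constructor
  · intro h h0
    have key : ∀ a b : ℝ, a • (B - A) + b • (C - A) = 0 → a = 0 ∧ b = 0 := by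
      intro a b hab
      have := h ![-a - b, a, b] (by simp [Fin.sum_univ_three]; ring) (by
        rw [Finset.weightedVSub_eq_linear_combination _ (by simp [Fin.sum_univ_three]; ring)]
        simp [Fin.sum_univ_three]
        rw [← hab]; module)
      exact ⟨by simpa using this 1, by simpa using this 2⟩
    simp only [dt] at h0
    have h1 := key (C 0 - A 0) (-(B 0 - A 0)) (by
      ext i; fin_cases i <;> simp <;> linarith)
    have h2 := key (C 1 - A 1) (-(B 1 - A 1)) (by
      ext i; fin_cases i <;> simp <;> linarith)
    have h3 := key 1 0 (by
      ext i; fin_cases i <;> simp <;> linarith [h1.1, h1.2, h2.1, h2.2])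
    exact one_ne_zero h3.1
  · intro h w hw hw2
    rw [Finset.weightedVSub_eq_linear_combination _ hw] at hw2
    simp [Fin.sum_univ_three] at hw hw2
    have e0 := congrFun hw2 0
    have e1 := congrFun hw2 1
    simp at e0 e1
    have hw0 : w 0 = - w 1 - w 2 := by linarith
    rw [hw0] at e0 e1
    have k1 : w 1 * dt A B C = 0 := by
      simp only [dt]; linear_combination (C 1 - A 1) * e0 - (C 0 - A 0) * e1
    have k2 : w 2 * dt A B C = 0 := by
      simp only [dt]; linear_combination -(B 1 - A 1) * e0 + (B 0 - A 0) * e1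
    have k1' := (mul_eq_zero.1 k1).resolve_right h
    have k2' := (mul_eq_zero.1 k2).resolve_right h
    intro i; fin_cases i
    · simp [hw0, k1', k2']
    · exact k1'
    · exact k2'

/-- weights -/
def wt (A B C Q : Fin 2 → ℤ) : ℕ :=
  if 0 < dt Q B C ∧ 0 < dt A Q C ∧ 0 < dt A B Q then 2
  else if 0 ≤ dt Q B C ∧ 0 ≤ dt A Q C ∧ 0 ≤ dt A B Q then 1 else 0

lemma wt_rot (A B C Q : Fin 2 → ℤ) : wt B C A Q = wt A B C Q := by
  have e1 := dt_rot A B Q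
  have e2 := dt_rot Q B C
  have e3 := dt_rot A Q C
  unfold wt
  rw [← e1, ← e2, ← e3]
  congr 1
  · simp only [eq_iff_iff]; tauto
  · congr 1; simp only [eq_iff_iff]; tauto

def ww (a b c : ℤ) : ℕ :=
  if 0 < a ∧ 0 < b ∧ 0 < c then 2 else if 0 ≤ a ∧ 0 ≤ b ∧ 0 ≤ c then 1 else 0

lemma wt_eq (A B C Q : Fin 2 → ℤ) : wt A B C Q = ww (dt Q B C) (dt A Q C) (dt A B Q) := rfl

def ind (p : Prop) [Decidable p] : ℕ := if p then 1 else 0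

lemma ww_zero {a b c : ℤ} (h : a < 0 ∨ b < 0 ∨ c < 0) : ww a b c = 0 := by
  unfold ww; rw [if_neg (by omega), if_neg (by omega)]
lemma ww_two {a b c : ℤ} (h : 0 < a) (h' : 0 < b) (h'' : 0 < c) : ww a b c = 2 := by
  unfold ww; rw [if_pos (by omega)]
lemma ww_one {a b c : ℤ} (h : 0 ≤ a) (h' : 0 ≤ b) (h'' : 0 ≤ c) (h0 : a = 0 ∨ b = 0 ∨ c = 0) :
    ww a b c = 1 := by
  unfold ww; rw [if_neg (by omega), if_pos (by omega)]
lemma ind_f {p : Prop} [Decidable p] (h : ¬ p) : ind p = 0 := if_neg h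
lemma ind_t {p : Prop} [Decidable p] (h : p) : ind p = 1 := if_pos h
lemma ww_rot (a b c : ℤ) : ww b c a = ww a b c := by
  unfold ww
  congr 1
  · simp only [eq_iff_iff]; tauto
  · congr 1; simp only [eq_iff_iff]; tauto

lemma ww_case1 {D pa pb pc qa qb qc dA dB dC : ℤ} (hD : 0 < D) (ha : 0 < pa) (hb : 0 < pb)
    (hc : 0 < pc) (hq : qa + qb + qc = D) (eA : D * dA = pc * qb - pb * qc)
    (eB : D * dB = pa * qc - pc * qa) (h1 : 0 < dA) (h2 : dB < 0) :
    ww qc (-dB) dA + ww qa (-dC) dB + ww qb (-dA) dC = ww qa qb qc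
      + ind (qb = 0 ∧ qc = 0) + ind (qc = 0 ∧ qa = 0) + ind (qa = 0 ∧ qb = 0) := by
  have k1 : 0 < D * dA := mul_pos hD h1
  have k2 : D * dB < 0 := mul_neg_of_pos_of_neg hD h2
  have f1 : 0 ≤ qc → 0 < qb := fun h => by
    have := mul_nonneg hb.le h
    exact pos_of_mul_pos_right (a := pc) (by linarith) hc.le
  have f2 : 0 ≤ qc → 0 < qa := fun h => by
    have := mul_nonneg ha.le h
    exact pos_of_mul_pos_right (a := pc) (by linarith) hc.le
  clear eA eB k1 k2
  rw [ww_zero (a := qa) (by omega), ww_zero (a := qb) (by omega),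
    ind_f (by omega), ind_f (by omega), ind_f (by omega)]
  rcases lt_trichotomy qc 0 with h | h | h
  · rw [ww_zero (by omega), ww_zero (by omega)]
  · have := f1 h.ge
    have := f2 h.ge
    rw [ww_one (by omega) (by omega) (by omega) (by omega),
      ww_one (by omega) (by omega) (by omega) (by omega)]
  · have := f1 h.le
    have := f2 h.le
    rw [ww_two (by omega) (by omega) (by omega), ww_two (by omega) (by omega) (by omega)]

lemma ww_case2 {D pa pb pc qa qb qc dA dB dC : ℤ} (hD : 0 < D) (ha : 0 < pa) (hb : 0 < pb)
    (hc : 0 < pc) (hq : qa + qb + qc = D) (eA : D * dA = pc * qb - pb * qc)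
    (eB : D * dB = pa * qc - pc * qa) (h1 : dA = 0) (h2 : dB < 0) (h3 : 0 < dC) :
    ww qc (-dB) dA + ww qa (-dC) dB + ww qb (-dA) dC = ww qa qb qc
      + ind (qb = 0 ∧ qc = 0) + ind (qc = 0 ∧ qa = 0) + ind (qa = 0 ∧ qb = 0) := by
  have k2 : D * dB < 0 := mul_neg_of_pos_of_neg hD h2
  have k1 : pc * qb = pb * qc := by rw [h1] at eA; linarith
  have f1 : 0 < qc → 0 < qb := fun h => by
    have := mul_pos hb h
    exact pos_of_mul_pos_right (a := pc) (by linarith) hc.le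
  have f1' : 0 < qb → 0 < qc := fun h => by
    have := mul_pos hc h
    exact pos_of_mul_pos_right (a := pb) (by linarith) hb.le
  have f3 : qc = 0 → qb = 0 := fun h => by
    rw [h] at k1; simpa [hc.ne'] using k1
  have f3' : qb = 0 → qc = 0 := fun h => by
    rw [h] at k1; simpa [hb.ne', eq_comm] using k1
  have f2 : 0 ≤ qc → 0 < qa := fun h => by
    have := mul_nonneg ha.le h
    exact pos_of_mul_pos_right (a := pc) (by linarith) hc.le
  clear eA eB k1 k2
  rw [ww_zero (a := qa) (by omega)]
  rcases lt_trichotomy qc 0 with h | h | h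
  · rw [ww_zero (by omega), ww_zero (by omega), ww_zero (by omega),
      ind_f (by omega), ind_f (by omega), ind_f (by omega)]
  · have := f3 h
    have := f2 h.ge
    rw [ww_one (by omega) (by omega) (by omega) (by omega),
      ww_one (by omega) (by omega) (by omega) (by omega),
      ww_one (by omega) (by omega) (by omega) (by omega),
      ind_t (by omega), ind_f (by omega), ind_f (by omega)]
  · have := f1 h
    have := f2 h.le
    rw [ww_one (by omega) (by omega) (by omega) (by omega),
      ww_one (by omega) (by omega) (by omega) (by omega),
      ww_two (by omega) (by omega) (by omega),
      ind_f (by omega), ind_f (by omega), ind_f (by omega)]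

lemma ww_int {D pa pb pc qa qb qc dA dB dC : ℤ} (hD : 0 < D) (ha : 0 < pa) (hb : 0 < pb)
    (hc : 0 < pc) (hp : pa + pb + pc = D) (hq : qa + qb + qc = D) (eA : D * dA = pc * qb - pb * qc)
    (eB : D * dB = pa * qc - pc * qa) (eC : D * dC = pb * qa - pa * qb)
    (es : pa * dA + pb * dB + pc * dC = 0) (hpq : dA = 0 → dB = 0 → dC = 0 → qa = pa ∧ qb = pb ∧ qc = pc) :
    ww qc (-dB) dA + ww qa (-dC) dB + ww qb (-dA) dC = ww qa qb qc + ind (dA = 0 ∧ dB = 0 ∧ dC = 0)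
      + ind (qb = 0 ∧ qc = 0) + ind (qc = 0 ∧ qa = 0) + ind (qa = 0 ∧ qb = 0) := by
  by_cases c1 : 0 < dA ∧ dB < 0
  · have := ww_case1 (dC := dC) hD ha hb hc hq eA eB c1.1 c1.2
    rw [ind_f (p := dA = 0 ∧ dB = 0 ∧ dC = 0) (by omega)]; omega
  by_cases c2 : 0 < dB ∧ dC < 0
  · have := ww_case1 (dC := dA) hD hb hc ha (by linarith) eB eC c2.1 c2.2
    rw [ind_f (p := dA = 0 ∧ dB = 0 ∧ dC = 0) (by omega)]
    have := ww_rot qa qb qc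
    have := ww_rot qb qc qa
    omega
  by_cases c3 : 0 < dC ∧ dA < 0
  · have := ww_case1 (dC := dB) hD hc ha hb (by linarith) eC eA c3.1 c3.2
    rw [ind_f (p := dA = 0 ∧ dB = 0 ∧ dC = 0) (by omega)]
    have := ww_rot qa qb qc
    have := ww_rot qb qc qa
    omega
  by_cases d1 : dA = 0 ∧ dB < 0 ∧ 0 < dC
  · have := ww_case2 (dC := dC) hD ha hb hc hq eA eB d1.1 d1.2.1 d1.2.2
    rw [ind_f (p := dA = 0 ∧ dB = 0 ∧ dC = 0) (by omega)]; omega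
  by_cases d2 : dB = 0 ∧ dC < 0 ∧ 0 < dA
  · have := ww_case2 hD hb hc ha (by linarith) eB eC d2.1 d2.2.1 d2.2.2
    rw [ind_f (p := dA = 0 ∧ dB = 0 ∧ dC = 0) (by omega)]
    have := ww_rot qa qb qc
    have := ww_rot qb qc qa
    omega
  by_cases d3 : dC = 0 ∧ dA < 0 ∧ 0 < dB
  · have := ww_case2 hD hc ha hb (by linarith) eC eA d3.1 d3.2.1 d3.2.2
    rw [ind_f (p := dA = 0 ∧ dB = 0 ∧ dC = 0) (by omega)]
    have := ww_rot qa qb qc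
    have := ww_rot qb qc qa
    omega
  have uA : 0 ≤ dA → 0 ≤ pa * dA := fun h => mul_nonneg ha.le h
  have uB : 0 ≤ dB → 0 ≤ pb * dB := fun h => mul_nonneg hb.le h
  have uC : 0 ≤ dC → 0 ≤ pc * dC := fun h => mul_nonneg hc.le h
  have vA : dA ≤ 0 → pa * dA ≤ 0 := fun h => mul_nonpos_of_nonneg_of_nonpos ha.le h
  have vB : dB ≤ 0 → pb * dB ≤ 0 := fun h => mul_nonpos_of_nonneg_of_nonpos hb.le h
  have vC : dC ≤ 0 → pc * dC ≤ 0 := fun h => mul_nonpos_of_nonneg_of_nonpos hc.le h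
  have wA : 0 < dA → 0 < pa * dA := fun h => mul_pos ha h
  have wB : 0 < dB → 0 < pb * dB := fun h => mul_pos hb h
  have wC : 0 < dC → 0 < pc * dC := fun h => mul_pos hc h
  have xA : dA < 0 → pa * dA < 0 := fun h => mul_neg_of_pos_of_neg ha h
  have xB : dB < 0 → pb * dB < 0 := fun h => mul_neg_of_pos_of_neg hb h
  have xC : dC < 0 → pc * dC < 0 := fun h => mul_neg_of_pos_of_neg hc h
  have z : dA = 0 ∧ dB = 0 ∧ dC = 0 := by
    clear eA eB eC hpq
    generalize pa * dA = x at *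
    generalize pb * dB = y at *
    generalize pc * dC = w at *
    rcases lt_trichotomy dA 0 with h | h | h <;> rcases lt_trichotomy dB 0 with h' | h' | h' <;>
      rcases lt_trichotomy dC 0 with h'' | h'' | h'' <;> omega
  obtain ⟨z1, z2, z3⟩ := z
  obtain ⟨y1, y2, y3⟩ := hpq z1 z2 z3
  rw [ww_one (by omega) (by omega) (by omega) (by omega),
    ww_one (by omega) (by omega) (by omega) (by omega),
    ww_one (by omega) (by omega) (by omega) (by omega),
    ww_two (by omega) (by omega) (by omega), ind_t (by omega), ind_f (by omega),
    ind_f (by omega), ind_f (by omega)]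

lemma ww_edge {D pb pc qa qb qc dA dB dC : ℤ} (hD : 0 < D) (hb : 0 < pb)
    (hc : 0 < pc) (hq : qa + qb + qc = D) (eA : D * dA = pc * qb - pb * qc)
    (eB : D * dB = - pc * qa) (eC : D * dC = pb * qa)
    (hpq : dA = 0 → qa = 0 → qb = pb ∧ qc = pc) :
    ww qc (-dB) dA + ww qb (-dA) dC = ww qa qb qc + ind (dA = 0 ∧ qa = 0)
      + ind (qb = 0 ∧ qc = 0) := by
  have sB : (0 < -dB ↔ 0 < qa) ∧ (0 ≤ -dB ↔ 0 ≤ qa) := by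
    have e : D * (-dB) = pc * qa := by linarith
    rw [← mul_pos_iff_of_pos_left hD, ← mul_nonneg_iff_of_pos_left hD, e,
      mul_pos_iff_of_pos_left hc, mul_nonneg_iff_of_pos_left hc]; simp
  have sC : (0 < dC ↔ 0 < qa) ∧ (0 ≤ dC ↔ 0 ≤ qa) := by
    rw [← mul_pos_iff_of_pos_left hD, ← mul_nonneg_iff_of_pos_left hD, eC,
      mul_pos_iff_of_pos_left hb, mul_nonneg_iff_of_pos_left hb]; simp
  have sA : 0 < dA → 0 ≤ qc → 0 < qb := fun h h' => by
    have := mul_pos hD h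
    have := mul_nonneg hb.le h'
    exact pos_of_mul_pos_right (a := pc) (by linarith) hc.le
  have sA' : dA < 0 → 0 ≤ qb → 0 < qc := fun h h' => by
    have := mul_neg_of_pos_of_neg hD h
    have := mul_nonneg hc.le h'
    exact pos_of_mul_pos_right (a := pb) (by linarith) hb.le
  have sA0 : dA = 0 → ((0 < qb ↔ 0 < qc) ∧ (0 ≤ qb ↔ 0 ≤ qc)) := fun h => by
    have e : pc * qb = pb * qc := by rw [h] at eA; linarith
    rw [← mul_pos_iff_of_pos_left hc, ← mul_nonneg_iff_of_pos_left hc, e,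
      mul_pos_iff_of_pos_left hb, mul_nonneg_iff_of_pos_left hb]; simp
  clear eA eB eC
  rcases lt_trichotomy qa 0 with ha | ha | ha
  · rw [ww_zero (by omega), ww_zero (by omega), ww_zero (by omega), ind_f (by omega)]
    by_cases h0 : qb = 0 ∧ qc = 0
    · omega
    · rw [ind_f h0]
  all_goals
    rcases lt_trichotomy dA 0 with h | h | h
    · rw [ww_zero (a := qc) (by omega), ind_f (p := dA = 0 ∧ qa = 0) (by omega)]
      have := sA' h
      rw [ind_f (by omega)]
      unfold ww; split_ifs <;> omega
    · have := sA0 h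
      have := hpq h
      unfold ww ind; split_ifs <;> omega
    · rw [ww_zero (a := qb) (by omega), ind_f (p := dA = 0 ∧ qa = 0) (by omega)]
      have := sA h
      rw [ind_f (by omega)]
      unfold ww; split_ifs <;> omega

lemma dt_P (A B C P Q : Fin 2 → ℤ) :
    dt A B C * dt P A Q = dt A B P * dt A Q C - dt A P C * dt A B Q := by
  simp only [dt]; ring
lemma dt_P2 (A B C P Q : Fin 2 → ℤ) :
    dt A B C * dt P B Q = dt P B C * dt A B Q - dt A B P * dt Q B C := by
  simp only [dt]; ring
lemma dt_P3 (A B C P Q : Fin 2 → ℤ) :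
    dt A B C * dt P C Q = dt A P C * dt Q B C - dt P B C * dt A Q C := by
  simp only [dt]; ring
lemma dt_Ps {R : Type*} [CommRing R] (A B C P Q : Fin 2 → R) :
    dt P B C * dt P A Q + dt A P C * dt P B Q + dt A B P * dt P C Q = 0 := by
  simp only [dt]; ring
lemma dt_swap {R : Type*} [CommRing R] (A B C : Fin 2 → R) : dt A C B = - dt A B C := by
  simp only [dt]; ring
lemma dt_c {R : Type*} [CommRing R] (A B P Q : Fin 2 → R) :
    dt A B Q + dt P A Q - dt P B Q = dt A B P := by
  simp only [dt]; ring

lemma eq_A {A B C Q : Fin 2 → ℤ} (h : 0 < dt A B C) : Q = A ↔ dt A Q C = 0 ∧ dt A B Q = 0 := by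
  constructor
  · rintro rfl; exact ⟨dt_self1 _ _, dt_self3 _ _⟩
  · rintro ⟨h1, h2⟩
    exact eq_of_dt (A := B) (B := C) (by rwa [dt_rot]) (by rwa [dt_rot, ])  (by rwa [dt_rot])

lemma eq_B {A B C Q : Fin 2 → ℤ} (h : 0 < dt A B C) : Q = B ↔ dt A B Q = 0 ∧ dt Q B C = 0 := by
  have := eq_A (A := B) (B := C) (C := A) (Q := Q) (by rwa [dt_rot])
  rw [this, dt_rot A B Q, dt_rot Q B C]

lemma eq_C {A B C Q : Fin 2 → ℤ} (h : 0 < dt A B C) : Q = C ↔ dt Q B C = 0 ∧ dt A Q C = 0 := by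
  have := eq_B (A := B) (B := C) (C := A) (Q := Q) (by rwa [dt_rot])
  rw [this, dt_rot, dt_rot A]

lemma wt_int {A B C P : Fin 2 → ℤ} (h : 0 < dt A B C) (ha : 0 < dt P B C) (hb : 0 < dt A P C)
    (hc : 0 < dt A B P) (Q : Fin 2 → ℤ) :
    wt P A B Q + wt P B C Q + wt P C A Q =
      wt A B C Q + ind (Q = P) + ind (Q = A) + ind (Q = B) + ind (Q = C) := by
  have hP : Q = P ↔ dt P A Q = 0 ∧ dt P B Q = 0 ∧ dt P C Q = 0 := by
    constructor
    · rintro rfl; simp [dt_self3]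
    · rintro ⟨h1, h2, h3⟩
      rw [eq_A (A := P) (B := A) (C := B) (by rwa [← dt_rot])]
      exact ⟨by rw [dt_swap, h2, neg_zero], h1⟩
  have := ww_int h ha hb hc (dt_sum A B C P) (dt_sum A B C Q) (dt_P A B C P Q) (dt_P2 A B C P Q)
    (dt_P3 A B C P Q) (dt_Ps A B C P Q) (fun h1 h2 h3 => by rw [hP.2 ⟨h1, h2, h3⟩]; simp)
  simp only [wt_eq, dt_swap P B Q, dt_swap P C Q, dt_swap P A Q, hP, eq_A h, eq_B h, eq_C h]
  rw [← dt_rot Q A B, dt_rot A Q C]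
  convert this using 3

lemma wt_edge {A B C P : Fin 2 → ℤ} (h : 0 < dt A B C) (ha : dt P B C = 0) (hb : 0 < dt A P C)
    (hc : 0 < dt A B P) (Q : Fin 2 → ℤ) :
    wt P A B Q + wt P C A Q =
      wt A B C Q + ind (Q = P) + ind (Q = A) := by
  have hP : Q = P ↔ dt P A Q = 0 ∧ dt Q B C = 0 := by
    constructor
    · rintro rfl; simp [dt_self3, ha]
    · rintro ⟨h1, h2⟩
      rw [eq_A (A := P) (B := A) (C := B) (by rwa [← dt_rot])]
      have := dt_P2 A B C P Q
      rw [ha, h2] at this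
      have : dt P B Q = 0 := by simpa [h.ne'] using this
      exact ⟨by rw [dt_swap, this, neg_zero], h1⟩
  have e2 := dt_P2 A B C P Q
  have e3 := dt_P3 A B C P Q
  rw [ha] at e2 e3
  have := ww_edge h hb hc (dt_sum A B C Q) (dt_P A B C P Q) (by rw [e2]; ring)
    (by rw [e3]; ring) (fun h1 h2 => by rw [hP.2 ⟨h1, h2⟩]; simp)
  simp only [wt_eq, dt_swap P B Q, dt_swap P A Q, hP, eq_A h]
  rw [← dt_rot Q A B, dt_rot A Q C]
  convert this using 3

lemma toR2_pos {A B C : Fin 2 → ℤ} (h : 0 < dt A B C) : 0 < dt (toR2 A) (toR2 B) (toR2 C) := by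
  rw [dt_cast]; exact_mod_cast h

lemma cover_int {A B C P : Fin 2 → ℤ} (h : 0 < dt A B C) (ha : 0 < dt P B C) (hb : 0 < dt A P C)
    (hc : 0 < dt A B P) : Hu A B C ⊆ Hu P A B ∪ Hu P B C ∪ Hu P C A := by
  intro x hx
  have ha' := toR2_pos ha
  have hb' := toR2_pos hb
  have hc' := toR2_pos hc
  simp only [Set.mem_union]
  rw [mem_Hu h] at hx
  rw [mem_Hu (by rwa [← dt_rot]), mem_Hu ha, mem_Hu (by rwa [dt_rot])]
  have hs := dt_Ps (toR2 A) (toR2 B) (toR2 C) (toR2 P) x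
  rw [← dt_rot x (toR2 A), dt_rot (toR2 A) x (toR2 C)]
  rw [dt_swap _ (toR2 A) x, dt_swap _ (toR2 B) x, dt_swap _ (toR2 C) x]
  obtain ⟨h1, h2, h3⟩ := hx
  by_contra hcon
  push Not at hcon
  obtain ⟨⟨k1, k2⟩, k3⟩ := hcon
  replace k1 := k1 h3
  replace k2 := k2 h1
  replace k3 := k3 h2
  simp only [neg_nonneg] at k1 k2 k3
  generalize dt (toR2 P) (toR2 A) x = u at *
  generalize dt (toR2 P) (toR2 B) x = v at *
  generalize dt (toR2 P) (toR2 C) x = w at *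
  rcases lt_or_ge u 0 with g | g
  · have gw : w < 0 := by by_contra hh; push Not at hh; linarith [k3 g.le]
    have gv : v < 0 := by by_contra hh; push Not at hh; linarith [k2 gw.le]
    nlinarith [mul_neg_of_pos_of_neg ha' g, mul_neg_of_pos_of_neg hb' gv,
      mul_neg_of_pos_of_neg hc' gw]
  · have gv : 0 < v := by by_contra hh; push Not at hh; linarith [k1 hh]
    have gw : 0 < w := by by_contra hh; push Not at hh; linarith [k2 hh]
    nlinarith [mul_nonneg ha'.le g, mul_pos hb' gv, mul_pos hc' gw]

lemma cover_edge {A B C P : Fin 2 → ℤ} (h : 0 < dt A B C) (ha : dt P B C = 0) (hb : 0 < dt A P C)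
    (hc : 0 < dt A B P) : Hu A B C ⊆ Hu P A B ∪ Hu P C A := by
  intro x hx
  have ha' : dt (toR2 P) (toR2 B) (toR2 C) = 0 := by rw [dt_cast, ha]; simp
  have hb' := toR2_pos hb
  have hc' := toR2_pos hc
  have h' := toR2_pos h
  simp only [Set.mem_union]
  rw [mem_Hu h] at hx
  rw [mem_Hu (by rwa [← dt_rot]), mem_Hu (by rwa [dt_rot])]
  have e2 : dt (toR2 A) (toR2 B) (toR2 C) * dt (toR2 P) x (toR2 B)
      = dt (toR2 A) (toR2 B) (toR2 P) * dt x (toR2 B) (toR2 C)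
        - dt (toR2 P) (toR2 B) (toR2 C) * dt (toR2 A) (toR2 B) x := by
    simp only [dt]; ring
  have e3 : dt (toR2 A) (toR2 B) (toR2 C) * dt (toR2 P) (toR2 C) x
      = dt (toR2 A) (toR2 P) (toR2 C) * dt x (toR2 B) (toR2 C)
        - dt (toR2 P) (toR2 B) (toR2 C) * dt (toR2 A) x (toR2 C) := by
    simp only [dt]; ring
  rw [ha', zero_mul, sub_zero] at e2 e3
  obtain ⟨h1, h2, h3⟩ := hx
  have p2 : 0 ≤ dt (toR2 P) x (toR2 B) :=
    (mul_nonneg_iff_of_pos_left h').1 (e2 ▸ mul_nonneg hc'.le h1)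
  have p3 : 0 ≤ dt (toR2 P) (toR2 C) x :=
    (mul_nonneg_iff_of_pos_left h').1 (e3 ▸ mul_nonneg hb'.le h1)
  have q1 : 0 ≤ dt x (toR2 A) (toR2 B) := by rwa [← dt_rot]
  have q2 : 0 ≤ dt x (toR2 C) (toR2 A) := by rwa [dt_rot (toR2 A) x] 
  rcases le_total 0 (dt (toR2 P) (toR2 A) x) with g | g
  · exact Or.inl ⟨q1, p2, g⟩
  · exact Or.inr ⟨q2, by rw [dt_swap]; linarith, p3⟩

lemma disj_adj {A B C P : Fin 2 → ℤ} (h1 : 0 < dt P A B) (h2 : 0 < dt P B C) :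
    Disjoint (interior (Hu P A B)) (interior (Hu P B C)) := by
  rw [Set.disjoint_left]
  intro x hx hy
  rw [mem_int h1] at hx
  rw [mem_int h2] at hy
  have := dt_swap (toR2 P) (toR2 B) x
  linarith [hx.2.1, hy.2.2]

def Tri (t : Fin 3 → Fin 2 → ℤ) : Set (Fin 2 → ℝ) := Hu (t 0) (t 1) (t 2)

structure Good (X : Set (Fin 2 → ℝ)) (L : List (Fin 3 → Fin 2 → ℤ)) : Prop where
  vert : ∀ t ∈ L, ∀ j, toR2 (t j) ∈ X
  pos : ∀ t ∈ L, 0 < dt (t 0) (t 1) (t 2)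
  disj : L.Pairwise fun s t => Disjoint (interior (Tri s)) (interior (Tri t))
  cover : X ⊆ ⋃ t ∈ L, Tri t
  empty : ∀ t ∈ L, ∀ q, toR2 q ∈ Tri t → q = t 0 ∨ q = t 1 ∨ q = t 2

lemma Hu_sub {X : Set (Fin 2 → ℝ)} (hX : Convex ℝ X) {A B C : Fin 2 → ℤ} (hA : toR2 A ∈ X)
    (hB : toR2 B ∈ X) (hC : toR2 C ∈ X) : Hu A B C ⊆ X := by
  apply convexHull_min _ hX
  rintro x (rfl | rfl | rfl) <;> assumption

lemma Hu_convex (A B C : Fin 2 → ℤ) : Convex ℝ (Hu A B C) := convex_convexHull _ _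
lemma Hu_A (A B C : Fin 2 → ℤ) : toR2 A ∈ Hu A B C := subset_convexHull _ _ (by simp)
lemma Hu_B (A B C : Fin 2 → ℤ) : toR2 B ∈ Hu A B C := subset_convexHull _ _ (by simp)
lemma Hu_C (A B C : Fin 2 → ℤ) : toR2 C ∈ Hu A B C := subset_convexHull _ _ (by simp)

lemma Good.sub {A B C : Fin 2 → ℤ} {L} (h : Good (Hu A B C) L) {t} (ht : t ∈ L) :
    Tri t ⊆ Hu A B C :=
  Hu_sub (Hu_convex _ _ _) (h.vert t ht 0) (h.vert t ht 1) (h.vert t ht 2)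

lemma Good.append {X Y : Set (Fin 2 → ℝ)} {L M} (hL : Good X L) (hM : Good Y M)
    (hd : ∀ s ∈ L, ∀ t ∈ M, Disjoint (interior (Tri s)) (interior (Tri t))) :
    Good (X ∪ Y) (L ++ M) where
  vert t ht j := by
    rcases List.mem_append.1 ht with h | h
    · exact Or.inl (hL.vert t h j)
    · exact Or.inr (hM.vert t h j)
  pos t ht := by
    rcases List.mem_append.1 ht with h | h
    · exact hL.pos t h
    · exact hM.pos t h
  disj := List.pairwise_append.2 ⟨hL.disj, hM.disj, hd⟩
  cover := by
    rintro x (hx | hx)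
    · have := hL.cover hx
      simp only [Set.mem_iUnion, List.mem_append] at this ⊢
      obtain ⟨t, ht, h⟩ := this
      exact ⟨t, Or.inl ht, h⟩
    · have := hM.cover hx
      simp only [Set.mem_iUnion, List.mem_append] at this ⊢
      obtain ⟨t, ht, h⟩ := this
      exact ⟨t, Or.inr ht, h⟩
  empty t ht := by
    rcases List.mem_append.1 ht with h | h
    · exact hL.empty t h
    · exact hM.empty t h

lemma Good.disj_of {A B C A' B' C' : Fin 2 → ℤ} {L M} (hL : Good (Hu A B C) L)
    (hM : Good (Hu A' B' C') M) (h : Disjoint (interior (Hu A B C)) (interior (Hu A' B' C'))) :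
    ∀ s ∈ L, ∀ t ∈ M, Disjoint (interior (Tri s)) (interior (Tri t)) := fun _ hs _ ht =>
  h.mono (interior_mono (hL.sub hs)) (interior_mono (hM.sub ht))

def Res (A B C : Fin 2 → ℤ) : Prop :=
  ∃ L, Good (Hu A B C) L ∧ ∀ S : Finset (Fin 2 → ℤ), (∀ Q, wt A B C Q ≠ 0 → Q ∈ S) →
    L.length + 2 = ∑ Q ∈ S, wt A B C Q

lemma Res_rot {A B C : Fin 2 → ℤ} (h : Res A B C) : Res B C A := by
  unfold Res at *
  simp only [Hu_rot, wt_rot]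
  exact h

lemma wt_ne {A B C : Fin 2 → ℤ} (h : 0 < dt A B C) (Q : Fin 2 → ℤ) :
    wt A B C Q ≠ 0 ↔ toR2 Q ∈ Hu A B C := by
  rw [mem_Hu_int h]
  unfold wt
  split_ifs <;> simp_all <;> omega

lemma sum_ind (S : Finset (Fin 2 → ℤ)) {P : Fin 2 → ℤ} (h : P ∈ S) : ∑ Q ∈ S, ind (Q = P) = 1 := by
  simp [ind, h]

lemma res_edge {A B C P : Fin 2 → ℤ} (h : 0 < dt A B C) (ha : dt P B C = 0) (hb : 0 < dt A P C)
    (hc : 0 < dt A B P) (r1 : Res P A B) (r2 : Res P C A) : Res A B C := by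
  obtain ⟨L, hL, cL⟩ := r1
  obtain ⟨M, hM, cM⟩ := r2
  have hP : toR2 P ∈ Hu A B C := (mem_Hu_int h P).2 ⟨ha.ge, hb.le, hc.le⟩
  have s1 : Hu P A B ⊆ Hu A B C := Hu_sub (Hu_convex _ _ _) hP (Hu_A _ _ _) (Hu_B _ _ _)
  have s2 : Hu P C A ⊆ Hu A B C := Hu_sub (Hu_convex _ _ _) hP (Hu_C _ _ _) (Hu_A _ _ _)
  have d1 : 0 < dt P A B := by rwa [← dt_rot]
  have d2 : 0 < dt P C A := by rwa [dt_rot]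
  refine ⟨L ++ M, ?_, ?_⟩
  · rw [(cover_edge h ha hb hc).antisymm (Set.union_subset s1 s2)]
    exact hL.append hM (hL.disj_of hM (disj_adj d2 d1).symm)
  · intro S hS
    have k1 := cL S (fun Q hQ => hS Q ((wt_ne h Q).2 (s1 ((wt_ne d1 Q).1 hQ))))
    have k2 := cM S (fun Q hQ => hS Q ((wt_ne h Q).2 (s2 ((wt_ne d2 Q).1 hQ))))
    have mP := hS P ((wt_ne h P).2 hP)
    have mA := hS A ((wt_ne h A).2 (Hu_A _ _ _))
    have := Finset.sum_congr (rfl : S = S) (fun Q _ => wt_edge h ha hb hc Q)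
    simp only [Finset.sum_add_distrib, sum_ind S mP, sum_ind S mA] at this
    rw [List.length_append]
    omega

lemma res_int {A B C P : Fin 2 → ℤ} (h : 0 < dt A B C) (ha : 0 < dt P B C) (hb : 0 < dt A P C)
    (hc : 0 < dt A B P) (r1 : Res P A B) (r2 : Res P B C) (r3 : Res P C A) : Res A B C := by
  obtain ⟨L, hL, cL⟩ := r1
  obtain ⟨M, hM, cM⟩ := r2
  obtain ⟨N, hN, cN⟩ := r3
  have hP : toR2 P ∈ Hu A B C := (mem_Hu_int h P).2 ⟨ha.le, hb.le, hc.le⟩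
  have s1 : Hu P A B ⊆ Hu A B C := Hu_sub (Hu_convex _ _ _) hP (Hu_A _ _ _) (Hu_B _ _ _)
  have s2 : Hu P B C ⊆ Hu A B C := Hu_sub (Hu_convex _ _ _) hP (Hu_B _ _ _) (Hu_C _ _ _)
  have s3 : Hu P C A ⊆ Hu A B C := Hu_sub (Hu_convex _ _ _) hP (Hu_C _ _ _) (Hu_A _ _ _)
  have d1 : 0 < dt P A B := by rwa [← dt_rot]
  have d3 : 0 < dt P C A := by rwa [dt_rot]
  refine ⟨L ++ M ++ N, ?_, ?_⟩
  · rw [(cover_int h ha hb hc).antisymm (Set.union_subset (Set.union_subset s1 s2) s3)]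
    refine (hL.append hM (hL.disj_of hM (disj_adj d1 ha))).append hN ?_
    intro s hs t ht
    rcases List.mem_append.1 hs with g | g
    · exact hL.disj_of hN (disj_adj d3 d1).symm s g t ht
    · exact hM.disj_of hN (disj_adj ha d3) s g t ht
  · intro S hS
    have k1 := cL S (fun Q hQ => hS Q ((wt_ne h Q).2 (s1 ((wt_ne d1 Q).1 hQ))))
    have k2 := cM S (fun Q hQ => hS Q ((wt_ne h Q).2 (s2 ((wt_ne ha Q).1 hQ))))
    have k3 := cN S (fun Q hQ => hS Q ((wt_ne h Q).2 (s3 ((wt_ne d3 Q).1 hQ))))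
    have mP := hS P ((wt_ne h P).2 hP)
    have mA := hS A ((wt_ne h A).2 (Hu_A _ _ _))
    have mB := hS B ((wt_ne h B).2 (Hu_B _ _ _))
    have mC := hS C ((wt_ne h C).2 (Hu_C _ _ _))
    have := Finset.sum_congr (rfl : S = S) (fun Q _ => wt_int h ha hb hc Q)
    simp only [Finset.sum_add_distrib, sum_ind S mP, sum_ind S mA, sum_ind S mB, sum_ind S mC]
      at this
    rw [List.length_append, List.length_append]
    omega

lemma res_empty {A B C : Fin 2 → ℤ} (h : 0 < dt A B C)
    (he : ∀ q, toR2 q ∈ Hu A B C → q = A ∨ q = B ∨ q = C) : Res A B C := by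
  refine ⟨[![A, B, C]], ⟨?_, ?_, ?_, ?_, ?_⟩, ?_⟩
  · intro t ht j
    rw [List.mem_singleton] at ht
    subst ht
    fin_cases j
    · exact Hu_A _ _ _
    · exact Hu_B _ _ _
    · exact Hu_C _ _ _
  · intro t ht
    rw [List.mem_singleton] at ht
    subst ht
    exact h
  · simp
  · simp [Tri]
  · intro t ht q hq
    rw [List.mem_singleton] at ht
    subst ht
    exact he q hq
  · intro S hS
    have mA := hS A ((wt_ne h A).2 (Hu_A _ _ _))
    have mB := hS B ((wt_ne h B).2 (Hu_B _ _ _))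
    have mC := hS C ((wt_ne h C).2 (Hu_C _ _ _))
    have key : ∀ Q, wt A B C Q = ind (Q = A) + ind (Q = B) + ind (Q = C) := by
      intro Q
      have hs := dt_sum A B C Q
      by_cases hQ : toR2 Q ∈ Hu A B C
      · rw [mem_Hu_int h] at hQ
        have := he Q ((mem_Hu_int h Q).2 hQ)
        rw [eq_A h, eq_B h, eq_C h] at this
        simp only [eq_A h, eq_B h, eq_C h]
        rw [wt_eq, ww_one hQ.1 hQ.2.1 hQ.2.2 (by omega)]
        unfold ind
        split_ifs <;> omega
      · have h0 : wt A B C Q = 0 := by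
          by_contra hh; exact hQ ((wt_ne h Q).1 hh)
        rw [h0, ind_f, ind_f, ind_f]
        · rintro rfl; exact hQ (Hu_C _ _ _)
        · rintro rfl; exact hQ (Hu_B _ _ _)
        · rintro rfl; exact hQ (Hu_A _ _ _)
    simp only [key, Finset.sum_add_distrib, sum_ind S mA, sum_ind S mB, sum_ind S mC]
    rfl

lemma res_all (N : ℕ) : ∀ A B C : Fin 2 → ℤ, 0 < dt A B C → dt A B C ≤ N → Res A B C := by
  induction N with
  | zero => intro A B C h h'; simp at h'; omega
  | succ N ih =>
    intro A B C h hN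
    push_cast at hN
    by_cases he : ∀ q, toR2 q ∈ Hu A B C → q = A ∨ q = B ∨ q = C
    · exact res_empty h he
    push Not at he
    obtain ⟨P, hP, nA, nB, nC⟩ := he
    rw [mem_Hu_int h] at hP
    have edge : ∀ A B C : Fin 2 → ℤ, 0 < dt A B C → dt A B C ≤ N + 1 → dt P B C = 0 →
        0 < dt A P C → 0 < dt A B P → Res A B C := by
      intro A B C h hN ha hb hc
      have hs := dt_sum A B C P
      have e1 := dt_rot P A B
      have e2 := dt_rot A P C
      exact res_edge h ha hb hc (ih _ _ _ (by omega) (by omega))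
        (ih _ _ _ (by rw [dt_rot]; omega) (by rw [dt_rot]; omega))
    have hs := dt_sum A B C P
    have e1 := dt_rot P A B
    have e2 := dt_rot A P C
    have e3 := dt_rot P B C
    rw [Ne, eq_A h] at nA
    rw [Ne, eq_B h] at nB
    rw [Ne, eq_C h] at nC
    by_cases ha : dt P B C = 0
    · exact edge A B C h hN ha (by omega) (by omega)
    by_cases hb : dt A P C = 0
    · refine Res_rot (Res_rot (edge B C A ?_ ?_ ?_ ?_ ?_)) <;>
        (have := dt_rot A B C; have := dt_rot A B P; omega)
    by_cases hc : dt A B P = 0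
    · refine Res_rot (edge C A B ?_ ?_ ?_ ?_ ?_)
      · rw [← dt_rot]; omega
      · rw [← dt_rot]; omega
      · rw [← dt_rot]; omega
      · rw [← dt_rot]; omega
      · rw [← dt_rot]; omega
    · exact res_int (P := P) h (by omega) (by omega) (by omega) (ih _ _ _ (by omega) (by omega))
        (ih _ _ _ (by omega) (by omega))
        (ih _ _ _ (by rw [dt_rot]; omega) (by rw [dt_rot]; omega))

lemma frontier_Hu (A B C : Fin 2 → ℤ) : frontier (Hu A B C) = Hu A B C \ interior (Hu A B C) := by
  apply IsClosed.frontier_eq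
  apply IsCompact.isClosed
  exact Set.Finite.isCompact_convexHull (𝕜 := ℝ) (by simp)

lemma lattice_finite (A B C : Fin 2 → ℤ) : {q : Fin 2 → ℤ | toR2 q ∈ Hu A B C}.Finite := by
  have hb : Bornology.IsBounded (Hu A B C) :=
    (Set.Finite.isCompact_convexHull (𝕜 := ℝ) (by simp)).isBounded
  obtain ⟨r, hr⟩ := hb.subset_closedBall 0
  refine (Set.finite_Icc (fun _ : Fin 2 => -⌈r⌉) (fun _ => ⌈r⌉)).subset ?_
  intro q hq
  have h1 := hr hq
  rw [mem_closedBall_zero_iff] at h1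
  have h2 : ∀ i, |(q i : ℝ)| ≤ r := fun i => (norm_le_pi_norm (toR2 q) i).trans h1
  have h3 : ∀ i, -⌈r⌉ ≤ q i ∧ q i ≤ ⌈r⌉ := fun i => by
    have h4 := abs_le.1 (h2 i)
    have h5 := Int.le_ceil r
    constructor
    · have : (-⌈r⌉ : ℝ) ≤ q i := by linarith
      exact_mod_cast this
    · have : (q i : ℝ) ≤ ⌈r⌉ := by linarith
      exact_mod_cast this
  exact ⟨fun i => (h3 i).1, fun i => (h3 i).2⟩

lemma count {A B C : Fin 2 → ℤ} (h : 0 < dt A B C) :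
    ∃ S : Finset (Fin 2 → ℤ), (∀ Q, wt A B C Q ≠ 0 → Q ∈ S) ∧
      ∑ Q ∈ S, wt A B C Q = 2 * {q : Fin 2 → ℤ | toR2 q ∈ interior (Hu A B C)}.ncard +
        {q : Fin 2 → ℤ | toR2 q ∈ frontier (Hu A B C)}.ncard := by
  classical
  refine ⟨(lattice_finite A B C).toFinset, fun Q hQ => by simpa using (wt_ne h Q).1 hQ, ?_⟩
  have e1 : {q : Fin 2 → ℤ | toR2 q ∈ interior (Hu A B C)} =
      ((lattice_finite A B C).toFinset.filter fun q => toR2 q ∈ interior (Hu A B C) : Finset _) := by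
    ext q
    simp only [Set.mem_setOf_eq, Finset.coe_filter, Set.Finite.mem_toFinset]
    exact ⟨fun h => ⟨interior_subset h, h⟩, fun h => h.2⟩
  have e2 : {q : Fin 2 → ℤ | toR2 q ∈ frontier (Hu A B C)} =
      ((lattice_finite A B C).toFinset.filter fun q => ¬ toR2 q ∈ interior (Hu A B C) : Finset _) := by
    ext q
    simp [frontier_Hu]
  rw [e1, e2, Set.ncard_coe_finset, Set.ncard_coe_finset,
    ← Finset.sum_filter_add_sum_filter_not _ (fun q => toR2 q ∈ interior (Hu A B C))]
  congr 1
  · rw [Finset.sum_const_nat (m := 2)]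
    · ring
    intro q hq
    rw [Finset.mem_filter, mem_int_int h] at hq
    exact ww_two hq.2.1 hq.2.2.1 hq.2.2.2
  · rw [Finset.sum_const_nat (m := 1)]
    · ring
    intro q hq
    rw [Finset.mem_filter, mem_int_int h, Set.Finite.mem_toFinset, Set.mem_setOf_eq,
      mem_Hu_int h] at hq
    exact ww_one hq.1.1 hq.1.2.1 hq.1.2.2 (by omega)

lemma main_pos {A B C : Fin 2 → ℤ} (h : 0 < dt A B C) (k : ℕ)
    (hk : 2 * {q : Fin 2 → ℤ | toR2 q ∈ interior (Hu A B C)}.ncard +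
        {q : Fin 2 → ℤ | toR2 q ∈ frontier (Hu A B C)}.ncard - 2 = k) :
    ∃ t : Fin k → Fin 3 → Fin 2 → ℤ,
      (∀ i j, toR2 (t i j) ∈ Hu A B C) ∧
      (∀ i, AffineIndependent ℝ ![toR2 (t i 0), toR2 (t i 1), toR2 (t i 2)]) ∧
      (∀ i i', i ≠ i' → interior (Tri (t i)) ∩ interior (Tri (t i')) = ∅) ∧
      (⋃ i, Tri (t i)) = Hu A B C ∧
      (∀ i (q : Fin 2 → ℤ), toR2 q ∈ Tri (t i) → q = t i 0 ∨ q = t i 1 ∨ q = t i 2) := by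
  obtain ⟨L, hL, hc⟩ := res_all (dt A B C).toNat A B C h (by omega)
  obtain ⟨S, hS, hcount⟩ := count h
  have := hc S hS
  obtain rfl : L.length = k := by omega
  refine ⟨fun i => L.get i, fun i j => hL.vert _ (L.get_mem i) j, fun i => ?_, ?_, ?_,
    fun i => hL.empty _ (L.get_mem i)⟩
  · rw [affInd_iff]
    exact (toR2_pos (hL.pos _ (L.get_mem i))).ne'
  · intro i j hij
    rw [← Set.disjoint_iff_inter_eq_empty]
    have hp := List.pairwise_iff_get.1 hL.disj
    rcases lt_or_gt_of_ne hij with g | g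
    · exact hp i j g
    · exact (hp j i g).symm
  · apply Set.Subset.antisymm
    · exact Set.iUnion_subset fun i => hL.sub (L.get_mem i)
    · intro x hx
      have := hL.cover hx
      simp only [Set.mem_iUnion] at this ⊢
      obtain ⟨t, ht, hxt⟩ := this
      obtain ⟨i, rfl⟩ := List.get_of_mem ht
      exact ⟨i, hxt⟩


/-- A nondegenerate lattice triangle in `ℝ²` with `m` interior lattice points and `n ≥ 3`
boundary lattice points (including its vertices) can be subdivided into `2m + n - 2` lattice
triangles with pairwise disjoint interiors whose union is the original triangle, each containing
no lattice points other than its three vertices. -/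
theorem triangulation_into_empty_triangles (A B C : Fin 2 → ℤ)
    (hABC : AffineIndependent ℝ ![toR2 A, toR2 B, toR2 C])
    (m n : ℕ)
    (hm : {q : Fin 2 → ℤ | toR2 q ∈ interior (convexHull ℝ {toR2 A, toR2 B, toR2 C})}.ncard = m)
    (hn : {q : Fin 2 → ℤ | toR2 q ∈ frontier (convexHull ℝ {toR2 A, toR2 B, toR2 C})}.ncard = n)
    (hn3 : 3 ≤ n) :
    ∃ t : Fin (2 * m + n - 2) → Fin 3 → Fin 2 → ℤ,
      (∀ i j, toR2 (t i j) ∈ convexHull ℝ {toR2 A, toR2 B, toR2 C}) ∧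
      (∀ i, AffineIndependent ℝ ![toR2 (t i 0), toR2 (t i 1), toR2 (t i 2)]) ∧
      (∀ i i', i ≠ i' →
        interior (convexHull ℝ {toR2 (t i 0), toR2 (t i 1), toR2 (t i 2)}) ∩
          interior (convexHull ℝ {toR2 (t i' 0), toR2 (t i' 1), toR2 (t i' 2)}) = ∅) ∧
      (⋃ i, convexHull ℝ {toR2 (t i 0), toR2 (t i 1), toR2 (t i 2)})
        = convexHull ℝ {toR2 A, toR2 B, toR2 C} ∧
      (∀ i (q : Fin 2 → ℤ), toR2 q ∈ convexHull ℝ {toR2 (t i 0), toR2 (t i 1), toR2 (t i 2)} →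
        q = t i 0 ∨ q = t i 1 ∨ q = t i 2) := by

  subst hm hn
  have hne := (affInd_iff _ _ _).1 hABC
  rw [dt_cast] at hne
  have hne' : dt A B C ≠ 0 := by exact_mod_cast hne
  rcases lt_or_gt_of_ne hne' with h | h
  · have hsw : ({toR2 A, toR2 B, toR2 C} : Set (Fin 2 → ℝ)) = {toR2 A, toR2 C, toR2 B} := by
      rw [Set.pair_comm]
    rw [hsw]
    exact main_pos (A := A) (B := C) (C := B) (by rw [dt_swap]; omega) _ rfl
  · exact main_pos h _ rfl
end

section
/- Let w₀, w₁, w₂, d be positive integers with w₀, w₁, w₂ pairwise coprime. Let v₁, v₂, v₃ ∈ ℤ³₍≥0₎ be lattice points each satisfying w₀·x + w₁·y + w₂·z = d, and suppose |det(v₁, v₂, v₃)| = d. Then every lattice point v ∈ ℤ³₍≥0₎ satisfying w₀·x + w₁·y + w₂·z = d can be written as v = α₁v₁ + α₂v₂ + α₃v₃ with α₁, α₂, α₃ ∈ ℤ. -/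
/-- The explicit 3 by 3 determinant with rows `a, b, c`. -/
def rowDet (a b c : Fin 3 → ℤ) : ℤ :=
  a 0 * (b 1 * c 2 - b 2 * c 1) - b 0 * (a 1 * c 2 - a 2 * c 1) + c 0 * (a 1 * b 2 - a 2 * b 1)

/-- The determinant of three points on the plane `p x + q y + r z = d` is divisible by `d`. -/
lemma dvd_rowDet (p q r d : ℤ) (hpq : IsCoprime p q) (a b c : Fin 3 → ℤ)
    (ha : p * a 0 + q * a 1 + r * a 2 = d) (hb : p * b 0 + q * b 1 + r * b 2 = d)
    (hc : p * c 0 + q * c 1 + r * c 2 = d) : d ∣ rowDet a b c := by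
  obtain ⟨s, t, hst⟩ := hpq
  have h0 : p * rowDet a b c =
      d * ((b 1 * c 2 - b 2 * c 1) - (a 1 * c 2 - a 2 * c 1) + (a 1 * b 2 - a 2 * b 1)) := by
    unfold rowDet
    linear_combination (b 1 * c 2 - b 2 * c 1) * ha - (a 1 * c 2 - a 2 * c 1) * hb
      + (a 1 * b 2 - a 2 * b 1) * hc
  have h1 : q * rowDet a b c =
      d * (-(b 0 * c 2 - b 2 * c 0) + (a 0 * c 2 - a 2 * c 0) - (a 0 * b 2 - a 2 * b 0)) := by
    unfold rowDet
    linear_combination -(b 0 * c 2 - b 2 * c 0) * ha + (a 0 * c 2 - a 2 * c 0) * hb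
      - (a 0 * b 2 - a 2 * b 0) * hc
  have h : rowDet a b c = s * (p * rowDet a b c) + t * (q * rowDet a b c) := by
    linear_combination (-rowDet a b c) * hst
  rw [h]
  exact dvd_add (Dvd.dvd.mul_left ⟨_, h0⟩ _) (Dvd.dvd.mul_left ⟨_, h1⟩ _)

/-- If `v1, v2, v3` are nonnegative lattice points on the plane `w0*x + w1*y + w2*z = d`
(with `w0, w1, w2` pairwise coprime positive integers) whose determinant has absolute value `d`,
then every nonnegative lattice point on this plane is an integer combination of `v1, v2, v3`. -/
theorem int_combination_of_det_eq_d (w0 w1 w2 d : ℕ) (hw0 : 0 < w0) (hw1 : 0 < w1)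
    (hw2 : 0 < w2) (hd : 0 < d)
    (h01 : Nat.Coprime w0 w1) (h02 : Nat.Coprime w0 w2) (h12 : Nat.Coprime w1 w2)
    (v1 v2 v3 : Fin 3 → ℤ)
    (hnn1 : ∀ j, 0 ≤ v1 j) (hnn2 : ∀ j, 0 ≤ v2 j) (hnn3 : ∀ j, 0 ≤ v3 j)
    (hv1 : (w0 : ℤ) * v1 0 + (w1 : ℤ) * v1 1 + (w2 : ℤ) * v1 2 = (d : ℤ))
    (hv2 : (w0 : ℤ) * v2 0 + (w1 : ℤ) * v2 1 + (w2 : ℤ) * v2 2 = (d : ℤ))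
    (hv3 : (w0 : ℤ) * v3 0 + (w1 : ℤ) * v3 1 + (w2 : ℤ) * v3 2 = (d : ℤ))
    (hdet : |(Matrix.of ![v1, v2, v3]).det| = (d : ℤ))
    (v : Fin 3 → ℤ) (hnn : ∀ j, 0 ≤ v j)
    (hv : (w0 : ℤ) * v 0 + (w1 : ℤ) * v 1 + (w2 : ℤ) * v 2 = (d : ℤ)) :
    ∃ a1 a2 a3 : ℤ, ∀ j, v j = a1 * v1 j + a2 * v2 j + a3 * v3 j := by
  have hco : IsCoprime (w0 : ℤ) (w1 : ℤ) := Nat.isCoprime_iff_coprime.mpr h01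
  have hD : (Matrix.of ![v1, v2, v3]).det = rowDet v1 v2 v3 := by
    rw [Matrix.det_fin_three]
    simp [rowDet]
    ring
  rw [hD] at hdet
  obtain ⟨x, hx⟩ := dvd_rowDet _ _ _ _ hco v v2 v3 hv hv2 hv3
  obtain ⟨y, hy⟩ := dvd_rowDet _ _ _ _ hco v1 v v3 hv1 hv hv3
  obtain ⟨z, hz⟩ := dvd_rowDet _ _ _ _ hco v1 v2 v hv1 hv2 hv
  have hd0 : (d : ℤ) ≠ 0 := by positivity
  have cramer : ∀ j, rowDet v1 v2 v3 * v j =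
      rowDet v v2 v3 * v1 j + rowDet v1 v v3 * v2 j + rowDet v1 v2 v * v3 j := by
    intro j
    fin_cases j <;> simp [rowDet] <;> ring
  rw [hx, hy, hz] at cramer
  rcases abs_choice (rowDet v1 v2 v3) with h | h
  · refine ⟨x, y, z, fun j => mul_left_cancel₀ hd0 ?_⟩
    have hj := cramer j
    rw [h] at hdet
    rw [hdet] at hj
    linear_combination hj
  · refine ⟨-x, -y, -z, fun j => mul_left_cancel₀ hd0 ?_⟩
    have hj := cramer j
    rw [h] at hdet
    linear_combination -hj - v j * hdet
end

section
/- Let w₀, w₁, w₂, d be positive integers with w₀, w₁, w₂ pairwise coprime. Let v₁, v₂, v₃ ∈ ℤ³₍≥0₎ be lattice points each satisfying w₀·x + w₁·y + w₂·z = d, and suppose |det(v₁, v₂, v₃)| = d. Let k ≥ 1 be an integer and let (a,b,c) ∈ ℤ³₍≥0₎ satisfy a·w₀ + b·w₁ + c·w₂ = k·d. Then (a,b,c) = α₁v₁ + α₂v₂ + α₃v₃ for unique α₁, α₂, α₃ ∈ ℤ, and moreover α₁ + α₂ + α₃ = k. -/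
/-- The 3×3 determinant, expanded. -/
def dd (x y z : Fin 3 → ℤ) : ℤ :=
  x 0 * (y 1 * z 2 - y 2 * z 1) - x 1 * (y 0 * z 2 - y 2 * z 0) + x 2 * (y 0 * z 1 - y 1 * z 0)

/-- The determinant of three lattice points with weighted degree divisible by `d` is divisible
by `d`. -/
lemma dvd_dd (w0 w1 w2 d p q r : ℤ) (h : IsCoprime w0 w1) (x y z : Fin 3 → ℤ)
    (hx : w0 * x 0 + w1 * x 1 + w2 * x 2 = p * d)
    (hy : w0 * y 0 + w1 * y 1 + w2 * y 2 = q * d)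
    (hz : w0 * z 0 + w1 * z 1 + w2 * z 2 = r * d) : d ∣ dd x y z := by
  obtain ⟨s, t, hst⟩ := h
  have h0 : w0 * dd x y z = d * (p * (y 1 * z 2 - y 2 * z 1) - q * (x 1 * z 2 - x 2 * z 1)
      + r * (x 1 * y 2 - x 2 * y 1)) := by
    unfold dd
    linear_combination (y 1 * z 2 - y 2 * z 1) * hx - (x 1 * z 2 - x 2 * z 1) * hy
      + (x 1 * y 2 - x 2 * y 1) * hz
  have h1 : w1 * dd x y z = d * -(p * (y 0 * z 2 - y 2 * z 0) - q * (x 0 * z 2 - x 2 * z 0)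
      + r * (x 0 * y 2 - x 2 * y 0)) := by
    unfold dd
    linear_combination -(y 0 * z 2 - y 2 * z 0) * hx + (x 0 * z 2 - x 2 * z 0) * hy
      - (x 0 * y 2 - x 2 * y 0) * hz
  have e : dd x y z = s * (w0 * dd x y z) + t * (w1 * dd x y z) := by
    linear_combination -(dd x y z) * hst
  rw [e]
  exact dvd_add (Dvd.dvd.mul_left ⟨_, h0⟩ _) (Dvd.dvd.mul_left ⟨_, h1⟩ _)

/-- If `v1, v2, v3` are nonnegative lattice points on the plane `w0*x + w1*y + w2*z = d`
(with `w0, w1, w2` pairwise coprime positive integers) whose determinant has absolute value `d`,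
and `(a, b, c)` is a nonnegative lattice point with `a*w0 + b*w1 + c*w2 = k*d` for some `k ≥ 1`,
then `(a, b, c)` is an integer combination of `v1, v2, v3` with unique coefficients, and the
coefficients sum to `k`. -/
theorem unique_int_combination_sum_eq_k (w0 w1 w2 d : ℕ) (hw0 : 0 < w0) (hw1 : 0 < w1)
    (hw2 : 0 < w2) (hd : 0 < d)
    (h01 : Nat.Coprime w0 w1) (h02 : Nat.Coprime w0 w2) (h12 : Nat.Coprime w1 w2)
    (v1 v2 v3 : Fin 3 → ℤ)
    (hnn1 : ∀ j, 0 ≤ v1 j) (hnn2 : ∀ j, 0 ≤ v2 j) (hnn3 : ∀ j, 0 ≤ v3 j)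
    (hv1 : (w0 : ℤ) * v1 0 + (w1 : ℤ) * v1 1 + (w2 : ℤ) * v1 2 = (d : ℤ))
    (hv2 : (w0 : ℤ) * v2 0 + (w1 : ℤ) * v2 1 + (w2 : ℤ) * v2 2 = (d : ℤ))
    (hv3 : (w0 : ℤ) * v3 0 + (w1 : ℤ) * v3 1 + (w2 : ℤ) * v3 2 = (d : ℤ))
    (hdet : |(Matrix.of ![v1, v2, v3]).det| = (d : ℤ))
    (k : ℕ) (hk : 1 ≤ k)
    (v : Fin 3 → ℤ) (hnn : ∀ j, 0 ≤ v j)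
    (hv : (w0 : ℤ) * v 0 + (w1 : ℤ) * v 1 + (w2 : ℤ) * v 2 = (k : ℤ) * (d : ℤ)) :
    (∃! a : ℤ × ℤ × ℤ, ∀ j, v j = a.1 * v1 j + a.2.1 * v2 j + a.2.2 * v3 j) ∧
      (∀ a : ℤ × ℤ × ℤ, (∀ j, v j = a.1 * v1 j + a.2.1 * v2 j + a.2.2 * v3 j) →
        a.1 + a.2.1 + a.2.2 = (k : ℤ)) := by
  have hD : (Matrix.of ![v1, v2, v3]).det = dd v1 v2 v3 := by
    rw [Matrix.det_fin_three]
    simp [dd]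
    ring
  rw [hD] at hdet
  have hdz : (d : ℤ) ≠ 0 := by exact_mod_cast hd.ne'
  have hD0 : dd v1 v2 v3 ≠ 0 := by
    intro h
    rw [h] at hdet
    simp at hdet
    omega
  have hco : IsCoprime (w0 : ℤ) (w1 : ℤ) := Nat.isCoprime_iff_coprime.mpr h01
  have hdvd : dd v1 v2 v3 ∣ (d : ℤ) := by
    rw [← hdet]
    exact (dvd_abs _ _).mpr dvd_rfl
  rw [← one_mul (d : ℤ)] at hv1 hv2 hv3
  obtain ⟨a1, e1⟩ := hdvd.trans (dvd_dd w0 w1 w2 d _ _ _ hco v v2 v3 hv hv2 hv3)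
  obtain ⟨a2, e2⟩ := hdvd.trans (dvd_dd w0 w1 w2 d _ _ _ hco v1 v v3 hv1 hv hv3)
  obtain ⟨a3, e3⟩ := hdvd.trans (dvd_dd w0 w1 w2 d _ _ _ hco v1 v2 v hv1 hv2 hv)
  refine ⟨⟨(a1, a2, a3), ?_, ?_⟩, ?_⟩
  · intro j
    apply mul_left_cancel₀ hD0
    have key : dd v1 v2 v3 * v j = dd v v2 v3 * v1 j + dd v1 v v3 * v2 j + dd v1 v2 v * v3 j := by
      fin_cases j <;> simp [dd] <;> ring
    rw [key, e1, e2, e3]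
    ring
  · rintro ⟨b1, b2, b3⟩ hb
    have g0 := hb 0
    have g1 := hb 1
    have g2 := hb 2
    simp only at g0 g1 g2
    have f1 : b1 = a1 := by
      apply mul_left_cancel₀ hD0
      rw [← e1]
      simp only [dd, g0, g1, g2]
      ring
    have f2 : b2 = a2 := by
      apply mul_left_cancel₀ hD0
      rw [← e2]
      simp only [dd, g0, g1, g2]
      ring
    have f3 : b3 = a3 := by
      apply mul_left_cancel₀ hD0
      rw [← e3]
      simp only [dd, g0, g1, g2]
      ring
    rw [f1, f2, f3]
  · rintro ⟨b1, b2, b3⟩ hb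
    have g0 := hb 0
    have g1 := hb 1
    have g2 := hb 2
    simp only at g0 g1 g2 ⊢
    apply mul_right_cancel₀ hdz
    rw [← hv, g0, g1, g2]
    linear_combination -b1 * hv1 - b2 * hv2 - b3 * hv3
end
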